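/- Under Assumptions A1, A2 and A3, for every compact set A ⊂ ℝ^d, almost surely limsup_{n→∞} sup_{x∈A} (g_n(x) − f(x)) ≤ 0. -/

import Mathlib

open MeasureTheory Filter Metric
open scoped Topology ENNReal NNReal

noncomputable def kb {d : ℕ} (K : EuclideanSpace ℝ (Fin d) → ℝ) (b : ℝ)
    (x : EuclideanSpace ℝ (Fin d)) : ℝ :=
  (b ^ d)⁻¹ * K (b⁻¹ • x)

def natFilt {Ω : Type*} {d : ℕ} (X : ℕ → Ω → EuclideanSpace ℝ (Fin d)) (n : ℕ) :
    MeasurableSpace Ω :=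
  ⨆ i ∈ Finset.Icc 1 n, MeasurableSpace.comap (X i) inferInstance

/-!
Given the past, the increment of the estimate `g n` has mean `f ^ η * q ^ (1 - η)` smoothed by the
kernel. Discarding the weights at points where the policy has lost its safeguard makes the
increments bounded, and an exponential inequality for adaptively drawn points shows that the
resulting truncated estimate almost surely follows its predictable part; the rest of the argument
is deterministic.

If the mass of `g n` is negligible against the bandwidth volume `b n ^ d`, then `g n` tends to `0`
uniformly and there is nothing to prove. Otherwise there are arbitrarily late times at which the
mass is comparable with `b n ^ d` but at most `2`. From such a time on, no weight is truncated for a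
bounded amount of algorithmic time `∑ γ`. This is long enough for the estimate to climb, on a ball
where `f` is positive, to a fixed level under the growth law `m ↦ f ^ η * m ^ (1 - η)`, which keeps
the mass away from `0` and rules out truncation for good.

From then on the same law drives local bounds to `f`: a lower bound `m` of `g n` near a point
improves to any number below `f ^ η * m ^ (1 - η)`, hence to any number below `f`, and by Fatou's
lemma the mass tends to `1`. Policy and estimate are then comparable, so upper bounds improve in the
same way, starting from a barrier that blows up at the boundary of a small ball.
-/

/-! ### Running averages -/

/-- Step sizes of a stochastic-approximation recursion `A (n + 1) = (1 - γ (n + 1)) * A n + ⋯`.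
The field `ratio` is a division-free form of `γ n - γ (n + 1) ≤ γ n * γ (n + 1)`: step sizes decay
no faster than `1 / n`. -/
structure IsStepSeq (γ : ℕ → ℝ) : Prop where
  pos : ∀ n, 0 < γ n
  le_half : ∀ n, γ n ≤ 1 / 2
  anti : Antitone γ
  lim : Tendsto γ atTop (𝓝 0)
  ratio : ∀ n, γ n * (1 - γ (n + 1)) ≤ γ (n + 1)

/-- The weight that a recursion with step sizes `γ` still gives at time `n` to its initial value. -/
noncomputable def decay (γ : ℕ → ℝ) (n : ℕ) : ℝ := ∏ k ∈ Finset.range n, (1 - γ (k + 1))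

/-- The algorithmic time `γ 1 + ⋯ + γ n`. -/
noncomputable def cumStep (γ : ℕ → ℝ) (n : ℕ) : ℝ := ∑ k ∈ Finset.range n, γ (k + 1)

/-- The average of `u 0, …, u (n - 1)` produced by a recursion with step sizes `γ` started
at `0`; the observation `u n` enters with the step size `γ (n + 1)`. -/
noncomputable def runningAvg (γ u : ℕ → ℝ) : ℕ → ℝ
  | 0 => 0
  | n + 1 => (1 - γ (n + 1)) * runningAvg γ u n + γ (n + 1) * u n

theorem runningAvg_succ (γ u : ℕ → ℝ) (n : ℕ) :
    runningAvg γ u (n + 1) = (1 - γ (n + 1)) * runningAvg γ u n + γ (n + 1) * u n := rfl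

theorem decay_zero (γ : ℕ → ℝ) : decay γ 0 = 1 := by
  rw [decay, Finset.prod_range_zero]

theorem decay_succ (γ : ℕ → ℝ) (n : ℕ) : decay γ (n + 1) = (1 - γ (n + 1)) * decay γ n := by
  rw [decay, Finset.prod_range_succ, mul_comm, decay]

theorem cumStep_succ (γ : ℕ → ℝ) (n : ℕ) : cumStep γ (n + 1) = cumStep γ n + γ (n + 1) :=
  Finset.sum_range_succ _ _

theorem runningAvg_sub (γ u v : ℕ → ℝ) (n : ℕ) :
    runningAvg γ (fun k => u k - v k) n = runningAvg γ u n - runningAvg γ v n := by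
  induction n with
  | zero => simp only [runningAvg, sub_zero]
  | succ n ih => rw [runningAvg_succ, runningAvg_succ, runningAvg_succ, ih]; ring

theorem exp_neg_two_mul_le_one_sub {t : ℝ} (h0 : 0 ≤ t) (h1 : t ≤ 1 / 2) :
    Real.exp (-(2 * t)) ≤ 1 - t := by
  have hpos : 0 < 1 - t := by linarith
  have hinv : (1 - t)⁻¹ ≤ 1 + 2 * t := by
    rw [inv_le_iff_one_le_mul₀ hpos]
    nlinarith
  rw [← Real.le_log_iff_exp_le hpos]
  linarith [Real.one_sub_inv_le_log_of_pos hpos]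

namespace IsStepSeq
variable {γ : ℕ → ℝ}

theorem one_sub_pos (hγ : IsStepSeq γ) (n : ℕ) : 0 < 1 - γ n := by
  linarith [hγ.le_half n]

theorem decay_pos (hγ : IsStepSeq γ) (n : ℕ) : 0 < decay γ n :=
  Finset.prod_pos fun k _ => hγ.one_sub_pos (k + 1)

theorem decay_antitone (hγ : IsStepSeq γ) : Antitone (decay γ) := by
  refine antitone_nat_of_succ_le fun n => ?_
  rw [decay_succ]
  nlinarith [hγ.pos (n + 1), hγ.decay_pos n]

theorem decay_div_nonneg (hγ : IsStepSeq γ) (m n : ℕ) : 0 ≤ decay γ n / decay γ m :=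
  div_nonneg (hγ.decay_pos n).le (hγ.decay_pos m).le

theorem decay_div_le_one (hγ : IsStepSeq γ) {m n : ℕ} (hmn : m ≤ n) :
    decay γ n / decay γ m ≤ 1 :=
  (div_le_one (hγ.decay_pos m)).2 (hγ.decay_antitone hmn)

theorem step_mul_decay_le (hγ : IsStepSeq γ) {m n : ℕ} (hmn : m ≤ n) :
    γ m * decay γ n ≤ γ n * decay γ m := by
  induction n, hmn using Nat.le_induction with
  | base => exact le_rfl
  | succ n hmn ih =>
    rw [decay_succ]
    have hn := (hγ.one_sub_pos (n + 1)).le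
    have hm := (hγ.decay_pos m).le
    calc γ m * ((1 - γ (n + 1)) * decay γ n) = (1 - γ (n + 1)) * (γ m * decay γ n) := by ring
      _ ≤ (1 - γ (n + 1)) * (γ n * decay γ m) := by gcongr
      _ = (γ n * (1 - γ (n + 1))) * decay γ m := by ring
      _ ≤ γ (n + 1) * decay γ m := by gcongr; exact hγ.ratio n

theorem decay_le (hγ : IsStepSeq γ) (n : ℕ) : decay γ n ≤ (γ 0)⁻¹ * γ n := by
  rw [inv_mul_eq_div, le_div_iff₀ (hγ.pos 0), mul_comm]
  simpa only [decay_zero, mul_one] using hγ.step_mul_decay_le n.zero_le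

theorem tendsto_decay (hγ : IsStepSeq γ) : Tendsto (decay γ) atTop (𝓝 0) :=
  squeeze_zero (fun n => (hγ.decay_pos n).le) hγ.decay_le
    (by simpa only [mul_zero] using hγ.lim.const_mul (γ 0)⁻¹)

theorem tendsto_decay_div_mul (hγ : IsStepSeq γ) (m : ℕ) (C : ℝ) :
    Tendsto (fun n => decay γ n / decay γ m * C) atTop (𝓝 0) := by
  simpa only [zero_div, zero_mul] using (hγ.tendsto_decay.div_const (decay γ m)).mul_const C

theorem decay_le_mul_exp (hγ : IsStepSeq γ) {m n : ℕ} (hmn : m ≤ n) :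
    decay γ n ≤ decay γ m * Real.exp (-(cumStep γ n - cumStep γ m)) := by
  induction n, hmn using Nat.le_induction with
  | base => simp
  | succ n _ ih =>
    have hexp : 1 - γ (n + 1) ≤ Real.exp (-γ (n + 1)) := Real.one_sub_le_exp_neg _
    have hn := (hγ.decay_pos n).le
    calc decay γ (n + 1) = (1 - γ (n + 1)) * decay γ n := decay_succ γ n
      _ ≤ Real.exp (-γ (n + 1)) * (decay γ m * Real.exp (-(cumStep γ n - cumStep γ m))) := by
          gcongr
      _ = decay γ m * Real.exp (-(cumStep γ (n + 1) - cumStep γ m)) := by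
          rw [mul_left_comm, ← Real.exp_add, cumStep_succ]; ring_nf

theorem mul_exp_le_decay (hγ : IsStepSeq γ) {m n : ℕ} (hmn : m ≤ n) :
    decay γ m * Real.exp (-(2 * (cumStep γ n - cumStep γ m))) ≤ decay γ n := by
  induction n, hmn using Nat.le_induction with
  | base => simp
  | succ n _ ih =>
    have hexp := exp_neg_two_mul_le_one_sub (hγ.pos (n + 1)).le (hγ.le_half (n + 1))
    have hm := (hγ.decay_pos m).le
    calc decay γ m * Real.exp (-(2 * (cumStep γ (n + 1) - cumStep γ m)))
        = Real.exp (-(2 * γ (n + 1)))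
            * (decay γ m * Real.exp (-(2 * (cumStep γ n - cumStep γ m)))) := by
          rw [mul_left_comm, ← Real.exp_add, cumStep_succ]; ring_nf
      _ ≤ (1 - γ (n + 1)) * decay γ n :=
          mul_le_mul hexp ih (by positivity) (hγ.one_sub_pos (n + 1)).le
      _ = decay γ (n + 1) := (decay_succ γ n).symm

theorem tendsto_cumStep (hγ : IsStepSeq γ) : Tendsto (cumStep γ) atTop atTop := by
  refine tendsto_atTop.2 fun C => ?_
  filter_upwards [hγ.tendsto_decay.eventually_lt_const (Real.exp_pos (-(2 * C)))] with n hn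
  have hlow := hγ.mul_exp_le_decay n.zero_le
  rw [decay_zero, one_mul, show cumStep γ 0 = 0 from Finset.sum_range_zero _, sub_zero] at hlow
  linarith [Real.exp_lt_exp.1 (hlow.trans_lt hn)]

theorem le_decay_div_mul (hγ : IsStepSeq γ) {A : ℕ → ℝ} {m n : ℕ} (hmn : m ≤ n)
    (hA : ∀ k, m ≤ k → k < n → A (k + 1) ≤ (1 - γ (k + 1)) * A k) :
    A n ≤ decay γ n / decay γ m * A m := by
  induction n, hmn using Nat.le_induction with
  | base => rw [div_self (hγ.decay_pos m).ne', one_mul]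
  | succ n hmn ih =>
    have hn := (hγ.one_sub_pos (n + 1)).le
    calc A (n + 1) ≤ (1 - γ (n + 1)) * A n := hA n hmn n.lt_succ_self
      _ ≤ (1 - γ (n + 1)) * (decay γ n / decay γ m * A m) := by
          gcongr; exact ih fun k hk hkn => hA k hk (hkn.trans n.lt_succ_self)
      _ = decay γ (n + 1) / decay γ m * A m := by rw [decay_succ]; ring

theorem decay_div_mul_le (hγ : IsStepSeq γ) {A : ℕ → ℝ} {m n : ℕ} (hmn : m ≤ n)
    (hA : ∀ k, m ≤ k → k < n → (1 - γ (k + 1)) * A k ≤ A (k + 1)) :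
    decay γ n / decay γ m * A m ≤ A n := by
  have := hγ.le_decay_div_mul (A := fun k => -A k) hmn fun k hk hkn => by
    linarith [hA k hk hkn]
  linarith

theorem eq_decay_div_mul (hγ : IsStepSeq γ) {A : ℕ → ℝ} {m n : ℕ} (hmn : m ≤ n)
    (hA : ∀ k, m ≤ k → k < n → A (k + 1) = (1 - γ (k + 1)) * A k) :
    A n = decay γ n / decay γ m * A m :=
  le_antisymm (hγ.le_decay_div_mul hmn fun k hk hkn => (hA k hk hkn).le)
    (hγ.decay_div_mul_le hmn fun k hk hkn => (hA k hk hkn).ge)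

theorem runningAvg_le (hγ : IsStepSeq γ) {u : ℕ → ℝ} {m n : ℕ} {C : ℝ} (hmn : m ≤ n)
    (hu : ∀ k, m ≤ k → k < n → u k ≤ C) :
    runningAvg γ u n ≤ C + decay γ n / decay γ m * (runningAvg γ u m - C) := by
  have := hγ.le_decay_div_mul (A := fun k => runningAvg γ u k - C) hmn fun k hk hkn => by
    rw [runningAvg_succ]
    nlinarith [hγ.pos (k + 1), hu k hk hkn]
  linarith

theorem le_runningAvg (hγ : IsStepSeq γ) {u : ℕ → ℝ} {m n : ℕ} {C : ℝ} (hmn : m ≤ n)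
    (hu : ∀ k, m ≤ k → k < n → C ≤ u k) :
    C + decay γ n / decay γ m * (runningAvg γ u m - C) ≤ runningAvg γ u n := by
  have := hγ.decay_div_mul_le (A := fun k => runningAvg γ u k - C) hmn fun k hk hkn => by
    rw [runningAvg_succ]
    nlinarith [hγ.pos (k + 1), hu k hk hkn]
  linarith

theorem runningAvg_nonneg (hγ : IsStepSeq γ) {u : ℕ → ℝ} (n : ℕ) (hu : ∀ k, k < n → 0 ≤ u k) :
    0 ≤ runningAvg γ u n := by
  simpa [runningAvg] using hγ.le_runningAvg n.zero_le fun k _ hk => hu k hk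

theorem runningAvg_le_of_le (hγ : IsStepSeq γ) {u : ℕ → ℝ} (n : ℕ) {C : ℝ} (hC : 0 ≤ C)
    (hu : ∀ k, k < n → u k ≤ C) : runningAvg γ u n ≤ C := by
  have := hγ.runningAvg_le n.zero_le fun k _ hk => hu k hk
  simp only [runningAvg, zero_sub] at this
  nlinarith [hγ.decay_div_nonneg 0 n]

theorem runningAvg_eq_sum (hγ : IsStepSeq γ) (u : ℕ → ℝ) (n : ℕ) :
    runningAvg γ u n = decay γ n * ∑ k ∈ Finset.range n, γ (k + 1) / decay γ (k + 1) * u k := by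
  induction n with
  | zero => simp [runningAvg]
  | succ n ih =>
    have hne := (hγ.decay_pos (n + 1)).ne'
    have hlast : decay γ (n + 1) * (γ (n + 1) / decay γ (n + 1) * u n) = γ (n + 1) * u n := by
      field_simp
    rw [runningAvg_succ, ih, Finset.sum_range_succ, mul_add, hlast, decay_succ]
    ring

theorem abs_runningAvg_sub_le (hγ : IsStepSeq γ) {u v : ℕ → ℝ} (n : ℕ) {C : ℝ} (hC : 0 ≤ C)
    (huv : ∀ k, k < n → |u k - v k| ≤ C) : |runningAvg γ u n - runningAvg γ v n| ≤ C := by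
  have hvu : ∀ k, k < n → v k - u k ≤ C := fun k hk => by
    linarith [neg_abs_le (u k - v k), huv k hk]
  rw [abs_sub_le_iff, ← runningAvg_sub, ← runningAvg_sub]
  exact ⟨hγ.runningAvg_le_of_le n hC fun k hk => (le_abs_self _).trans (huv k hk),
    hγ.runningAvg_le_of_le n hC hvu⟩

end IsStepSeq

/-! ### Smoothing kernels -/

/-- The Euclidean space `ℝ^d`. -/
abbrev Euc (d : ℕ) := EuclideanSpace ℝ (Fin d)

/-- The regularity shared by all density estimates: continuous, integrable and bounded. -/
structure IsTame {d : ℕ} (u : Euc d → ℝ) : Prop where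
  continuous : Continuous u
  integrable : Integrable u
  bounded : ∃ C, ∀ x, |u x| ≤ C

namespace IsTame
variable {d : ℕ} {u v : Euc d → ℝ}

theorem exists_abs_le (hu : IsTame u) : ∃ C, 0 ≤ C ∧ ∀ x, |u x| ≤ C :=
  let ⟨C, hC⟩ := hu.bounded
  ⟨C, (abs_nonneg _).trans (hC 0), hC⟩

theorem zero : IsTame fun _ : Euc d => 0 :=
  ⟨continuous_const, integrable_zero _ _ _, 0, fun _ => abs_zero.le⟩

theorem const_mul (hu : IsTame u) (a : ℝ) : IsTame fun x => a * u x := by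
  obtain ⟨C, hC⟩ := hu.bounded
  refine ⟨hu.continuous.const_mul a, hu.integrable.const_mul a, |a| * C, fun x => ?_⟩
  rw [abs_mul]
  exact mul_le_mul_of_nonneg_left (hC x) (abs_nonneg a)

theorem add (hu : IsTame u) (hv : IsTame v) : IsTame fun x => u x + v x := by
  obtain ⟨C, hC⟩ := hu.bounded
  obtain ⟨C', hC'⟩ := hv.bounded
  exact ⟨hu.continuous.add hv.continuous, hu.integrable.add hv.integrable, C + C',
    fun x => (abs_add_le _ _).trans (add_le_add (hC x) (hC' x))⟩

end IsTame

/-- A Lipschitz probability density on `ℝ^d` that is positive at `0` and decays like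
`‖x‖ ^ (-(d + r))`; `C` and `L` are its tail and Lipschitz constants. -/
structure IsSmoothingKernel {d : ℕ} (K : Euc d → ℝ) (r C : ℝ) (L : ℝ≥0) : Prop where
  nonneg : ∀ x, 0 ≤ K x
  integral_eq_one : ∫ x, K x = 1
  lipschitz : LipschitzWith L K
  pos_zero : 0 < K 0
  exponent_pos : 0 < r
  tail : ∀ x, (1 + ‖x‖ ^ ((d : ℝ) + r)) * K x ≤ C

theorem integral_mul_kb_sub {d : ℕ} (K : Euc d → ℝ) {b : ℝ} (hb : 0 < b) (F : Euc d → ℝ)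
    (x : Euc d) : ∫ y, F y * kb K b (x - y) = ∫ v, F (x - b • v) * K v := by
  have hscale := Measure.integral_comp_inv_smul_of_nonneg (volume : Measure (Euc d))
    (fun v => F (x - b • v) * K v) hb.le
  simp only [finrank_euclideanSpace, Fintype.card_fin, smul_eq_mul, smul_inv_smul₀ hb.ne']
    at hscale
  calc ∫ y, F y * kb K b (x - y) = ∫ u, F (x - u) * kb K b u := by
        simpa only [sub_sub_cancel] using
          integral_sub_left_eq_self (fun u => F (x - u) * kb K b u) volume x
    _ = (b ^ d)⁻¹ * ∫ u, F (x - u) * K (b⁻¹ • u) := by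
        rw [← integral_const_mul]
        exact integral_congr_ae (Eventually.of_forall fun u => mul_left_comm _ _ _)
    _ = ∫ v, F (x - b • v) * K v := by
        rw [hscale, ← mul_assoc, inv_mul_cancel₀ (by positivity), one_mul]

theorem setIntegral_kb_sub {d : ℕ} (K : Euc d → ℝ) {b : ℝ} (hb : 0 < b) {S : Set (Euc d)}
    (hS : MeasurableSet S) (x : Euc d) :
    ∫ y in S, kb K b (x - y) = ∫ v in {v | x - b • v ∈ S}, K v := by
  have hpre : MeasurableSet {v : Euc d | x - b • v ∈ S} :=
    hS.preimage (by fun_prop : Measurable fun v : Euc d => x - b • v)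
  have hone : ∀ (T : Set (Euc d)) (G : Euc d → ℝ),
      T.indicator G = fun y => T.indicator (fun _ => (1 : ℝ)) y * G y := fun T G => by
    ext y
    by_cases hy : y ∈ T <;> simp [hy]
  rw [← integral_indicator hS, ← integral_indicator hpre, hone S, hone _ K,
    integral_mul_kb_sub K hb]
  rfl

namespace IsSmoothingKernel
variable {d : ℕ} {K : Euc d → ℝ} {r C : ℝ} {L : ℝ≥0}

theorem integrable (hK : IsSmoothingKernel K r C L) : Integrable K :=
  .of_integral_ne_zero (hK.integral_eq_one.trans_ne one_ne_zero)

theorem le (hK : IsSmoothingKernel K r C L) (x : Euc d) : K x ≤ C := by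
  have hpow : 0 ≤ ‖x‖ ^ ((d : ℝ) + r) := by positivity
  nlinarith [hK.nonneg x, hK.tail x]

theorem const_pos (hK : IsSmoothingKernel K r C L) : 0 < C :=
  hK.pos_zero.trans_le (hK.le 0)

theorem kb_nonneg (hK : IsSmoothingKernel K r C L) {b : ℝ} (hb : 0 < b) (x : Euc d) :
    0 ≤ kb K b x :=
  mul_nonneg (by positivity) (hK.nonneg _)

theorem kb_le (hK : IsSmoothingKernel K r C L) {b : ℝ} (hb : 0 < b) (x : Euc d) :
    kb K b x ≤ C * (b ^ d)⁻¹ := by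
  rw [kb, mul_comm]
  exact mul_le_mul_of_nonneg_right (hK.le _) (by positivity)

theorem continuous_kb (hK : IsSmoothingKernel K r C L) (b : ℝ) : Continuous (kb K b) :=
  continuous_const.mul (hK.lipschitz.continuous.comp (continuous_const_smul _))

theorem kb_le_of_le_norm (hK : IsSmoothingKernel K r C L) {b : ℝ} (hb : 0 < b) {x : Euc d}
    {δ : ℝ} (hδ : 0 < δ) (hx : δ ≤ ‖x‖) : kb K b x ≤ C * b ^ r * δ ^ (-((d : ℝ) + r)) := by
  have hr := hK.exponent_pos
  have hnorm : ‖b⁻¹ • x‖ = b⁻¹ * ‖x‖ := by rw [norm_smul, Real.norm_of_nonneg (by positivity)]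
  have hmono : (b⁻¹ * δ) ^ ((d : ℝ) + r) ≤ ‖b⁻¹ • x‖ ^ ((d : ℝ) + r) := by rw [hnorm]; gcongr
  have htail : (b⁻¹ * δ) ^ ((d : ℝ) + r) * K (b⁻¹ • x) ≤ C := by
    nlinarith [hK.nonneg (b⁻¹ • x), hK.tail (b⁻¹ • x)]
  rw [Real.mul_rpow (by positivity) hδ.le, Real.inv_rpow hb.le, Real.rpow_add hb,
    Real.rpow_natCast, mul_inv] at htail
  have : 0 < b ^ r := by positivity
  have hδr : 0 < δ ^ ((d : ℝ) + r) := by positivity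
  rw [Real.rpow_neg hδ.le, ← div_eq_mul_inv, le_div_iff₀ hδr]
  calc kb K b x * δ ^ ((d : ℝ) + r)
      = ((b ^ d)⁻¹ * (b ^ r)⁻¹ * δ ^ ((d : ℝ) + r) * K (b⁻¹ • x)) * b ^ r := by
        rw [kb]; field_simp
    _ ≤ C * b ^ r := by gcongr

theorem abs_kb_sub_kb_le (hK : IsSmoothingKernel K r C L) {b : ℝ} (hb : 0 < b) (x y : Euc d) :
    |kb K b x - kb K b y| ≤ L * (b ^ (d + 1))⁻¹ * ‖x - y‖ := by
  have hlip := hK.lipschitz.dist_le_mul (b⁻¹ • x) (b⁻¹ • y)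
  rw [Real.dist_eq, dist_eq_norm, ← smul_sub, norm_smul, Real.norm_of_nonneg (by positivity)]
    at hlip
  calc |kb K b x - kb K b y| = (b ^ d)⁻¹ * |K (b⁻¹ • x) - K (b⁻¹ • y)| := by
        rw [kb, kb, ← mul_sub, abs_mul, abs_of_nonneg (by positivity : 0 ≤ (b ^ d)⁻¹)]
    _ ≤ (b ^ d)⁻¹ * (L * (b⁻¹ * ‖x - y‖)) := by gcongr
    _ = L * (b ^ (d + 1))⁻¹ * ‖x - y‖ := by rw [pow_succ, mul_inv]; ring

theorem integrable_kb (hK : IsSmoothingKernel K r C L) {b : ℝ} (hb : 0 < b) :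
    Integrable (kb K b) :=
  (hK.integrable.comp_smul (inv_ne_zero hb.ne')).const_mul _

theorem integrable_kb_sub (hK : IsSmoothingKernel K r C L) {b : ℝ} (hb : 0 < b) (x : Euc d) :
    Integrable (fun y => kb K b (x - y)) :=
  (hK.integrable_kb hb).comp_sub_left x

theorem isTame_kb_sub (hK : IsSmoothingKernel K r C L) {b : ℝ} (hb : 0 < b) (y : Euc d) :
    IsTame fun x => kb K b (x - y) where
  continuous := (hK.continuous_kb b).comp (continuous_sub_right y)
  integrable := (hK.integrable_kb hb).comp_sub_right y
  bounded := ⟨C * (b ^ d)⁻¹, fun x => by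
    rw [abs_of_nonneg (hK.kb_nonneg hb _)]
    exact hK.kb_le hb _⟩

theorem integral_kb_sub_left (hK : IsSmoothingKernel K r C L) {b : ℝ} (hb : 0 < b) (x : Euc d) :
    ∫ y, kb K b (x - y) = 1 := by
  simpa only [one_mul, hK.integral_eq_one] using integral_mul_kb_sub K hb (fun _ => 1) x

theorem integral_kb_sub_right (hK : IsSmoothingKernel K r C L) {b : ℝ} (hb : 0 < b)
    (y : Euc d) : ∫ x, kb K b (x - y) = 1 := by
  rw [integral_sub_right_eq_self (fun u => kb K b u) y,
    ← integral_sub_left_eq_self (fun u => kb K b u) volume 0]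
  exact hK.integral_kb_sub_left hb 0

theorem eventually_le_setIntegral_ball_kb (hK : IsSmoothingKernel K r C L) {b : ℕ → ℝ}
    (hb : ∀ n, 0 < b n) (hb0 : Tendsto b atTop (𝓝 0)) {δ : ℝ} (hδ : 0 < δ) {ε : ℝ} (hε : 0 < ε) :
    ∀ᶠ n in atTop, ∀ x : Euc d, 1 - ε ≤ ∫ y in ball x δ, kb K (b n) (x - y) := by
  have hrescale : ∀ n, ∀ x : Euc d,
      ∫ y in ball x δ, kb K (b n) (x - y) = ∫ v in ball (0 : Euc d) (δ / b n), K v := by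
    intro n x
    have hset : {v : Euc d | x - b n • v ∈ ball x δ} = ball 0 (δ / b n) := by
      ext v
      simp [dist_eq_norm, norm_smul, abs_of_pos (hb n), lt_div_iff₀ (hb n), mul_comm]
    rw [setIntegral_kb_sub K (hb n) measurableSet_ball, hset]
  have hradius : Tendsto (fun n => δ / b n) atTop atTop := by
    have hinv : Tendsto (fun n => (b n)⁻¹) atTop atTop :=
      (tendsto_nhdsWithin_iff.2 ⟨hb0, Eventually.of_forall hb⟩).inv_tendsto_nhdsGT_zero
    exact hinv.const_mul_atTop hδ
  have hcover : AECover (volume : Measure (Euc d)) atTop fun n => ball 0 (δ / b n) :=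
    aecover_ball hradius
  have hlim := hcover.integral_tendsto_of_countably_generated hK.integrable
  rw [hK.integral_eq_one] at hlim
  filter_upwards [hlim.eventually_const_lt (show 1 - ε < 1 by linarith)] with n hn x
  exact (hrescale n x).ge.trans' hn.le

theorem sub_smul_mem_ball {x₀ x v : Euc d} {b r s : ℝ} (hb : 0 < b) (hb1 : b ≤ 1)
    (hr : 0 < r) (hs : 0 < s) (hsr : s ≤ r) (hx : x ∈ ball x₀ r)
    (hv : v ∈ ball ((s / (2 * r)) • (x - x₀)) (s / 2)) : x - b • v ∈ ball x₀ r := by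
  rw [mem_ball_iff_norm] at hx hv ⊢
  have hratio : s / (2 * r) ≤ 1 := by rw [div_le_one (by positivity)]; linarith
  have : 0 ≤ s / (2 * r) := by positivity
  have hcoef : 0 ≤ 1 - b * (s / (2 * r)) := by nlinarith
  calc ‖x - b • v - x₀‖
      = ‖(1 - b * (s / (2 * r))) • (x - x₀) - b • (v - (s / (2 * r)) • (x - x₀))‖ := by
        congr 1; module
    _ ≤ (1 - b * (s / (2 * r))) * ‖x - x₀‖ + b * ‖v - (s / (2 * r)) • (x - x₀)‖ := by
        refine (norm_sub_le _ _).trans_eq ?_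
        rw [norm_smul, norm_smul, Real.norm_of_nonneg hb.le, Real.norm_of_nonneg hcoef]
    _ < (1 - b * (s / (2 * r))) * r + b * (s / 2) :=
        add_lt_add_of_le_of_lt (mul_le_mul_of_nonneg_left hx.le hcoef)
          (mul_lt_mul_of_pos_left hv hb)
    _ = r := by field_simp; ring

theorem exists_le_setIntegral_ball_kb (hK : IsSmoothingKernel K r C L) {ρ : ℝ} (hρ : 0 < ρ) :
    ∃ c > 0, ∀ b, 0 < b → b ≤ 1 → ∀ x₀ x : Euc d, x ∈ ball x₀ ρ →
      c ≤ ∫ y in ball x₀ ρ, kb K b (x - y) := by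
  have hhalf : ∀ᶠ v in 𝓝 (0 : Euc d), K 0 / 2 < K v :=
    hK.lipschitz.continuous.continuousAt.eventually_const_lt (half_lt_self hK.pos_zero)
  obtain ⟨t, ht, hKt⟩ := Metric.eventually_nhds_iff_ball.1 hhalf
  obtain ⟨s, hs, hst, hsρ⟩ : ∃ s, 0 < s ∧ s ≤ t ∧ s ≤ ρ :=
    ⟨min t ρ, lt_min ht hρ, min_le_left _ _, min_le_right _ _⟩
  have hvol : 0 < (volume : Measure (Euc d)).real (ball 0 (s / 2)) :=
    ENNReal.toReal_pos (measure_ball_pos _ _ (by positivity)).ne' measure_ball_lt_top.ne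
  refine ⟨K 0 / 2 * (volume : Measure (Euc d)).real (ball 0 (s / 2)),
    mul_pos (half_pos hK.pos_zero) hvol, fun b hb hb1 x₀ x hx => ?_⟩
  obtain ⟨v₀, hv₀⟩ : ∃ v₀, v₀ = (s / (2 * ρ)) • (x - x₀) := ⟨_, rfl⟩
  have hv₀_norm : ‖v₀‖ ≤ s / 2 := by
    rw [hv₀, norm_smul, Real.norm_of_nonneg (by positivity)]
    calc s / (2 * ρ) * ‖x - x₀‖ ≤ s / (2 * ρ) * ρ := by
          gcongr; exact (mem_ball_iff_norm.1 hx).le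
      _ = s / 2 := by field_simp
  have hnear : ball v₀ (s / 2) ⊆ ball 0 t :=
    ball_subset_ball' (by rw [dist_zero_right]; linarith)
  have hmem : ball v₀ (s / 2) ⊆ {v | x - b • v ∈ ball x₀ ρ} := fun v hv => by
    rw [hv₀] at hv
    rw [Set.mem_ofPred_eq]
    exact sub_smul_mem_ball hb hb1 hρ hs hsρ hx hv
  have hmono : ∫ v in ball v₀ (s / 2), K v ≤ ∫ v in {v | x - b • v ∈ ball x₀ ρ}, K v :=
    setIntegral_mono_set hK.integrable.integrableOn (Eventually.of_forall hK.nonneg)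
      (Eventually.of_forall hmem)
  calc K 0 / 2 * (volume : Measure (Euc d)).real (ball 0 (s / 2))
      = K 0 / 2 * (volume : Measure (Euc d)).real (ball v₀ (s / 2)) := by
        simp only [Measure.real, Measure.addHaar_ball_center]
    _ ≤ ∫ v in ball v₀ (s / 2), K v :=
        setIntegral_ge_of_const_le_real measurableSet_ball measure_ball_lt_top.ne
          (fun v hv => (hKt v (hnear hv)).le) hK.integrable.integrableOn
    _ ≤ ∫ y in ball x₀ ρ, kb K b (x - y) :=
        hmono.trans_eq (setIntegral_kb_sub K hb measurableSet_ball x).symm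

end IsSmoothingKernel
/-! ### Sample paths -/

/-- The fixed data of the algorithm: exponent `η`, target `f`, safeguard density `q0`, kernel `K`,
step sizes `γ`, bandwidths `b`, mixture weights `lam`, together with the constants of the
assumptions: `c * f ≤ q0`, bounds `Bf` of `f` and `Bq` of `q0`, and tail exponent `rK`, tail
constant `CK` and Lipschitz constant `L` of the kernel. -/
structure MidasParams (d : ℕ) where
  η : ℝ
  f : Euc d → ℝ
  q0 : Euc d → ℝ
  K : Euc d → ℝ
  γ : ℕ → ℝ
  b : ℕ → ℝ
  lam : ℕ → ℝ
  c : ℝ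
  Bf : ℝ
  Bq : ℝ
  rK : ℝ
  CK : ℝ
  L : ℝ≥0

/-- One realisation of the algorithm: sampled points `X`, density estimates `g` and policies `q`. -/
structure MidasPath (d : ℕ) extends MidasParams d where
  X : ℕ → Euc d
  g : ℕ → Euc d → ℝ
  q : ℕ → Euc d → ℝ

/-- The tempered importance weight `(f / q) ^ η`, set to `0` where `q` falls below half of the
safeguard level `c * l * f`. On that event the raw weight has no useful bound. -/
noncomputable def truncWeight {d : ℕ} (η c l : ℝ) (f q : Euc d → ℝ) (y : Euc d) : ℝ :=
  if c * l * f y ≤ 2 * q y then (f y / q y) ^ η else 0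

namespace MidasPath
variable {d : ℕ} (D : MidasPath d)

/-- The truncated importance weight of a point `y` drawn from `q k`. -/
noncomputable def truncW (k : ℕ) (y : Euc d) : ℝ := truncWeight D.η D.c (D.lam k) D.f (D.q k) y

/-- The conditional expectation, given the past, of the `k`-th truncated kernel increment at `x`. -/
noncomputable def drift (k : ℕ) (x : Euc d) : ℝ :=
  ∫ y, D.truncW k y * D.q k y * kb D.K (D.b (k + 1)) (x - y)

/-- The density estimate built from the truncated weights, started at `0`. -/
noncomputable def truncEst (n : ℕ) (x : Euc d) : ℝ :=
  runningAvg D.γ (fun k => D.truncW k (D.X (k + 1)) * kb D.K (D.b (k + 1)) (x - D.X (k + 1))) n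

/-- The predictable part of `truncEst`. -/
noncomputable def driftAvg (n : ℕ) (x : Euc d) : ℝ := runningAvg D.γ (fun k => D.drift k x) n

/-- The total mass of `truncEst`. -/
noncomputable def truncMass (n : ℕ) : ℝ := runningAvg D.γ (fun k => D.truncW k (D.X (k + 1))) n

/-- The total mass of the density estimate `g n`. -/
noncomputable def mass (n : ℕ) : ℝ := ∫ x, D.g n x

/-- The tempered importance weight of the point `X (k + 1)`. -/
noncomputable def weight (k : ℕ) : ℝ := (D.f (D.X (k + 1)) / D.q k (D.X (k + 1))) ^ D.η

/-- The truncated estimate follows its predictable part on every ball, up to a relative error `ε`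
and an additive error that is negligible against `lam n ^ (1 - η)`; moreover its mass is
asymptotically at most `1`. -/
def NoiseControlled : Prop :=
  ∀ ε : ℝ, 0 < ε → ε ≤ 1 → ∀ R : ℝ, ∃ e : ℕ → ℝ,
    Tendsto (fun n => e n / D.lam n ^ (1 - D.η)) atTop (𝓝 0) ∧
    ∀ᶠ n in atTop, (∀ x, ‖x‖ ≤ R → D.truncEst n x ∈
      Set.Icc ((1 - ε) * D.driftAvg n x - e n) ((1 + ε) * D.driftAvg n x + e n)) ∧
      D.truncMass n ≤ 1 + ε + e n

end MidasPath

/-- The standing assumptions on the data of the algorithm, except for those on the step sizes. -/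
structure MidasParams.Valid {d : ℕ} (S : MidasParams d) : Prop where
  kernel : IsSmoothingKernel S.K S.rK S.CK S.L
  η_pos : 0 < S.η
  η_lt_one : S.η < 1
  f_nonneg : ∀ x, 0 ≤ S.f x
  f_le : ∀ x, S.f x ≤ S.Bf
  Bf_pos : 0 < S.Bf
  f_cont : Continuous S.f
  f_int : Integrable S.f
  f_integral : ∫ x, S.f x = 1
  q0_nonneg : ∀ x, 0 ≤ S.q0 x
  q0_le : ∀ x, S.q0 x ≤ S.Bq
  Bq_pos : 0 < S.Bq
  q0_cont : Continuous S.q0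
  q0_int : Integrable S.q0
  q0_integral : ∫ x, S.q0 x = 1
  c_pos : 0 < S.c
  c_mul_le : ∀ x, S.c * S.f x ≤ S.q0 x
  b_pos : ∀ n, 0 < S.b n
  b_anti : Antitone S.b
  b_lim : Tendsto S.b atTop (𝓝 0)
  lam_pos : ∀ n, 0 < S.lam n
  lam_anti : Antitone S.lam
  lam_lim : Tendsto S.lam atTop (𝓝 0)

/-- Valid data with admissible step sizes, normalised so that `γ`, `lam ≤ 1 / 2` and `b ≤ 1` from
the start. -/
structure MidasParams.Regular {d : ℕ} (S : MidasParams d) : Prop extends S.Valid where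
  step : IsStepSeq S.γ
  b_le_one : ∀ n, S.b n ≤ 1
  lam_le : ∀ n, S.lam n ≤ 1 / 2
  rate : Tendsto (fun n => S.γ n / (S.lam n * S.b n ^ d)) atTop (𝓝 0)

/-- A path that obeys the recursions of the algorithm and has genuine probability densities as
policies. Any tame `g 0` is allowed, since the notion is applied to paths restarted at a late
time. -/
structure MidasPath.IsRun {d : ℕ} (D : MidasPath d) : Prop extends
    MidasParams.Regular D.toMidasParams where
  g_zero : IsTame (D.g 0)
  g_succ : ∀ n x, D.g (n + 1) x = (1 - D.γ (n + 1)) * D.g n x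
    + D.γ (n + 1) * D.weight n * kb D.K (D.b (n + 1)) (x - D.X (n + 1))
  q_eq : ∀ n x, D.q n x = (1 - D.lam n) * (D.g n x / D.mass n) + D.lam n * D.q0 x
  q_nonneg : ∀ n x, 0 ≤ D.q n x
  q_integral : ∀ n, ∫ x, D.q n x = 1

/-- A run whose noise is controlled. -/
structure MidasPath.Regular {d : ℕ} (D : MidasPath d) : Prop extends D.IsRun where
  noise : D.NoiseControlled

section truncWeight
variable {d : ℕ} {η c l : ℝ} {f q : Euc d → ℝ}

theorem truncWeight_nonneg (hf : ∀ x, 0 ≤ f x) (hq : ∀ x, 0 ≤ q x) (y : Euc d) :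
    0 ≤ truncWeight η c l f q y := by
  rw [truncWeight]
  split_ifs
  · exact Real.rpow_nonneg (div_nonneg (hf y) (hq y)) _
  · exact le_rfl

theorem truncWeight_le_rpow (hf : ∀ x, 0 ≤ f x) (hq : ∀ x, 0 ≤ q x) (y : Euc d) :
    truncWeight η c l f q y ≤ (f y / q y) ^ η := by
  rw [truncWeight]
  split_ifs
  · exact le_rfl
  · exact Real.rpow_nonneg (div_nonneg (hf y) (hq y)) _

theorem truncWeight_of_le {y : Euc d} (h : c * l * f y ≤ 2 * q y) :
    truncWeight η c l f q y = (f y / q y) ^ η := if_pos h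

theorem truncWeight_le (hη : 0 < η) (hf : ∀ x, 0 ≤ f x) (hq : ∀ x, 0 ≤ q x) (hc : 0 < c)
    (hl : 0 < l) (y : Euc d) : truncWeight η c l f q y ≤ (2 / (c * l)) ^ η := by
  rw [truncWeight]
  split_ifs with h
  · refine Real.rpow_le_rpow (div_nonneg (hf y) (hq y)) ?_ hη.le
    rcases (hq y).eq_or_lt with hq0 | hq0
    · rw [← hq0, div_zero]; positivity
    · rw [div_le_div_iff₀ hq0 (mul_pos hc hl)]; linarith
  · positivity

theorem div_rpow_mul_self {η s t : ℝ} (hη : 0 < η) (hη1 : η < 1) (hs : 0 ≤ s) (ht : 0 ≤ t) :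
    (s / t) ^ η * t = s ^ η * t ^ (1 - η) := by
  rcases ht.eq_or_lt with rfl | ht0
  · rw [div_zero, Real.zero_rpow hη.ne', Real.zero_rpow (by linarith), mul_zero, mul_zero]
  · rw [Real.div_rpow hs ht, Real.rpow_sub ht0, Real.rpow_one]; ring

theorem truncWeight_mul_le (hη : 0 < η) (hη1 : η < 1) (hf : ∀ x, 0 ≤ f x) (hq : ∀ x, 0 ≤ q x)
    (y : Euc d) : truncWeight η c l f q y * q y ≤ f y ^ η * q y ^ (1 - η) := by
  rw [← div_rpow_mul_self hη hη1 (hf y) (hq y)]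
  exact mul_le_mul_of_nonneg_right (truncWeight_le_rpow hf hq y) (hq y)

theorem truncWeight_mul_le_add (hη : 0 < η) (hη1 : η < 1) (hf : ∀ x, 0 ≤ f x)
    (hq : ∀ x, 0 ≤ q x) (y : Euc d) :
    truncWeight η c l f q y * q y ≤ η * f y + (1 - η) * q y :=
  (truncWeight_mul_le hη hη1 hf hq y).trans
    (Real.geom_mean_le_arith_mean2_weighted hη.le (by linarith) (hf y) (hq y) (by ring))

theorem measurable_truncWeight (hf : Measurable f) (hq : Measurable q) :
    Measurable (truncWeight η c l f q) :=
  Measurable.ite (measurableSet_le (hf.const_mul _) (hq.const_mul _))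
    ((hf.div hq).pow_const _) measurable_const

theorem integrable_truncWeight_mul (hη : 0 < η) (hη1 : η < 1) (hf : ∀ x, 0 ≤ f x)
    (hq : ∀ x, 0 ≤ q x) (hfm : Measurable f) (hqm : Measurable q) (hfi : Integrable f)
    (hqi : Integrable q) : Integrable (fun y => truncWeight η c l f q y * q y) := by
  refine Integrable.mono' ((hfi.const_mul η).add (hqi.const_mul (1 - η)))
    ((measurable_truncWeight hfm hqm).mul hqm).aestronglyMeasurable
    (Eventually.of_forall fun y => ?_)
  rw [Real.norm_of_nonneg (mul_nonneg (truncWeight_nonneg hf hq y) (hq y))]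
  exact truncWeight_mul_le_add hη hη1 hf hq y

theorem integral_truncWeight_mul_le_one (hη : 0 < η) (hη1 : η < 1) (hf : ∀ x, 0 ≤ f x)
    (hq : ∀ x, 0 ≤ q x) (hfm : Measurable f) (hqm : Measurable q) (hfi : Integrable f)
    (hqi : Integrable q) (hf1 : ∫ x, f x = 1) (hq1 : ∫ x, q x = 1) :
    ∫ y, truncWeight η c l f q y * q y ≤ 1 :=
  calc ∫ y, truncWeight η c l f q y * q y ≤ ∫ y, (η * f y + (1 - η) * q y) :=
        integral_mono (integrable_truncWeight_mul hη hη1 hf hq hfm hqm hfi hqi)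
          ((hfi.const_mul η).add (hqi.const_mul (1 - η))) (truncWeight_mul_le_add hη hη1 hf hq)
    _ = 1 := by
        rw [integral_add (hfi.const_mul η) (hqi.const_mul (1 - η)), integral_const_mul,
          integral_const_mul, hf1, hq1]
        ring

end truncWeight

namespace MidasPath
variable {d : ℕ} {D : MidasPath d}

theorem driftAvg_succ (n : ℕ) (x : Euc d) :
    D.driftAvg (n + 1) x = (1 - D.γ (n + 1)) * D.driftAvg n x + D.γ (n + 1) * D.drift n x := rfl

theorem truncEst_succ (n : ℕ) (x : Euc d) :
    D.truncEst (n + 1) x = (1 - D.γ (n + 1)) * D.truncEst n x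
      + D.γ (n + 1) * (D.truncW n (D.X (n + 1)) * kb D.K (D.b (n + 1)) (x - D.X (n + 1))) := rfl

theorem truncMass_succ (n : ℕ) : D.truncMass (n + 1) = (1 - D.γ (n + 1)) * D.truncMass n
    + D.γ (n + 1) * D.truncW n (D.X (n + 1)) := rfl

namespace IsRun

theorem isTame_g (hD : D.IsRun) (n : ℕ) : IsTame (D.g n) := by
  induction n with
  | zero => exact hD.g_zero
  | succ n ih =>
    rw [show D.g (n + 1) = _ from funext (hD.g_succ n)]
    exact (ih.const_mul _).add ((hD.kernel.isTame_kb_sub (hD.b_pos _) _).const_mul _)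

theorem continuous_g (hD : D.IsRun) (n : ℕ) : Continuous (D.g n) := (hD.isTame_g n).continuous

theorem integrable_g (hD : D.IsRun) (n : ℕ) : Integrable (D.g n) := (hD.isTame_g n).integrable

theorem continuous_q (hD : D.IsRun) (n : ℕ) : Continuous (D.q n) := by
  rw [show D.q n = _ from funext (hD.q_eq n)]
  exact (continuous_const.mul ((hD.continuous_g n).div_const _)).add
    (continuous_const.mul hD.q0_cont)

theorem integrable_q (hD : D.IsRun) (n : ℕ) : Integrable (D.q n) :=
  .of_integral_ne_zero ((hD.q_integral n).trans_ne one_ne_zero)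

theorem weight_nonneg (hD : D.IsRun) (n : ℕ) : 0 ≤ D.weight n :=
  Real.rpow_nonneg (div_nonneg (hD.f_nonneg _) (hD.q_nonneg _ _)) _

theorem mass_succ (hD : D.IsRun) (n : ℕ) :
    D.mass (n + 1) = (1 - D.γ (n + 1)) * D.mass n + D.γ (n + 1) * D.weight n := by
  have hkb := (hD.kernel.integrable_kb (hD.b_pos (n + 1))).comp_sub_right (D.X (n + 1))
  rw [mass, integral_congr_ae (Eventually.of_forall (hD.g_succ n)),
    integral_add ((hD.integrable_g n).const_mul _) (hkb.const_mul _), integral_const_mul,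
    integral_const_mul, hD.kernel.integral_kb_sub_right (hD.b_pos _), mul_one, mass]

theorem mass_ne_zero (hD : D.IsRun) (n : ℕ) : D.mass n ≠ 0 := by
  intro hmass
  have hone := hD.q_integral n
  simp only [hD.q_eq n, hmass, div_zero, mul_zero, zero_add] at hone
  rw [integral_const_mul, hD.q0_integral] at hone
  linarith [hD.lam_le n]

theorem truncW_nonneg (hD : D.IsRun) (k : ℕ) (y : Euc d) : 0 ≤ D.truncW k y :=
  truncWeight_nonneg hD.f_nonneg (hD.q_nonneg k) y

theorem truncW_le_weight (hD : D.IsRun) (n : ℕ) : D.truncW n (D.X (n + 1)) ≤ D.weight n :=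
  truncWeight_le_rpow hD.f_nonneg (hD.q_nonneg n) _

theorem truncW_mul_nonneg (hD : D.IsRun) (k : ℕ) (y : Euc d) : 0 ≤ D.truncW k y * D.q k y :=
  mul_nonneg (hD.truncW_nonneg k y) (hD.q_nonneg k y)

theorem integrable_truncW_mul (hD : D.IsRun) (k : ℕ) :
    Integrable (fun y => D.truncW k y * D.q k y) :=
  integrable_truncWeight_mul hD.η_pos hD.η_lt_one hD.f_nonneg (hD.q_nonneg k)
    hD.f_cont.measurable (hD.continuous_q k).measurable hD.f_int (hD.integrable_q k)

theorem integral_truncW_mul_le_one (hD : D.IsRun) (k : ℕ) :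
    ∫ y, D.truncW k y * D.q k y ≤ 1 :=
  integral_truncWeight_mul_le_one hD.η_pos hD.η_lt_one hD.f_nonneg (hD.q_nonneg k)
    hD.f_cont.measurable (hD.continuous_q k).measurable hD.f_int (hD.integrable_q k)
    hD.f_integral (hD.q_integral k)

theorem truncW_mul_le (hD : D.IsRun) (k : ℕ) (y : Euc d) :
    D.truncW k y * D.q k y ≤ D.f y ^ D.η * D.q k y ^ (1 - D.η) :=
  truncWeight_mul_le hD.η_pos hD.η_lt_one hD.f_nonneg (hD.q_nonneg k) y

theorem integrable_drift (hD : D.IsRun) (k : ℕ) (x : Euc d) :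
    Integrable (fun y => D.truncW k y * D.q k y * kb D.K (D.b (k + 1)) (x - y)) := by
  refine (hD.integrable_truncW_mul k).mul_bdd (c := D.CK * (D.b (k + 1) ^ d)⁻¹)
    ((hD.kernel.continuous_kb _).comp (continuous_const.sub continuous_id)).aestronglyMeasurable
    (Eventually.of_forall fun y => ?_)
  rw [Real.norm_of_nonneg (hD.kernel.kb_nonneg (hD.b_pos _) _)]
  exact hD.kernel.kb_le (hD.b_pos _) _

theorem drift_integrand_nonneg (hD : D.IsRun) (k : ℕ) (x y : Euc d) :
    0 ≤ D.truncW k y * D.q k y * kb D.K (D.b (k + 1)) (x - y) :=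
  mul_nonneg (hD.truncW_mul_nonneg k y) (hD.kernel.kb_nonneg (hD.b_pos _) _)

theorem drift_nonneg (hD : D.IsRun) (k : ℕ) (x : Euc d) : 0 ≤ D.drift k x :=
  integral_nonneg fun y => hD.drift_integrand_nonneg k x y

theorem drift_le (hD : D.IsRun) (k : ℕ) (x : Euc d) :
    D.drift k x ≤ D.CK * (D.b (k + 1) ^ d)⁻¹ := by
  have hb := hD.b_pos (k + 1)
  have hC := hD.kernel.const_pos
  calc D.drift k x ≤ ∫ y, D.truncW k y * D.q k y * (D.CK * (D.b (k + 1) ^ d)⁻¹) :=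
        integral_mono (hD.integrable_drift k x) ((hD.integrable_truncW_mul k).mul_const _)
          fun y => mul_le_mul_of_nonneg_left (hD.kernel.kb_le hb _) (hD.truncW_mul_nonneg k y)
    _ = (∫ y, D.truncW k y * D.q k y) * (D.CK * (D.b (k + 1) ^ d)⁻¹) := integral_mul_const _ _
    _ ≤ D.CK * (D.b (k + 1) ^ d)⁻¹ :=
        mul_le_of_le_one_left (by positivity) (hD.integral_truncW_mul_le_one k)

theorem driftAvg_nonneg (hD : D.IsRun) (n : ℕ) (x : Euc d) : 0 ≤ D.driftAvg n x :=
  hD.step.runningAvg_nonneg n fun k _ => hD.drift_nonneg k x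

theorem inv_b_pow_mono (hD : D.IsRun) : Monotone fun n => (D.b n ^ d)⁻¹ := fun m n hmn => by
  have := hD.b_pos n
  have := hD.b_anti hmn
  dsimp only
  gcongr

theorem driftAvg_le (hD : D.IsRun) (n : ℕ) (x : Euc d) :
    D.driftAvg n x ≤ D.CK * (D.b n ^ d)⁻¹ := by
  have := hD.b_pos n
  have hC := hD.kernel.const_pos
  exact hD.step.runningAvg_le_of_le n (by positivity) fun k hk =>
    (hD.drift_le k x).trans (mul_le_mul_of_nonneg_left (hD.inv_b_pow_mono hk) hC.le)

theorem truncMass_nonneg (hD : D.IsRun) (n : ℕ) : 0 ≤ D.truncMass n :=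
  hD.step.runningAvg_nonneg n fun k _ => hD.truncW_nonneg k _

theorem isTame_truncEst (hD : D.IsRun) (n : ℕ) : IsTame (D.truncEst n) := by
  induction n with
  | zero => exact .zero
  | succ n ih =>
    rw [show D.truncEst (n + 1) = _ from funext (truncEst_succ n)]
    exact (ih.const_mul _).add
      (((hD.kernel.isTame_kb_sub (hD.b_pos _) _).const_mul _).const_mul _)

end IsRun
end MidasPath
/-! ### Mass and truncation -/

namespace MidasPath
variable {d : ℕ} {D : MidasPath d}

/-- The estimate `g n` eventually exceeds the target `f` by at most `ε`, uniformly on compact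
sets, for every `ε > 0`. -/
def UpperConsistent (D : MidasPath d) : Prop :=
  ∀ A : Set (Euc d), IsCompact A → ∀ ε : ℝ, 0 < ε → ∀ᶠ n in atTop, ∀ x ∈ A,
    D.g n x ≤ D.f x + ε

/-- At time `n` the policy keeps at least half of its safeguard `lam n * q0`, so that no weight is
truncated. -/
def Untruncated (D : MidasPath d) (n : ℕ) : Prop := ∀ x, D.lam n * D.q0 x ≤ 2 * D.q n x

namespace IsRun

theorem upperConsistent_of_eventually_le (hD : D.IsRun) {u : ℕ → ℝ}
    (hu : Tendsto u atTop (𝓝 0)) (hgu : ∀ᶠ n in atTop, ∀ x, D.g n x ≤ u n) :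
    D.UpperConsistent := by
  intro A _ ε hε
  filter_upwards [hgu, hu.eventually_lt_const hε] with n hn hun x _
  linarith [hn x, hD.f_nonneg x]

theorem lam_mul_b_pow_pos (hD : D.IsRun) (n : ℕ) : 0 < D.lam n * D.b n ^ d :=
  mul_pos (hD.lam_pos n) (pow_pos (hD.b_pos n) d)

theorem lam_mul_b_pow_le_lam (hD : D.IsRun) (n : ℕ) : D.lam n * D.b n ^ d ≤ D.lam n :=
  mul_le_of_le_one_right (hD.lam_pos n).le (pow_le_one₀ (hD.b_pos n).le (hD.b_le_one n))

theorem eventually_mul_step_le (hD : D.IsRun) (C : ℝ) :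
    ∀ᶠ n in atTop, C * D.γ n ≤ D.lam n * D.b n ^ d := by
  have hlim : Tendsto (fun n => C * (D.γ n / (D.lam n * D.b n ^ d))) atTop (𝓝 0) := by
    simpa only [mul_zero] using hD.rate.const_mul C
  filter_upwards [hlim.eventually_lt_const one_pos] with n hn
  rw [← mul_div_assoc, div_lt_one (hD.lam_mul_b_pow_pos n)] at hn
  exact hn.le

theorem eventually_mul_decay_le (hD : D.IsRun) (C : ℝ) :
    ∀ᶠ n in atTop, C * decay D.γ n ≤ D.lam n * D.b n ^ d := by
  filter_upwards [hD.eventually_mul_step_le (|C| * (D.γ 0)⁻¹)] with n hn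
  calc C * decay D.γ n ≤ |C| * decay D.γ n :=
        mul_le_mul_of_nonneg_right (le_abs_self C) (hD.step.decay_pos n).le
    _ ≤ |C| * ((D.γ 0)⁻¹ * D.γ n) :=
        mul_le_mul_of_nonneg_left (hD.step.decay_le n) (abs_nonneg C)
    _ ≤ D.lam n * D.b n ^ d := by rwa [← mul_assoc]

theorem eventually_mul_decay_le_lam (hD : D.IsRun) (C : ℝ) :
    ∀ᶠ n in atTop, C * decay D.γ n ≤ D.lam n := by
  filter_upwards [hD.eventually_mul_decay_le C] with n hn
  exact hn.trans (hD.lam_mul_b_pow_le_lam n)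

theorem decay_div_mul_mass_le (hD : D.IsRun) {m n : ℕ} (hmn : m ≤ n) :
    decay D.γ n / decay D.γ m * D.mass m ≤ D.mass n :=
  hD.step.decay_div_mul_le hmn fun k _ _ => by
    rw [hD.mass_succ]
    linarith [mul_nonneg (hD.step.pos (k + 1)).le (hD.weight_nonneg k)]

theorem mass_pos_of_le (hD : D.IsRun) {T : ℕ} (hT : 0 < D.mass T) {n : ℕ} (hn : T ≤ n) :
    0 < D.mass n :=
  (mul_pos (div_pos (hD.step.decay_pos n) (hD.step.decay_pos T)) hT).trans_le
    (hD.decay_div_mul_mass_le hn)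

theorem decay_div_mul_g_le (hD : D.IsRun) (x : Euc d) {m n : ℕ} (hmn : m ≤ n) :
    decay D.γ n / decay D.γ m * D.g m x ≤ D.g n x :=
  hD.step.decay_div_mul_le (A := fun n => D.g n x) hmn fun k _ _ => by
    have hincr := mul_nonneg (mul_nonneg (hD.step.pos (k + 1)).le (hD.weight_nonneg k))
      (hD.kernel.kb_nonneg (hD.b_pos (k + 1)) (x - D.X (k + 1)))
    linarith [hD.g_succ k x]

theorem neg_lam_mul_q0_le (hD : D.IsRun) (n : ℕ) (x : Euc d) :
    -(2 * D.lam n * D.q0 x) ≤ D.g n x / D.mass n := by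
  have hq := hD.q_nonneg n x
  rw [hD.q_eq] at hq
  have hq0 := mul_nonneg (hD.lam_pos n).le (hD.q0_nonneg x)
  by_contra! hlt
  nlinarith [hD.lam_le n]

theorem upperConsistent_of_mass_nonpos (hD : D.IsRun) (hmass : ∀ n, D.mass n ≤ 0) :
    D.UpperConsistent := by
  have hmass0 : ∀ n, D.mass 0 ≤ D.mass n := fun n => by
    nlinarith [hmass 0, hD.decay_div_mul_mass_le n.zero_le, hD.step.decay_div_le_one n.zero_le]
  have hu : Tendsto (fun n => 2 * D.lam n * D.Bq * -D.mass 0) atTop (𝓝 0) := by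
    simpa only [mul_zero, zero_mul] using
      ((hD.lam_lim.const_mul 2).mul_const D.Bq).mul_const (-D.mass 0)
  refine hD.upperConsistent_of_eventually_le hu (Eventually.of_forall fun n x => ?_)
  have hlam := hD.lam_pos n
  have hBq := hD.Bq_pos
  have hratio : -(D.g n x / D.mass n) ≤ 2 * D.lam n * D.Bq :=
    (neg_le.1 (hD.neg_lam_mul_q0_le n x)).trans
      (mul_le_mul_of_nonneg_left (hD.q0_le x) (by positivity))
  calc D.g n x = -(D.g n x / D.mass n) * -D.mass n := by
        rw [neg_mul_neg, div_mul_cancel₀ _ (hD.mass_ne_zero n)]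
    _ ≤ 2 * D.lam n * D.Bq * -D.mass n :=
        mul_le_mul_of_nonneg_right hratio (neg_nonneg.2 (hmass n))
    _ ≤ 2 * D.lam n * D.Bq * -D.mass 0 :=
        mul_le_mul_of_nonneg_left (neg_le_neg (hmass0 n)) (by positivity)

theorem exists_neg_decay_mul_q0_le (hD : D.IsRun) {T : ℕ} (hT : 0 < D.mass T) :
    ∃ C, 0 ≤ C ∧ ∀ n, T ≤ n → ∀ x, -(C * decay D.γ n * D.q0 x) ≤ D.g n x := by
  refine ⟨D.mass T / decay D.γ T, (div_pos hT (hD.step.decay_pos T)).le, fun n hn x => ?_⟩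
  have hT0 : -(D.mass T * D.q0 x) ≤ D.g T x := by
    have hratio := hD.neg_lam_mul_q0_le T x
    rw [le_div_iff₀ hT] at hratio
    nlinarith [mul_nonneg (hD.q0_nonneg x) hT.le, hD.lam_le T]
  calc -(D.mass T / decay D.γ T * decay D.γ n * D.q0 x)
      = decay D.γ n / decay D.γ T * -(D.mass T * D.q0 x) := by ring
    _ ≤ decay D.γ n / decay D.γ T * D.g T x :=
        mul_le_mul_of_nonneg_left hT0 (hD.step.decay_div_nonneg T n)
    _ ≤ D.g n x := hD.decay_div_mul_g_le x hn

theorem untruncated_of_neg_decay_mul_q0_le (hD : D.IsRun) {n : ℕ} (hmass : 0 < D.mass n)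
    {C : ℝ} (hg : ∀ x, -(C * decay D.γ n * D.q0 x) ≤ D.g n x)
    (hC : 2 * C * decay D.γ n ≤ D.lam n * D.mass n) : D.Untruncated n := by
  intro x
  rw [hD.q_eq]
  have hq0 := mul_nonneg (hD.lam_pos n).le (hD.q0_nonneg x)
  have hratio : -(D.lam n / 2 * D.q0 x) ≤ D.g n x / D.mass n := by
    rw [le_div_iff₀ hmass]
    nlinarith [hg x, hD.q0_nonneg x]
  nlinarith [hD.lam_pos n, hD.lam_le n]

end IsRun

theorem Untruncated.mul_f_le (hD : D.IsRun) {n : ℕ} (hn : D.Untruncated n) (y : Euc d) :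
    D.c * D.lam n * D.f y ≤ 2 * D.q n y := by
  nlinarith [hn y, mul_le_mul_of_nonneg_left (hD.c_mul_le y) (hD.lam_pos n).le]

theorem Untruncated.weight_eq (hD : D.IsRun) {n : ℕ} (hn : D.Untruncated n) :
    D.weight n = D.truncW n (D.X (n + 1)) :=
  (truncWeight_of_le (hn.mul_f_le hD _)).symm

theorem Untruncated.truncW_mul_eq (hD : D.IsRun) {n : ℕ} (hn : D.Untruncated n) (y : Euc d) :
    D.truncW n y * D.q n y = D.f y ^ D.η * D.q n y ^ (1 - D.η) := by
  rw [truncW, truncWeight_of_le (hn.mul_f_le hD y),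
    div_rpow_mul_self hD.η_pos hD.η_lt_one (hD.f_nonneg y) (hD.q_nonneg n y)]

namespace IsRun

theorem exists_truncEst_sub_le_g (hD : D.IsRun) :
    ∃ C, 0 ≤ C ∧ ∀ n x, D.truncEst n x - C * decay D.γ n ≤ D.g n x := by
  obtain ⟨C, hC0, hC⟩ := (hD.isTame_g 0).exists_abs_le
  refine ⟨C, hC0, fun n x => ?_⟩
  have hdiff : decay D.γ n / decay D.γ 0 * (D.g 0 x - D.truncEst 0 x)
      ≤ D.g n x - D.truncEst n x :=
    hD.step.decay_div_mul_le (A := fun n => D.g n x - D.truncEst n x) n.zero_le fun k _ _ => by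
      rw [hD.g_succ, truncEst_succ]
      have hkb := hD.kernel.kb_nonneg (hD.b_pos (k + 1)) (x - D.X (k + 1))
      linarith [mul_le_mul_of_nonneg_left (mul_le_mul_of_nonneg_right (hD.truncW_le_weight k) hkb)
        (hD.step.pos (k + 1)).le]
  rw [decay_zero, div_one, show D.truncEst 0 x = 0 from rfl, sub_zero] at hdiff
  nlinarith [neg_le_of_abs_le (hC x), hD.step.decay_pos n]

theorem g_sub_truncEst_eq (hD : D.IsRun) {m n : ℕ} (hmn : m ≤ n)
    (hU : ∀ k, m ≤ k → k < n → D.Untruncated k) (x : Euc d) :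
    D.g n x - D.truncEst n x = decay D.γ n / decay D.γ m * (D.g m x - D.truncEst m x) :=
  hD.step.eq_decay_div_mul (A := fun n => D.g n x - D.truncEst n x) hmn fun k hk hkn => by
    rw [hD.g_succ, truncEst_succ, (hU k hk hkn).weight_eq hD]
    ring

theorem mass_sub_truncMass_eq (hD : D.IsRun) {m n : ℕ} (hmn : m ≤ n)
    (hU : ∀ k, m ≤ k → k < n → D.Untruncated k) :
    D.mass n - D.truncMass n = decay D.γ n / decay D.γ m * (D.mass m - D.truncMass m) :=
  hD.step.eq_decay_div_mul (A := fun n => D.mass n - D.truncMass n) hmn fun k hk hkn => by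
    rw [hD.mass_succ, truncMass_succ, (hU k hk hkn).weight_eq hD]
    ring

theorem g_sub_mul_mass_succ_le (hD : D.IsRun) {k : ℕ} (hmass : 0 < D.mass k) (x : Euc d) :
    D.g (k + 1) x - D.CK * (D.b (k + 1) ^ d)⁻¹ * D.mass (k + 1)
      ≤ (1 - D.γ (k + 1)) * (D.g k x - D.CK * (D.b k ^ d)⁻¹ * D.mass k) := by
  have hkb : D.γ (k + 1) * D.weight k * kb D.K (D.b (k + 1)) (x - D.X (k + 1))
      ≤ D.γ (k + 1) * D.weight k * (D.CK * (D.b (k + 1) ^ d)⁻¹) :=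
    mul_le_mul_of_nonneg_left (hD.kernel.kb_le (hD.b_pos (k + 1)) _)
      (mul_nonneg (hD.step.pos (k + 1)).le (hD.weight_nonneg k))
  have hband : (1 - D.γ (k + 1)) * (D.CK * D.mass k) * (D.b k ^ d)⁻¹
      ≤ (1 - D.γ (k + 1)) * (D.CK * D.mass k) * (D.b (k + 1) ^ d)⁻¹ :=
    mul_le_mul_of_nonneg_left (hD.inv_b_pow_mono k.le_succ)
      (mul_nonneg (hD.step.one_sub_pos _).le (mul_nonneg hD.kernel.const_pos.le hmass.le))
  rw [hD.g_succ, hD.mass_succ]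
  linarith

theorem exists_g_le_mass_div (hD : D.IsRun) {T : ℕ} (hT : 0 < D.mass T) :
    ∃ C, 0 ≤ C ∧ ∀ n, T ≤ n → ∀ x, D.g n x ≤ D.CK * (D.mass n / D.b n ^ d) + C * decay D.γ n := by
  obtain ⟨C, hC0, hC⟩ := (hD.isTame_g T).exists_abs_le
  refine ⟨C / decay D.γ T, div_nonneg hC0 (hD.step.decay_pos T).le, fun n hn x => ?_⟩
  have hrec := hD.step.le_decay_div_mul
    (A := fun n => D.g n x - D.CK * (D.b n ^ d)⁻¹ * D.mass n) hn
    fun k hk _ => hD.g_sub_mul_mass_succ_le (hD.mass_pos_of_le hT hk) x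
  have hstart : D.g T x - D.CK * (D.b T ^ d)⁻¹ * D.mass T ≤ C := by
    have hb := hD.b_pos T
    have hCK := hD.kernel.const_pos
    have : 0 ≤ D.CK * (D.b T ^ d)⁻¹ * D.mass T := by positivity
    linarith [le_of_abs_le (hC x)]
  have hscaled := mul_le_mul_of_nonneg_left hstart (hD.step.decay_div_nonneg T n)
  calc D.g n x ≤ D.CK * (D.b n ^ d)⁻¹ * D.mass n + decay D.γ n / decay D.γ T * C := by linarith
    _ = D.CK * (D.mass n / D.b n ^ d) + C / decay D.γ T * decay D.γ n := by ring

theorem upperConsistent_of_tendsto_mass_div (hD : D.IsRun) {T : ℕ} (hT : 0 < D.mass T)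
    (hlim : Tendsto (fun n => D.mass n / D.b n ^ d) atTop (𝓝 0)) : D.UpperConsistent := by
  obtain ⟨C, -, hC⟩ := hD.exists_g_le_mass_div hT
  refine hD.upperConsistent_of_eventually_le
    (u := fun n => D.CK * (D.mass n / D.b n ^ d) + C * decay D.γ n) ?_ ?_
  · simpa only [mul_zero, add_zero] using
      (hlim.const_mul D.CK).add (hD.step.tendsto_decay.const_mul C)
  · filter_upwards [eventually_ge_atTop T] with n hn using hC n hn

theorem exists_frequently_mul_b_pow_le_mass (hD : D.IsRun) {T : ℕ} (hT : 0 < D.mass T)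
    (hlim : ¬ Tendsto (fun n => D.mass n / D.b n ^ d) atTop (𝓝 0)) :
    ∃ δ > 0, ∃ᶠ n in atTop, δ * D.b n ^ d ≤ D.mass n := by
  by_contra! hsmall
  refine hlim (Metric.tendsto_nhds.2 fun ε hε => ?_)
  filter_upwards [hsmall ε hε, eventually_ge_atTop T] with n hn hTn
  have hb : 0 < D.b n ^ d := pow_pos (hD.b_pos n) d
  have hpos := hD.mass_pos_of_le hT hTn
  rwa [Real.dist_0_eq_abs, abs_of_pos (by positivity), div_lt_iff₀ hb]

theorem le_drift_of_untruncated (hD : D.IsRun) {k : ℕ} (hU : D.Untruncated k)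
    {S : Set (Euc d)} (hS : MeasurableSet S) {f₀ s c₀ : ℝ} (hf₀ : 0 ≤ f₀) (hs : 0 ≤ s)
    (hf : ∀ y ∈ S, f₀ ≤ D.f y) (hq : ∀ y ∈ S, s ≤ D.q k y) {x : Euc d}
    (hc₀ : c₀ ≤ ∫ y in S, kb D.K (D.b (k + 1)) (x - y)) :
    c₀ * (f₀ ^ D.η * s ^ (1 - D.η)) ≤ D.drift k x := by
  have hη := hD.η_pos.le
  have hη1 := sub_nonneg.2 hD.η_lt_one.le
  have hweight : ∀ y ∈ S, f₀ ^ D.η * s ^ (1 - D.η) ≤ D.truncW k y * D.q k y := fun y hy => by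
    have hfy := hf y hy
    have hqy := hq y hy
    have := hD.f_nonneg y
    rw [hU.truncW_mul_eq hD y]
    gcongr
  calc c₀ * (f₀ ^ D.η * s ^ (1 - D.η))
      ≤ (∫ y in S, kb D.K (D.b (k + 1)) (x - y)) * (f₀ ^ D.η * s ^ (1 - D.η)) :=
        mul_le_mul_of_nonneg_right hc₀ (by positivity)
    _ = ∫ y in S, f₀ ^ D.η * s ^ (1 - D.η) * kb D.K (D.b (k + 1)) (x - y) := by
        rw [integral_const_mul, mul_comm]
    _ ≤ ∫ y in S, D.truncW k y * D.q k y * kb D.K (D.b (k + 1)) (x - y) :=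
        setIntegral_mono_on ((hD.kernel.integrable_kb_sub (hD.b_pos _) x).const_mul _).integrableOn
          (hD.integrable_drift k x).integrableOn hS fun y hy =>
          mul_le_mul_of_nonneg_right (hweight y hy) (hD.kernel.kb_nonneg (hD.b_pos _) _)
    _ ≤ D.drift k x := setIntegral_le_integral (hD.integrable_drift k x)
        (Eventually.of_forall fun y => hD.drift_integrand_nonneg k x y)

end IsRun
end MidasPath
/-! ### Growth on a ball where the target is positive -/

theorem two_rpow_sub_one_pos {η : ℝ} (hη : 0 < η) : 0 < (2 : ℝ) ^ η - 1 :=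
  sub_pos.2 (Real.one_lt_rpow one_lt_two hη)

theorem one_add_mul_le_one_add_rpow {η s : ℝ} (hη : 0 < η) (hη1 : η < 1) (hs : 0 ≤ s)
    (hs1 : s ≤ 1) : 1 + (2 ^ η - 1) * s ≤ (1 + s) ^ η := by
  have hconc := (Real.concaveOn_rpow hη.le hη1.le).2 (Set.mem_Ici.2 zero_le_one)
    (Set.mem_Ici.2 (zero_le_two : (0 : ℝ) ≤ 2)) (sub_nonneg.2 hs1) hs (by ring)
  simp only [smul_eq_mul, Real.one_rpow] at hconc
  rw [show (1 - s) * 1 + s * 2 = 1 + s by ring] at hconc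
  linarith

/-- In the variable `u = m ^ η`, the map `m ↦ (1 - γ) * m + γ * (a * m ^ (1 - η))` climbs towards
its fixed point `u = a` at linear speed as long as `u ≤ a / 2`. -/
theorem add_le_convexCombo_rpow {η a u γ : ℝ} (hη : 0 < η) (hη1 : η < 1) (hu : 0 < u)
    (hua : u ≤ a / 2) (hγ : 0 ≤ γ) (hγu : γ * a ≤ u) :
    u + (2 ^ η - 1) * γ * (a / 2)
      ≤ ((1 - γ) * u ^ η⁻¹ + γ * (a * (u ^ η⁻¹) ^ (1 - η))) ^ η := by
  have hp := two_rpow_sub_one_pos hη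
  set m := u ^ η⁻¹
  have hm : 0 < m := Real.rpow_pos_of_pos hu _
  have hmu : m ^ η = u := Real.rpow_inv_rpow hu.le hη.ne'
  set s := γ * (a / u - 1) with hs
  have hau : 1 ≤ a / u := by rw [le_div_iff₀ hu]; linarith
  have hs0 : 0 ≤ s := mul_nonneg hγ (by linarith)
  have hs1 : s ≤ 1 := by
    have : γ * (a / u) ≤ 1 := by rwa [← mul_div_assoc, div_le_one hu]
    linarith
  have hfactor : (1 - γ) * m + γ * (a * m ^ (1 - η)) = m * (1 + s) := by
    rw [Real.rpow_sub hm, Real.rpow_one, hmu, hs]; field_simp; ring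
  have hus : u * s = γ * (a - u) := by rw [hs]; field_simp
  rw [hfactor, Real.mul_rpow hm.le (by linarith), hmu]
  calc u + (2 ^ η - 1) * γ * (a / 2) ≤ u + (2 ^ η - 1) * (γ * (a - u)) := by
        rw [mul_assoc]; gcongr; linarith
    _ = u * (1 + (2 ^ η - 1) * s) := by rw [← hus]; ring
    _ ≤ u * (1 + s) ^ η :=
        mul_le_mul_of_nonneg_left (one_add_mul_le_one_add_rpow hη hη1 hs0 hs1) hu.le

namespace MidasPath
variable {d : ℕ} {D : MidasPath d}

namespace IsRun

theorem lam_le_lam_rpow (hD : D.IsRun) (n : ℕ) {s : ℝ} (hs : s ≤ 1) :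
    D.lam n ≤ D.lam n ^ s := by
  simpa only [Real.rpow_one] using
    Real.rpow_le_rpow_of_exponent_ge (hD.lam_pos n) (by linarith [hD.lam_le n]) hs

theorem lam_rpow_pos (hD : D.IsRun) (n : ℕ) (s : ℝ) : 0 < D.lam n ^ s :=
  Real.rpow_pos_of_pos (hD.lam_pos n) _

theorem eventually_add_mul_decay_le (hD : D.IsRun) {e : ℕ → ℝ}
    (he : Tendsto (fun n => e n / D.lam n ^ (1 - D.η)) atTop (𝓝 0)) (C : ℝ) {κ : ℝ}
    (hκ : 0 < κ) : ∀ᶠ k in atTop, e k + C * decay D.γ k ≤ κ * D.lam k ^ (1 - D.η) := by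
  filter_upwards [he.eventually_lt_const (half_pos hκ),
    hD.eventually_mul_decay_le_lam (2 / κ * C)] with k hek hdecay
  rw [div_lt_iff₀ (hD.lam_rpow_pos k _)] at hek
  have hlam := hD.lam_le_lam_rpow k (s := 1 - D.η) (by linarith [hD.η_pos])
  calc e k + C * decay D.γ k = e k + κ / 2 * (2 / κ * C * decay D.γ k) := by field_simp
    _ ≤ κ / 2 * D.lam k ^ (1 - D.η) + κ / 2 * D.lam k ^ (1 - D.η) := by
        gcongr; exact hdecay.trans hlam
    _ = κ * D.lam k ^ (1 - D.η) := by ring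

theorem eventually_error_le (hD : D.IsRun) {e : ℕ → ℝ}
    (he : Tendsto (fun n => e n / D.lam n ^ (1 - D.η)) atTop (𝓝 0)) {κ : ℝ} (hκ : 0 < κ) :
    ∀ᶠ k in atTop, e k ≤ κ := by
  filter_upwards [hD.eventually_add_mul_decay_le he 0 hκ] with k hk
  have : D.lam k ^ (1 - D.η) ≤ 1 := Real.rpow_le_one (hD.lam_pos k).le
    (by linarith [hD.lam_le k]) (by linarith [hD.η_lt_one])
  nlinarith

theorem div_eight_le_q (hD : D.IsRun) {k : ℕ} (hmass : 0 < D.mass k) (hmass4 : D.mass k ≤ 4)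
    {s : ℝ} (hs : 0 ≤ s) {x : Euc d} (hg : s ≤ D.g k x) : s / 8 ≤ D.q k x := by
  have hratio : s / 4 ≤ D.g k x / D.mass k := by
    rw [le_div_iff₀ hmass]; nlinarith
  rw [hD.q_eq]
  nlinarith [hD.lam_le k, mul_nonneg (hD.lam_pos k).le (hD.q0_nonneg x)]

theorem eventually_step_succ_mul_le (hD : D.IsRun) (C : ℝ) {κ : ℝ} (hκ : 0 < κ) :
    ∀ᶠ j in atTop, D.γ (j + 1) * C ≤ (κ * D.lam j ^ (1 - D.η)) ^ D.η := by
  filter_upwards [hD.eventually_mul_step_le (|C| / κ ^ D.η)] with j hj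
  have hlam := hD.lam_pos j
  have hexp : D.lam j ≤ (D.lam j ^ (1 - D.η)) ^ D.η := by
    rw [← Real.rpow_mul hlam.le]
    exact hD.lam_le_lam_rpow j (by nlinarith [hD.η_pos, hD.η_lt_one])
  have := Real.rpow_pos_of_pos hκ D.η
  calc D.γ (j + 1) * C ≤ D.γ j * |C| :=
        (mul_le_mul_of_nonneg_left (le_abs_self C) (hD.step.pos (j + 1)).le).trans
          (mul_le_mul_of_nonneg_right (hD.step.anti j.le_succ) (abs_nonneg C))
    _ = κ ^ D.η * (|C| / κ ^ D.η * D.γ j) := by field_simp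
    _ ≤ κ ^ D.η * (D.lam j ^ (1 - D.η)) ^ D.η := by
        gcongr; exact hj.trans ((hD.lam_mul_b_pow_le_lam j).trans hexp)
    _ = (κ * D.lam j ^ (1 - D.η)) ^ D.η :=
        (Real.mul_rpow hκ.le (Real.rpow_nonneg hlam.le _)).symm

end IsRun

theorem Regular.eventually_driftAvg_div_four_le_g (hD : D.Regular) {κ : ℝ} (hκ : 0 < κ) (R : ℝ) :
    ∀ᶠ j in atTop, ∀ x, ‖x‖ ≤ R → κ * D.lam j ^ (1 - D.η) ≤ D.driftAvg j x →
      D.driftAvg j x / 4 ≤ D.g j x := by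
  obtain ⟨C, -, hC⟩ := hD.exists_truncEst_sub_le_g
  obtain ⟨e, he, hnoise⟩ := hD.noise (1 / 2) (by norm_num) (by norm_num) R
  filter_upwards [hnoise, hD.eventually_add_mul_decay_le he C (show 0 < κ / 4 by positivity)]
    with j hj herr x hx hfloor
  linarith [(hj.1 x hx).1, hC j x]

/-- The level `c₀ * f₀ ^ η * (c * f₀ / 2) ^ (1 - η) / 2`: the safeguard `lam j * q0` alone forces
`driftAvg j` up to this multiple of `lam j ^ (1 - η)` on a set where `f₀ ≤ f`. -/
noncomputable def floorConst (D : MidasPath d) (f₀ c₀ : ℝ) : ℝ :=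
  c₀ * (f₀ ^ D.η * (D.c * f₀ / 2) ^ (1 - D.η)) / 2

/-- The factor `a` such that `driftAvg j ≥ m` on a set where `f₀ ≤ f` forces
`drift j ≥ a * m ^ (1 - η)` there; the constant `32` comes from `q j ≥ driftAvg j / 32`. -/
noncomputable def growthConst (D : MidasPath d) (f₀ c₀ : ℝ) : ℝ :=
  c₀ * (f₀ ^ D.η * (1 / 32) ^ (1 - D.η))

/-- On the time window from `n` to `k` no weight is truncated, the mass stays in `(0, 4]` and the
noise is small. On `S` the target is at least `f₀`, and `S` carries at least the share `c₀` of every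
kernel centred at one of its points. -/
structure GrowthPhase (D : MidasPath d) (S : Set (Euc d)) (f₀ c₀ : ℝ) (n k : ℕ) : Prop where
  measurableSet : MeasurableSet S
  f₀_pos : 0 < f₀
  c₀_pos : 0 < c₀
  le_f : ∀ y ∈ S, f₀ ≤ D.f y
  le_setIntegral : ∀ b, 0 < b → b ≤ 1 → ∀ x ∈ S, c₀ ≤ ∫ y in S, kb D.K b (x - y)
  untruncated : ∀ j, n ≤ j → j < k → D.Untruncated j
  mass_pos : ∀ j, n ≤ j → j < k → 0 < D.mass j
  mass_le : ∀ j, n ≤ j → j < k → D.mass j ≤ 4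
  driftAvg_div_four_le : ∀ j, n ≤ j → ∀ x ∈ S,
    D.floorConst f₀ c₀ * D.lam j ^ (1 - D.η) ≤ D.driftAvg j x → D.driftAvg j x / 4 ≤ D.g j x
  step_mul_le : ∀ j, n ≤ j →
    D.γ (j + 1) * D.growthConst f₀ c₀ ≤ (D.floorConst f₀ c₀ * D.lam j ^ (1 - D.η)) ^ D.η

namespace GrowthPhase
variable {S : Set (Euc d)} {f₀ c₀ : ℝ} {n k : ℕ}

theorem floorConst_pos (hP : D.GrowthPhase S f₀ c₀ n k) (hD : D.IsRun) :
    0 < D.floorConst f₀ c₀ := by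
  have := hP.f₀_pos
  have := hP.c₀_pos
  have := hD.c_pos
  unfold floorConst
  positivity

theorem growthConst_pos (hP : D.GrowthPhase S f₀ c₀ n k) : 0 < D.growthConst f₀ c₀ := by
  have := hP.f₀_pos
  have := hP.c₀_pos
  unfold growthConst
  positivity

theorem floor_le_drift (hP : D.GrowthPhase S f₀ c₀ n k) (hD : D.IsRun) {j : ℕ} (hnj : n ≤ j)
    (hjk : j < k) {x : Euc d} (hx : x ∈ S) :
    2 * D.floorConst f₀ c₀ * D.lam j ^ (1 - D.η) ≤ D.drift j x := by
  have hf₀ := hP.f₀_pos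
  have hc := hD.c_pos
  have hlam := hD.lam_pos j
  have hU := hP.untruncated j hnj hjk
  have hq : ∀ y ∈ S, D.lam j * (D.c * f₀ / 2) ≤ D.q j y := fun y hy => by
    nlinarith [hU.mul_f_le hD y, mul_le_mul_of_nonneg_left (hP.le_f y hy) (mul_pos hc hlam).le]
  have hdrift := hD.le_drift_of_untruncated hU hP.measurableSet hf₀.le (by positivity) hP.le_f hq
    (hP.le_setIntegral _ (hD.b_pos (j + 1)) (hD.b_le_one _) x hx)
  rw [Real.mul_rpow hlam.le (by positivity)] at hdrift
  calc 2 * D.floorConst f₀ c₀ * D.lam j ^ (1 - D.η)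
      = c₀ * (f₀ ^ D.η * (D.lam j ^ (1 - D.η) * (D.c * f₀ / 2) ^ (1 - D.η))) := by
        rw [floorConst]; ring
    _ ≤ D.drift j x := hdrift

theorem floor_le_driftAvg (hP : D.GrowthPhase S f₀ c₀ n k) (hD : D.IsRun) {j : ℕ} (hnj : n ≤ j)
    (hjk : j ≤ k) (htime : 1 ≤ cumStep D.γ j - cumStep D.γ n) {x : Euc d} (hx : x ∈ S) :
    D.floorConst f₀ c₀ * D.lam j ^ (1 - D.η) ≤ D.driftAvg j x := by
  have hfloor := mul_pos (hP.floorConst_pos hD) (hD.lam_rpow_pos j (1 - D.η))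
  have hdrift : ∀ i, n ≤ i → i < j →
      2 * D.floorConst f₀ c₀ * D.lam j ^ (1 - D.η) ≤ D.drift i x := fun i hni hij =>
    (mul_le_mul_of_nonneg_left
      (Real.rpow_le_rpow (hD.lam_pos j).le (hD.lam_anti hij.le) (by linarith [hD.η_lt_one]))
      (mul_pos two_pos (hP.floorConst_pos hD)).le).trans
      (hP.floor_le_drift hD hni (hij.trans_le hjk) hx)
  have hexp : Real.exp (-(cumStep D.γ j - cumStep D.γ n)) ≤ 1 / 2 :=
    calc Real.exp (-(cumStep D.γ j - cumStep D.γ n)) ≤ Real.exp (-1) :=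
          Real.exp_le_exp.2 (by linarith)
      _ ≤ 1 / 2 := Real.exp_neg_one_lt_half.le
  have hratio : decay D.γ j / decay D.γ n ≤ 1 / 2 := by
    rw [div_le_iff₀ (hD.step.decay_pos n)]
    nlinarith [hD.step.decay_le_mul_exp hnj, hD.step.decay_pos n]
  have hstart := mul_nonneg (hD.step.decay_div_nonneg n j) (hD.driftAvg_nonneg n x)
  have havg := hD.step.le_runningAvg (u := fun i => D.drift i x) hnj hdrift
  rw [← driftAvg, ← driftAvg] at havg
  nlinarith

theorem div_thirtytwo_le_q (hP : D.GrowthPhase S f₀ c₀ n k) (hD : D.IsRun) {j : ℕ}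
    (hnj : n ≤ j) (hjk : j < k) (htime : 1 ≤ cumStep D.γ j - cumStep D.γ n) {y : Euc d}
    (hy : y ∈ S) : D.driftAvg j y * (1 / 32) ≤ D.q j y := by
  have hg := hP.driftAvg_div_four_le j hnj y hy (hP.floor_le_driftAvg hD hnj hjk.le htime hy)
  have hq := hD.div_eight_le_q (hP.mass_pos j hnj hjk) (hP.mass_le j hnj hjk)
    (div_nonneg (hD.driftAvg_nonneg j y) zero_le_four) hg
  linarith

theorem growthConst_mul_le_drift (hP : D.GrowthPhase S f₀ c₀ n k) (hD : D.IsRun) {j : ℕ}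
    (hnj : n ≤ j) (hjk : j < k) (htime : 1 ≤ cumStep D.γ j - cumStep D.γ n) {m : ℝ} (hm : 0 ≤ m)
    (hmS : ∀ y ∈ S, m ≤ D.driftAvg j y) {x : Euc d} (hx : x ∈ S) :
    D.growthConst f₀ c₀ * m ^ (1 - D.η) ≤ D.drift j x := by
  have hdrift := hD.le_drift_of_untruncated (hP.untruncated j hnj hjk) hP.measurableSet
    hP.f₀_pos.le (s := m * (1 / 32)) (by positivity) hP.le_f
    (fun y hy => (mul_le_mul_of_nonneg_right (hmS y hy) (by norm_num)).trans
      (hP.div_thirtytwo_le_q hD hnj hjk htime hy))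
    (hP.le_setIntegral _ (hD.b_pos (j + 1)) (hD.b_le_one _) x hx)
  rw [Real.mul_rpow hm (by norm_num)] at hdrift
  calc D.growthConst f₀ c₀ * m ^ (1 - D.η)
      = c₀ * (f₀ ^ D.η * (m ^ (1 - D.η) * (1 / 32) ^ (1 - D.η))) := by rw [growthConst]; ring
    _ ≤ D.drift j x := hdrift

theorem add_le_driftAvg_succ_rpow (hP : D.GrowthPhase S f₀ c₀ n k) (hD : D.IsRun) {j : ℕ}
    (hnj : n ≤ j) (hjk : j < k) (htime : 1 ≤ cumStep D.γ j - cumStep D.γ n) {u : ℝ} (hu : 0 < u)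
    (hua : u ≤ D.growthConst f₀ c₀ / 2) (hγu : D.γ (j + 1) * D.growthConst f₀ c₀ ≤ u)
    (huS : ∀ y ∈ S, u ≤ D.driftAvg j y ^ D.η) {x : Euc d} (hx : x ∈ S) :
    u + (2 ^ D.η - 1) * D.γ (j + 1) * (D.growthConst f₀ c₀ / 2) ≤ D.driftAvg (j + 1) x ^ D.η := by
  have ha := hP.growthConst_pos
  have hm : 0 < u ^ D.η⁻¹ := Real.rpow_pos_of_pos hu _
  have hmS : ∀ y ∈ S, u ^ D.η⁻¹ ≤ D.driftAvg j y := fun y hy =>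
    (Real.rpow_inv_le_iff_of_pos hu.le (hD.driftAvg_nonneg j y) hD.η_pos).2 (huS y hy)
  have hγ := hD.step.pos (j + 1)
  have hγ1 := hD.step.one_sub_pos (j + 1)
  have hη := hD.η_pos.le
  refine (add_le_convexCombo_rpow hD.η_pos hD.η_lt_one hu hua hγ.le hγu).trans ?_
  rw [driftAvg_succ]
  gcongr
  · exact hmS x hx
  · exact hP.growthConst_mul_le_drift hD hnj hjk htime hm.le hmS hx

/-- The delay `3 / 2` is one unit of time until the floor is reached, plus the at most `1 / 2` by
which a single step can overshoot it. -/
theorem min_le_driftAvg_rpow (hP : D.GrowthPhase S f₀ c₀ n k) (hD : D.IsRun) {j : ℕ}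
    (hnj : n ≤ j) (hjk : j ≤ k) {x : Euc d} (hx : x ∈ S) :
    min (D.growthConst f₀ c₀ / 2) ((2 ^ D.η - 1) * (D.growthConst f₀ c₀ / 2)
      * (cumStep D.γ j - cumStep D.γ n - 3 / 2)) ≤ D.driftAvg j x ^ D.η := by
  have ha := hP.growthConst_pos
  have hslope : 0 < (2 ^ D.η - 1) * (D.growthConst f₀ c₀ / 2) :=
    mul_pos (two_rpow_sub_one_pos hD.η_pos) (half_pos ha)
  have hη := hD.η_pos.le
  induction j, hnj using Nat.le_induction generalizing x with
  | base =>
    exact (min_le_right _ _).trans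
      ((by nlinarith : _ ≤ (0 : ℝ)).trans (Real.rpow_nonneg (hD.driftAvg_nonneg _ _) _))
  | succ j hnj ih =>
    rw [cumStep_succ]
    by_cases htime : 1 ≤ cumStep D.γ j - cumStep D.γ n
    · set v := min (D.growthConst f₀ c₀ / 2) ((2 ^ D.η - 1) * (D.growthConst f₀ c₀ / 2)
        * (cumStep D.γ j - cumStep D.γ n - 3 / 2)) with hv
      set F := D.floorConst f₀ c₀ * D.lam j ^ (1 - D.η)
      have hF : 0 < F := mul_pos (hP.floorConst_pos hD) (hD.lam_rpow_pos j _)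
      have hFS : ∀ y ∈ S, F ^ D.η ≤ D.driftAvg j y ^ D.η := fun y hy =>
        Real.rpow_le_rpow hF.le (hP.floor_le_driftAvg hD hnj (by omega) htime hy) hη
      have hstep := hP.add_le_driftAvg_succ_rpow hD hnj (by omega) htime
        (u := min (max v (F ^ D.η)) (D.growthConst f₀ c₀ / 2))
        (lt_min (lt_max_of_lt_right (Real.rpow_pos_of_pos hF _)) (half_pos ha)) (min_le_right _ _)
        (le_min ((hP.step_mul_le j hnj).trans (le_max_right _ _))
          (by nlinarith [hD.step.le_half (j + 1)]))
        (fun y hy => (min_le_left _ _).trans (max_le (ih (by omega) hy) (hFS y hy))) hx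
      have hvu : v ≤ min (max v (F ^ D.η)) (D.growthConst f₀ c₀ / 2) :=
        le_min (le_max_left _ _) (min_le_left _ _)
      refine le_trans ?_ ((add_le_add_left hvu _).trans hstep)
      have hγ := mul_pos hslope (hD.step.pos (j + 1))
      rw [hv, min_add]
      exact min_le_min (by linarith) (by linarith)
    · exact (min_le_right _ _).trans ((by nlinarith [hD.step.le_half (j + 1)] : _ ≤ (0 : ℝ)).trans
        (Real.rpow_nonneg (hD.driftAvg_nonneg _ _) _))

theorem le_g (hP : D.GrowthPhase S f₀ c₀ n k) (hD : D.IsRun) (hnk : n ≤ k)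
    (htime : 3 / 2 + (2 ^ D.η - 1)⁻¹ ≤ cumStep D.γ k - cumStep D.γ n) {x : Euc d} (hx : x ∈ S) :
    (D.growthConst f₀ c₀ / 2) ^ D.η⁻¹ / 4 ≤ D.g k x := by
  have ha := hP.growthConst_pos
  have hp := two_rpow_sub_one_pos hD.η_pos
  have hp' := inv_pos.2 hp
  have hmin := hP.min_le_driftAvg_rpow hD hnk le_rfl hx
  rw [min_eq_left] at hmin
  · have havg := (Real.rpow_inv_le_iff_of_pos (half_pos ha).le (hD.driftAvg_nonneg k x)
      hD.η_pos).2 hmin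
    linarith [hP.driftAvg_div_four_le k hnk x hx
      (hP.floor_le_driftAvg hD hnk le_rfl (by linarith) hx)]
  · calc D.growthConst f₀ c₀ / 2
        = (2 ^ D.η - 1) * (D.growthConst f₀ c₀ / 2) * (2 ^ D.η - 1)⁻¹ := by field_simp
      _ ≤ _ := by gcongr; linarith

end GrowthPhase

theorem Regular.exists_growth (hD : D.Regular) {x₀ : Euc d} {ρ f₀ : ℝ} (hρ : 0 < ρ) (hf₀ : 0 < f₀)
    (hf : ∀ y ∈ ball x₀ ρ, f₀ ≤ D.f y) : ∃ s > 0, ∃ τ > 0, ∃ n₀ : ℕ, ∀ n, n₀ ≤ n → ∀ k, n ≤ k →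
      (∀ j, n ≤ j → j < k → D.Untruncated j ∧ 0 < D.mass j ∧ D.mass j ≤ 4) →
      τ ≤ cumStep D.γ k - cumStep D.γ n → ∀ x ∈ ball x₀ ρ, s ≤ D.g k x := by
  obtain ⟨c₀, hc₀, hball⟩ := hD.kernel.exists_le_setIntegral_ball_kb hρ
  have hc := hD.c_pos
  have hp := two_rpow_sub_one_pos hD.η_pos
  have hfloor : 0 < D.floorConst f₀ c₀ := by unfold floorConst; positivity
  have ha : 0 < D.growthConst f₀ c₀ := by unfold growthConst; positivity
  obtain ⟨n₀, hn₀⟩ := eventually_atTop.1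
    ((hD.eventually_driftAvg_div_four_le_g hfloor (‖x₀‖ + ρ)).and
      (hD.eventually_step_succ_mul_le (D.growthConst f₀ c₀) hfloor))
  refine ⟨(D.growthConst f₀ c₀ / 2) ^ D.η⁻¹ / 4, by positivity, 3 / 2 + (2 ^ D.η - 1)⁻¹,
    by positivity, n₀, fun n hn k hnk htame htime x hx => ?_⟩
  have hphase : D.GrowthPhase (ball x₀ ρ) f₀ c₀ n k :=
    { measurableSet := measurableSet_ball
      f₀_pos := hf₀
      c₀_pos := hc₀
      le_f := hf
      le_setIntegral := fun b hb hb1 x hx => hball b hb hb1 x₀ x hx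
      untruncated := fun j hnj hjk => (htame j hnj hjk).1
      mass_pos := fun j hnj hjk => (htame j hnj hjk).2.1
      mass_le := fun j hnj hjk => (htame j hnj hjk).2.2
      driftAvg_div_four_le := fun j hnj x hx => (hn₀ j (hn.trans hnj)).1 x
        (norm_lt_of_mem_ball hx).le
      step_mul_le := fun j hnj => (hn₀ j (hn.trans hnj)).2 }
  exact hphase.le_g hD.toIsRun hnk htime hx

end MidasPath
/-! ### Truncation ends -/

theorem IsStepSeq.le_mul_exp_of_cumStep_sub_le {γ : ℕ → ℝ} (hγ : IsStepSeq γ) {n j : ℕ}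
    (hnj : n ≤ j) {τ : ℝ} (hτ : cumStep γ j - cumStep γ n ≤ τ) :
    γ n ≤ γ j * Real.exp (2 * τ) := by
  have hexp : decay γ n * Real.exp (-(2 * τ)) ≤ decay γ j :=
    (mul_le_mul_of_nonneg_left (Real.exp_le_exp.2 (by linarith)) (hγ.decay_pos n).le).trans
      (hγ.mul_exp_le_decay hnj)
  rw [Real.exp_neg, ← div_eq_mul_inv, div_le_iff₀ (Real.exp_pos _)] at hexp
  refine le_of_mul_le_mul_right ?_ (hγ.decay_pos j)
  calc γ n * decay γ j ≤ γ j * decay γ n := hγ.step_mul_decay_le hnj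
    _ ≤ γ j * (decay γ j * Real.exp (2 * τ)) :=
        mul_le_mul_of_nonneg_left hexp (hγ.pos j).le
    _ = γ j * Real.exp (2 * τ) * decay γ j := by ring

namespace MidasPath
variable {d : ℕ} {D : MidasPath d}

theorem IsRun.exists_ball_le_f (hD : D.IsRun) :
    ∃ x₀ : Euc d, ∃ ρ > 0, ∃ f₀ > 0, ∀ y ∈ ball x₀ ρ, f₀ ≤ D.f y := by
  obtain ⟨x₀, hx₀⟩ : ∃ x₀, 0 < D.f x₀ := by
    by_contra! hle
    have hone := hD.f_integral
    simp only [fun x => (hle x).antisymm (hD.f_nonneg x), integral_zero] at hone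
    exact zero_ne_one hone
  obtain ⟨ρ, hρ, hball⟩ := Metric.eventually_nhds_iff_ball.1
    (hD.f_cont.continuousAt.eventually (lt_mem_nhds (half_lt_self hx₀)))
  exact ⟨x₀, ρ, hρ, D.f x₀ / 2, half_pos hx₀, fun y hy => (hball y hy).le⟩

theorem Regular.eventually_truncMass_le (hD : D.Regular) {ε : ℝ} (hε : 0 < ε) :
    ∀ᶠ n in atTop, D.truncMass n ≤ 1 + ε := by
  obtain ⟨e, he, hnoise⟩ := hD.noise (min (ε / 2) 1) (by positivity) (min_le_right _ _) 0
  filter_upwards [hnoise, hD.eventually_error_le he (half_pos hε)] with n hn hen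
  linarith [hn.2, min_le_left (ε / 2) 1]

theorem IsRun.mul_volume_sub_le_mass (hD : D.IsRun) {n : ℕ} {ζ s : ℝ}
    (hg : ∀ x, -(ζ * D.q0 x) ≤ D.g n x) (hζ : 0 ≤ ζ) {x₀ : Euc d} {ρ : ℝ}
    (hs : ∀ x ∈ ball x₀ ρ, s ≤ D.g n x) :
    s * (volume : Measure (Euc d)).real (ball x₀ ρ) - ζ ≤ D.mass n := by
  have hind : Integrable ((ball x₀ ρ).indicator fun _ => s) :=
    (integrable_indicator_iff measurableSet_ball).2 (integrableOn_const measure_ball_lt_top.ne)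
  have hq0 : Integrable fun x => ζ * D.q0 x := hD.q0_int.const_mul _
  calc s * (volume : Measure (Euc d)).real (ball x₀ ρ) - ζ
      = ∫ x, ((ball x₀ ρ).indicator (fun _ => s) x - ζ * D.q0 x) := by
        rw [integral_sub hind hq0, integral_indicator measurableSet_ball, setIntegral_const,
          smul_eq_mul, integral_const_mul, hD.q0_integral, mul_one, mul_comm]
    _ ≤ D.mass n := integral_mono (hind.sub hq0) (hD.integrable_g n) fun x => by
        by_cases hx : x ∈ ball x₀ ρ
        · simp only [Set.indicator_of_mem hx]
          linarith [hs x hx, mul_nonneg hζ (hD.q0_nonneg x)]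
        · simp only [Set.indicator_of_notMem hx]
          linarith [hg x]

theorem Regular.frequently_mass_le_two (hD : D.Regular) {T : ℕ} (hT : 0 < D.mass T) :
    ∃ᶠ n in atTop, D.mass n ≤ 2 := by
  intro hlarge
  obtain ⟨C, -, hC⟩ := hD.exists_neg_decay_mul_q0_le hT
  obtain ⟨m, hm⟩ := eventually_atTop.1 ((eventually_ge_atTop T).and
    (hlarge.and (hD.eventually_mul_decay_le_lam (2 * C))))
  have hU : ∀ k, m ≤ k → D.Untruncated k := fun k hk => by
    obtain ⟨hTk, hmass, hdecay⟩ := hm k hk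
    refine hD.untruncated_of_neg_decay_mul_q0_le (hD.mass_pos_of_le hT hTk) (hC k hTk) ?_
    nlinarith [hD.lam_pos k]
  obtain ⟨k, hk, hmk, htrunc⟩ := (((hD.step.tendsto_decay_div_mul m
    (D.mass m - D.truncMass m)).eventually_lt_const (show (0 : ℝ) < 1 / 4 by norm_num)).and
    ((eventually_ge_atTop m).and
      (hD.eventually_truncMass_le (show (0 : ℝ) < 3 / 4 by norm_num)))).exists
  have hdiff := hD.mass_sub_truncMass_eq hmk fun j hj _ => hU j hj
  linarith [not_le.1 (hm k hmk).2.1]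

theorem Regular.exists_frequently_mul_b_pow_le_mass_and_le_two (hD : D.Regular) {T : ℕ}
    (hT : 0 < D.mass T) {δ : ℝ} (hδ : 0 < δ) (hfreq : ∃ᶠ n in atTop, δ * D.b n ^ d ≤ D.mass n) :
    ∃ δ' > 0, ∃ᶠ n in atTop, δ' * D.b n ^ d ≤ D.mass n ∧ D.mass n ≤ 2 := by
  refine ⟨min δ 1, lt_min hδ one_pos, ?_⟩
  rw [frequently_atTop] at hfreq ⊢
  intro N
  obtain ⟨n, hn, hmass⟩ := hfreq N
  by_contra! hjump
  have hlarge : ∀ k, n ≤ k → 2 < D.mass k := by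
    intro k hk
    induction k, hk using Nat.le_induction with
    | base =>
      exact hjump n hn ((mul_le_mul_of_nonneg_right (min_le_left δ 1)
        (pow_pos (hD.b_pos n) d).le).trans hmass)
    | succ k hk ih =>
      refine hjump (k + 1) (by omega) ?_
      have hb : D.b (k + 1) ^ d ≤ 1 := pow_le_one₀ (hD.b_pos _).le (hD.b_le_one _)
      have hweight := mul_nonneg (hD.step.pos (k + 1)).le (hD.weight_nonneg k)
      rw [hD.mass_succ]
      nlinarith [hD.step.le_half (k + 1), pow_pos (hD.b_pos (k + 1)) d, min_le_right δ 1]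
  obtain ⟨k, hk, hk2⟩ := (frequently_atTop.1 (hD.frequently_mass_le_two hT)) n
  exact (hlarge k hk).not_ge hk2

/-- Over a bounded time `τ` the mass cannot lose more than a constant factor, and the initial lower
bound `δ * b n ^ d` beats `decay n` by the rate assumption. -/
theorem IsRun.two_mul_decay_le_of_cumStep_sub_le (hD : D.IsRun) {n j : ℕ} (hnj : n ≤ j) {C δ τ : ℝ}
    (hC : 0 ≤ C) (hδ : 0 < δ) (hmass : δ * D.b n ^ d ≤ D.mass n)
    (hτ : cumStep D.γ j - cumStep D.γ n ≤ τ)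
    (hstep : 2 * C * (D.γ 0)⁻¹ * Real.exp (2 * τ) / δ * D.γ j ≤ D.lam j * D.b j ^ d) :
    2 * C * decay D.γ j ≤ D.lam j * D.mass j := by
  have hlam := (hD.lam_pos j).le
  have hγ0 := hD.step.pos 0
  have hdecay := hD.step.decay_pos n
  have hratio := hD.step.decay_div_nonneg n j
  have hstart : 2 * C * decay D.γ n ≤ D.lam j * D.mass n :=
    calc 2 * C * decay D.γ n ≤ 2 * C * ((D.γ 0)⁻¹ * (D.γ j * Real.exp (2 * τ))) := by
          gcongr
          refine (hD.step.decay_le n).trans ?_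
          gcongr
          exact hD.step.le_mul_exp_of_cumStep_sub_le hnj hτ
      _ = δ * (2 * C * (D.γ 0)⁻¹ * Real.exp (2 * τ) / δ * D.γ j) := by field_simp
      _ ≤ δ * (D.lam j * D.b j ^ d) := by gcongr
      _ ≤ δ * (D.lam j * D.b n ^ d) := by
          gcongr
          · exact (hD.b_pos j).le
          · exact hD.b_anti hnj
      _ = D.lam j * (δ * D.b n ^ d) := by ring
      _ ≤ D.lam j * D.mass n := by gcongr
  calc 2 * C * decay D.γ j = decay D.γ j / decay D.γ n * (2 * C * decay D.γ n) := by field_simp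
    _ ≤ decay D.γ j / decay D.γ n * (D.lam j * D.mass n) := by gcongr
    _ = D.lam j * (decay D.γ j / decay D.γ n * D.mass n) := by ring
    _ ≤ D.lam j * D.mass j := by gcongr; exact hD.decay_div_mul_mass_le hnj

theorem IsRun.mass_le_four (hD : D.IsRun) {n j : ℕ} (hnj : n ≤ j) (hmass : D.mass n ≤ 2)
    (htrunc : D.truncMass j ≤ 1 + 3 / 4) (hU : ∀ k, n ≤ k → k < j → D.Untruncated k) :
    D.mass j ≤ 4 := by
  nlinarith [hD.mass_sub_truncMass_eq hnj hU, hD.truncMass_nonneg n, hD.step.decay_div_le_one hnj,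
    hD.step.decay_div_nonneg n j]

theorem Regular.exists_forall_untruncated (hD : D.Regular) {T : ℕ} (hT : 0 < D.mass T) {δ : ℝ}
    (hδ : 0 < δ) (hfreq : ∃ᶠ n in atTop, δ * D.b n ^ d ≤ D.mass n) :
    ∃ N, T ≤ N ∧ ∀ n, N ≤ n → D.Untruncated n ∧ 0 < D.mass n ∧ D.mass n ≤ 4 := by
  obtain ⟨x₀, ρ, hρ, f₀, hf₀, hf⟩ := hD.exists_ball_le_f
  obtain ⟨s, hs, τ, -, n₀, hgrowth⟩ := hD.exists_growth hρ hf₀ hf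
  obtain ⟨C, hC0, hC⟩ := hD.exists_neg_decay_mul_q0_le hT
  set V := s * (volume : Measure (Euc d)).real (ball x₀ ρ)
  have hV : 0 < V := mul_pos hs
    (ENNReal.toReal_pos (measure_ball_pos _ _ hρ).ne' measure_ball_lt_top.ne)
  obtain ⟨δ', hδ', hfreq'⟩ := hD.exists_frequently_mul_b_pow_le_mass_and_le_two hT hδ hfreq
  have hlim : Tendsto (fun n => C * decay D.γ n) atTop (𝓝 0) := by
    simpa only [mul_zero] using hD.step.tendsto_decay.const_mul C
  obtain ⟨m, hm⟩ := eventually_atTop.1 ((hD.eventually_truncMass_le (ε := 3 / 4) (by norm_num)).and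
    ((hD.eventually_mul_step_le (2 * C * (D.γ 0)⁻¹ * Real.exp (2 * τ) / δ')).and
      ((hlim.eventually_lt_const (half_pos hV)).and
        (hD.eventually_mul_decay_le_lam (2 * C / (V / 2))))))
  obtain ⟨n, ⟨hmass, hmass2⟩, hn₀, hmn, hTn⟩ := (hfreq'.and_eventually
    ((eventually_ge_atTop n₀).and ((eventually_ge_atTop m).and (eventually_ge_atTop T)))).exists
  refine ⟨n, hTn, fun j => ?_⟩
  induction j using Nat.strong_induction_on with | _ j ih =>
  intro hj
  have hTj := hTn.trans hj
  have hpos := hD.mass_pos_of_le hT hTj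
  obtain ⟨htrunc, hstep, hdecayV, hdecay⟩ := hm j (hmn.trans hj)
  refine ⟨hD.untruncated_of_neg_decay_mul_q0_le hpos (hC j hTj) ?_, hpos,
    hD.mass_le_four hj hmass2 htrunc fun i hni hij => (ih i hij hni).1⟩
  rcases le_total τ (cumStep D.γ j - cumStep D.γ n) with htime | htime
  · have hmassV := hD.mul_volume_sub_le_mass (hC j hTj)
      (mul_nonneg hC0 (hD.step.decay_pos j).le)
      (hgrowth n hn₀ j hj (fun i hni hij => ih i hij hni) htime)
    have hlam := (hD.lam_pos j).le
    calc 2 * C * decay D.γ j = 2 * C / (V / 2) * decay D.γ j * (V / 2) := by field_simp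
      _ ≤ D.lam j * (V / 2) := by gcongr
      _ ≤ D.lam j * D.mass j := by gcongr; linarith
  · exact hD.two_mul_decay_le_of_cumStep_sub_le hj hC0 hδ' hmass htime hstep

end MidasPath

/-! ### Local lower bounds -/

theorem eventually_atTop_prod_nhds_iff {E : Type*} [PseudoMetricSpace E] {x₀ : E}
    {P : ℕ × E → Prop} : (∀ᶠ p in atTop ×ˢ 𝓝 x₀, P p) ↔
      ∃ ρ > 0, ∀ᶠ n in atTop, ∀ x ∈ ball x₀ ρ, P (n, x) := by
  refine (atTop.basis_sets.prod nhds_basis_ball).eventually_iff.trans ⟨?_, ?_⟩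
  · rintro ⟨⟨s, ρ⟩, ⟨hs, hρ⟩, h⟩
    exact ⟨ρ, hρ, mem_of_superset hs fun n hn x hx => h (Set.mk_mem_prod hn hx)⟩
  · rintro ⟨ρ, hρ, h⟩
    exact ⟨⟨_, ρ⟩, ⟨h, hρ⟩, fun _ hp => hp.1 _ hp.2⟩

theorem exists_eventually_forall_mem_ball {E : Type*} [PseudoMetricSpace E] {x₀ : E}
    {P : ℕ × E → Prop} (h : ∀ᶠ p in atTop ×ˢ 𝓝 x₀, P p) :
    ∃ ρ > 0, ∀ᶠ p in atTop ×ˢ 𝓝 x₀, ∀ y ∈ ball p.2 ρ, P (p.1, y) := by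
  obtain ⟨ρ, hρ, hP⟩ := eventually_atTop_prod_nhds_iff.1 h
  refine ⟨ρ / 2, half_pos hρ, eventually_atTop_prod_nhds_iff.2 ⟨ρ / 2, half_pos hρ, ?_⟩⟩
  filter_upwards [hP] with n hn x hx y hy
  exact hn y (ball_subset_ball' (by linarith [mem_ball.1 hx]) hy)

namespace IsStepSeq
variable {γ : ℕ → ℝ} {α : Type*} {l : Filter α} {u : ℕ → α → ℝ} {a ε : ℝ}

theorem eventually_sub_le_runningAvg (hγ : IsStepSeq γ) (hu0 : ∀ n x, 0 ≤ u n x)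
    (hu : ∀ᶠ p in atTop ×ˢ l, a ≤ u p.1 p.2) (hε : 0 < ε) :
    ∀ᶠ p in atTop ×ˢ l, a - ε ≤ runningAvg γ (fun k => u k p.2) p.1 := by
  obtain ⟨large, hlarge, near, hnear, h⟩ := eventually_prod_iff.1 hu
  obtain ⟨m, hm⟩ := eventually_atTop.1 hlarge
  filter_upwards [((hγ.tendsto_decay_div_mul m a).eventually_lt_const hε).prod_inl l,
    (eventually_ge_atTop m).prod_inl l, hnear.prod_inr atTop] with ⟨n, x⟩ hn hmn hx
  have havg := hγ.le_runningAvg hmn fun k hk _ => h (hm k hk) hx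
  have hstart := mul_nonneg (hγ.decay_div_nonneg m n)
    (hγ.runningAvg_nonneg m fun k _ => hu0 k x)
  dsimp only at hn ⊢
  linarith

theorem eventually_runningAvg_le_add (hγ : IsStepSeq γ)
    (hu0 : ∀ n, ∃ B, ∀ x, runningAvg γ (fun k => u k x) n ≤ B)
    (hu : ∀ᶠ p in atTop ×ˢ l, u p.1 p.2 ≤ a) (hε : 0 < ε) :
    ∀ᶠ p in atTop ×ˢ l, runningAvg γ (fun k => u k p.2) p.1 ≤ a + ε := by
  obtain ⟨large, hlarge, near, hnear, h⟩ := eventually_prod_iff.1 hu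
  obtain ⟨m, hm⟩ := eventually_atTop.1 hlarge
  obtain ⟨B, hB⟩ := hu0 m
  filter_upwards [((hγ.tendsto_decay_div_mul m (B - a)).eventually_lt_const hε).prod_inl l,
    (eventually_ge_atTop m).prod_inl l, hnear.prod_inr atTop] with ⟨n, x⟩ hn hmn hx
  have havg := hγ.runningAvg_le hmn fun k hk _ => h (hm k hk) hx
  have hstart := mul_le_mul_of_nonneg_left (hB x) (hγ.decay_div_nonneg m n)
  dsimp only at hn ⊢
  linarith

end IsStepSeq

section rpow
variable {η a b : ℝ}

theorem lt_rpow_mul_rpow_one_sub (hη : 0 < η) (ha : 0 < a) (hab : a < b) :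
    a < b ^ η * a ^ (1 - η) :=
  calc a = a ^ η * a ^ (1 - η) := by rw [← Real.rpow_add ha, add_sub_cancel, Real.rpow_one]
    _ < b ^ η * a ^ (1 - η) := by gcongr

theorem rpow_mul_rpow_one_sub_lt (hη : 0 < η) (hb : 0 ≤ b) (hba : b < a) :
    b ^ η * a ^ (1 - η) < a := by
  have ha := hb.trans_lt hba
  calc b ^ η * a ^ (1 - η) < a ^ η * a ^ (1 - η) := by gcongr
    _ = a := by rw [← Real.rpow_add ha, add_sub_cancel, Real.rpow_one]

theorem tendsto_rpow_mul_rpow_one_sub (η b : ℝ) (ha : 0 < a) :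
    Tendsto (fun t => b ^ η * t ^ (1 - η)) (𝓝 a) (𝓝 (b ^ η * a ^ (1 - η))) :=
  (Real.continuousAt_rpow_const a (1 - η) (Or.inl ha.ne')).tendsto.const_mul _

theorem exists_of_forall_lt_rpow_mul_rpow {P : ℝ → Prop} {F m : ℝ} (hη : 0 < η)
    (hmono : ∀ s t, 0 < s → s ≤ t → P t → P s) (hP : ∃ t, 0 < t ∧ P t)
    (hstep : ∀ s t f₀, 0 < s → P s → 0 < f₀ → f₀ < F → 0 < t → t < f₀ ^ η * s ^ (1 - η) → P t)
    (hm : 0 < m) (hmF : m < F) : P m := by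
  by_contra hPm
  obtain ⟨t₀, ht₀, hPt₀⟩ := hP
  have hub : ∀ t ∈ {t | 0 < t ∧ P t}, t ≤ m := fun t ht =>
    le_of_not_gt fun hmt => hPm (hmono m t hm hmt.le ht.2)
  have hbdd : BddAbove {t | 0 < t ∧ P t} := ⟨m, hub⟩
  set s := sSup {t | 0 < t ∧ P t}
  have hne : {t | 0 < t ∧ P t}.Nonempty := ⟨t₀, ht₀, hPt₀⟩
  have hs : 0 < s := ht₀.trans_le (le_csSup hbdd ⟨ht₀, hPt₀⟩)
  obtain ⟨f₀, hsf₀, hf₀F⟩ :=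
    exists_between ((csSup_le hne hub).trans_lt hmF : s < F)
  have hev := (tendsto_rpow_mul_rpow_one_sub η f₀ hs).eventually_const_lt
    (lt_rpow_mul_rpow_one_sub hη hs hsf₀)
  obtain ⟨t, ⟨hst, ht⟩, hts⟩ := ((hev.and (eventually_gt_nhds hs)).filter_mono
    nhdsWithin_le_nhds |>.and (self_mem_nhdsWithin : Set.Iio s ∈ 𝓝[<] s)).exists
  obtain ⟨t₁, ⟨-, hPt₁⟩, htt₁⟩ := exists_lt_of_lt_csSup hne hts
  obtain ⟨t', hst', ht'⟩ := exists_between hst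
  have hPt' := hstep t t' f₀ ht (hmono t t₁ ht htt₁.le hPt₁) (hs.trans hsf₀) hf₀F
    (hs.trans hst') ht'
  exact hst'.not_ge (le_csSup hbdd ⟨hs.trans hst', hPt'⟩)

end rpow

/-- A regular path on which truncation has stopped for good and whose estimates have mass in
`(0, 4]` and an asymptotically negligible negative part. -/
structure MidasPath.Settled {d : ℕ} (D : MidasPath d) : Prop extends regular : D.Regular where
  untruncated : ∀ᶠ n in atTop, D.Untruncated n
  mass_pos : ∀ᶠ n in atTop, 0 < D.mass n
  mass_le : ∀ᶠ n in atTop, D.mass n ≤ 4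
  neg_le_g : ∃ C, 0 ≤ C ∧ ∀ᶠ n in atTop, ∀ x, -(C * decay D.γ n * D.q0 x) ≤ D.g n x

namespace MidasPath.Settled
variable {d : ℕ} {D : MidasPath d} {x₀ : Euc d} {ε m s f₀ : ℝ}

theorem eventually_mass_le (hD : D.Settled) (hε : 0 < ε) :
    ∀ᶠ n in atTop, D.mass n ≤ 1 + ε := by
  obtain ⟨N, hN⟩ := eventually_atTop.1 hD.untruncated
  filter_upwards [(hD.step.tendsto_decay_div_mul N (D.mass N - D.truncMass N)).eventually_lt_const
    (half_pos hε), hD.eventually_truncMass_le (half_pos hε), eventually_ge_atTop N]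
    with n hstart htrunc hn
  linarith [hD.mass_sub_truncMass_eq hn fun j hj _ => hN j hj]

theorem eventually_g_near_driftAvg (hD : D.Settled) (hε : 0 < ε) (hε1 : ε ≤ 1) (x₀ : Euc d) :
    ∀ᶠ p in atTop ×ˢ 𝓝 x₀, (1 - ε) * D.driftAvg p.1 p.2 - ε ≤ D.g p.1 p.2 ∧
      D.g p.1 p.2 ≤ (1 + ε) * D.driftAvg p.1 p.2 + ε := by
  obtain ⟨N, hN⟩ := eventually_atTop.1 hD.untruncated
  obtain ⟨e, he, hnoise⟩ := hD.noise ε hε hε1 (‖x₀‖ + 1)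
  obtain ⟨A, -, hA⟩ := (hD.isTame_g N).exists_abs_le
  obtain ⟨B, -, hB⟩ := (hD.isTame_truncEst N).exists_abs_le
  refine eventually_atTop_prod_nhds_iff.2 ⟨1, one_pos, ?_⟩
  filter_upwards [(hD.step.tendsto_decay_div_mul N (A + B)).eventually_lt_const (half_pos hε),
    hD.eventually_error_le he (half_pos hε), eventually_ge_atTop N, hnoise]
    with n hstart hen hn hnoise x hx
  have hdiff : |D.g n x - D.truncEst n x| ≤ ε / 2 := by
    rw [hD.g_sub_truncEst_eq hn (fun j hj _ => hN j hj) x, abs_mul,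
      abs_of_nonneg (hD.step.decay_div_nonneg N n)]
    refine (mul_le_mul_of_nonneg_left ?_ (hD.step.decay_div_nonneg N n)).trans hstart.le
    exact (abs_sub _ _).trans (add_le_add (hA x) (hB x))
  obtain ⟨hlower, hupper⟩ := hnoise.1 x (norm_lt_of_mem_ball hx).le
  constructor <;> linarith [abs_le.1 hdiff]

theorem exists_pos_le_g (hD : D.Settled) (hf : 0 < D.f x₀) :
    ∃ s, 0 < s ∧ ∀ᶠ p in atTop ×ˢ 𝓝 x₀, s ≤ D.g p.1 p.2 := by
  obtain ⟨ρ, hρ, hfρ⟩ := eventually_nhds_iff_ball.1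
    (hD.f_cont.continuousAt.eventually_const_lt (half_lt_self hf))
  obtain ⟨s, hs, τ, -, n₀, hgrowth⟩ :=
    hD.exists_growth hρ (half_pos hf) fun y hy => (hfρ y hy).le
  obtain ⟨N, hN⟩ := eventually_atTop.1 (hD.untruncated.and (hD.mass_pos.and hD.mass_le))
  refine ⟨s, hs, eventually_atTop_prod_nhds_iff.2 ⟨ρ, hρ, ?_⟩⟩
  filter_upwards [(tendsto_atTop_add_const_right _ (-cumStep D.γ (max n₀ N))
    hD.step.tendsto_cumStep).eventually_ge_atTop τ, eventually_ge_atTop (max n₀ N)] with n hτ hn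
  exact hgrowth (max n₀ N) (le_max_left _ _) n hn
    (fun j hj _ => hN j ((le_max_right _ _).trans hj)) (by linarith)

theorem eventually_le_q (hD : D.Settled) (hm : 0 ≤ m) (hε : 0 < ε)
    (hg : ∀ᶠ p in atTop ×ˢ 𝓝 x₀, m ≤ D.g p.1 p.2) :
    ∀ᶠ p in atTop ×ˢ 𝓝 x₀, (1 - ε) / (1 + ε) * m ≤ D.q p.1 p.2 := by
  filter_upwards [hg, (hD.eventually_mass_le hε).prod_inl _, hD.mass_pos.prod_inl _,
    (hD.lam_lim.eventually_lt_const hε).prod_inl _] with ⟨n, x⟩ hg hmass hpos hlam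
  dsimp only at hg hmass hpos hlam ⊢
  have hratio : m / (1 + ε) ≤ D.g n x / D.mass n := div_le_div₀ (hm.trans hg) hg hpos hmass
  have := hD.lam_le n
  have := mul_nonneg (hD.lam_pos n).le (hD.q0_nonneg x)
  calc (1 - ε) / (1 + ε) * m = (1 - ε) * (m / (1 + ε)) := by ring
    _ ≤ (1 - D.lam n) * (D.g n x / D.mass n) := by gcongr; linarith
    _ ≤ D.q n x := by rw [hD.q_eq]; linarith

theorem eventually_le_drift (hD : D.Settled) (hf₀ : 0 ≤ f₀) (hf : f₀ < D.f x₀) (hs : 0 ≤ s)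
    (hε : 0 < ε) (hq : ∀ᶠ p in atTop ×ˢ 𝓝 x₀, s ≤ D.q p.1 p.2) :
    ∀ᶠ p in atTop ×ˢ 𝓝 x₀, (1 - ε) * (f₀ ^ D.η * s ^ (1 - D.η)) ≤ D.drift p.1 p.2 := by
  obtain ⟨ρ, hρ, hfq⟩ := exists_eventually_forall_mem_ball
    (hq.and ((hD.f_cont.continuousAt.eventually_const_lt hf).prod_inr _))
  have hkernel := hD.kernel.eventually_le_setIntegral_ball_kb (b := fun n => D.b (n + 1))
    (fun n => hD.b_pos _) (hD.b_lim.comp (tendsto_add_atTop_nat 1)) hρ hε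
  filter_upwards [hfq, hkernel.prod_inl _, hD.untruncated.prod_inl _] with ⟨n, x⟩ hfq hkernel hU
  exact hD.le_drift_of_untruncated hU measurableSet_ball hf₀ hs (fun y hy => (hfq y hy).2.le)
    (fun y hy => (hfq y hy).1) (hkernel x)

theorem eventually_le_g_of_lt (hD : D.Settled) {t : ℝ} (hm : 0 ≤ m)
    (hg : ∀ᶠ p in atTop ×ˢ 𝓝 x₀, m ≤ D.g p.1 p.2) (hf₀ : 0 ≤ f₀) (hf : f₀ < D.f x₀)
    (ht : t < f₀ ^ D.η * m ^ (1 - D.η)) : ∀ᶠ p in atTop ×ˢ 𝓝 x₀, t ≤ D.g p.1 p.2 := by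
  have hη1 := hD.η_lt_one
  set loss : ℝ → ℝ := fun ε =>
    (1 - ε) * ((1 - ε) * (f₀ ^ D.η * ((1 - ε) / (1 + ε) * m) ^ (1 - D.η)) - ε) - ε with hloss
  have hcont : ContinuousAt loss 0 := by
    have : ContinuousAt (fun ε : ℝ => ((1 - ε) / (1 + ε) * m) ^ (1 - D.η)) 0 :=
      ((ContinuousAt.div (by fun_prop) (by fun_prop) (by norm_num)).mul
        continuousAt_const).rpow_const (Or.inr (by linarith))
    fun_prop
  have hloss0 : t < loss 0 := by simpa [hloss] using ht
  obtain ⟨ε, ⟨hεt, hε1⟩, hε⟩ := ((hcont.eventually_const_lt hloss0).and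
    (eventually_lt_nhds one_pos) |>.filter_mono nhdsWithin_le_nhds |>.and
      (self_mem_nhdsWithin : Set.Ioi (0 : ℝ) ∈ 𝓝[>] 0)).exists
  have hε0 : 0 < ε := hε
  have h1ε : 0 ≤ 1 - ε := by linarith
  filter_upwards [hD.eventually_g_near_driftAvg hε0 hε1.le x₀,
    hD.step.eventually_sub_le_runningAvg hD.drift_nonneg (hD.eventually_le_drift hf₀ hf
      (by positivity) hε0 (hD.eventually_le_q hm hε0 hg)) hε0] with ⟨n, x⟩ hnear havg
  have := mul_le_mul_of_nonneg_left havg h1ε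
  exact hεt.le.trans ((sub_le_sub_right this ε).trans hnear.1)

theorem eventually_le_g (hD : D.Settled) (hm : 0 < m) (hmf : m < D.f x₀) :
    ∀ᶠ p in atTop ×ˢ 𝓝 x₀, m ≤ D.g p.1 p.2 :=
  exists_of_forall_lt_rpow_mul_rpow (P := fun m => ∀ᶠ p in atTop ×ˢ 𝓝 x₀, m ≤ D.g p.1 p.2)
    hD.η_pos (fun _ _ _ hst hg => hg.mono fun _ => hst.trans)
    (hD.exists_pos_le_g (hm.trans hmf))
    (fun _ _ _ hs hg hf₀ hf _ ht => hD.eventually_le_g_of_lt hs.le hg hf₀.le hf ht) hm hmf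

theorem ofReal_f_le_liminf (hD : D.Settled) {C : ℝ} (hC : 0 ≤ C) (x : Euc d) :
    ENNReal.ofReal (D.f x)
      ≤ liminf (fun n => ENNReal.ofReal (D.g n x + C * decay D.γ n * D.q0 x)) atTop := by
  refine le_of_forall_lt_imp_le_of_dense fun a ha => ?_
  have ha_top : a ≠ ⊤ := ha.ne_top
  rw [ENNReal.lt_ofReal_iff_toReal_lt ha_top] at ha
  obtain ⟨m, ham, hmf⟩ := exists_between ha
  refine le_liminf_of_le (by isBoundedDefault) ?_
  filter_upwards [(hD.eventually_le_g (ENNReal.toReal_nonneg.trans_lt ham) hmf).curry]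
    with n hn
  have hcorr : 0 ≤ C * decay D.γ n * D.q0 x :=
    mul_nonneg (mul_nonneg hC (hD.step.decay_pos n).le) (hD.q0_nonneg x)
  rw [← ENNReal.ofReal_toReal ha_top]
  exact ENNReal.ofReal_le_ofReal (by linarith [hn.self_of_nhds])

theorem eventually_one_sub_le_mass (hD : D.Settled) (hε : 0 < ε) :
    ∀ᶠ n in atTop, 1 - ε ≤ D.mass n := by
  obtain ⟨C, hC0, hC⟩ := hD.neg_le_g
  set u : ℕ → Euc d → ℝ := fun n x => D.g n x + C * decay D.γ n * D.q0 x
  have hmeas : ∀ n, Measurable fun x => ENNReal.ofReal (u n x) := fun n =>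
    ((hD.continuous_g n).measurable.add (hD.q0_cont.measurable.const_mul _)).ennreal_ofReal
  have hfatou : (1 : ℝ≥0∞) ≤ liminf (fun n => ∫⁻ x, ENNReal.ofReal (u n x)) atTop :=
    calc (1 : ℝ≥0∞) = ENNReal.ofReal (∫ x, D.f x) := by rw [hD.f_integral, ENNReal.ofReal_one]
      _ = ∫⁻ x, ENNReal.ofReal (D.f x) :=
          ofReal_integral_eq_lintegral_ofReal hD.f_int (Eventually.of_forall hD.f_nonneg)
      _ ≤ ∫⁻ x, liminf (fun n => ENNReal.ofReal (u n x)) atTop :=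
          lintegral_mono (hD.ofReal_f_le_liminf hC0)
      _ ≤ liminf (fun n => ∫⁻ x, ENNReal.ofReal (u n x)) atTop := lintegral_liminf_le hmeas
  have hlt : ENNReal.ofReal (1 - ε / 2) < liminf (fun n => ∫⁻ x, ENNReal.ofReal (u n x)) atTop := by
    refine lt_of_lt_of_le ?_ hfatou
    rw [← ENNReal.ofReal_one, ENNReal.ofReal_lt_ofReal_iff one_pos]
    linarith
  have hdecay : Tendsto (fun n => C * decay D.γ n) atTop (𝓝 0) := by
    simpa only [mul_zero] using hD.step.tendsto_decay.const_mul C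
  filter_upwards [eventually_lt_of_lt_liminf hlt, hC, hdecay.eventually_lt_const (half_pos hε)]
    with n hmass hneg hdecay
  have hq0 := hD.q0_int.const_mul (C * decay D.γ n)
  have hu : Integrable (u n) := (hD.integrable_g n).add hq0
  have hint : ∫ x, u n x = D.mass n + C * decay D.γ n := by
    rw [integral_add (hD.integrable_g n) hq0, integral_const_mul, hD.q0_integral, mul_one, mass]
  rw [← ofReal_integral_eq_lintegral_ofReal hu
    (Eventually.of_forall fun x => by simpa [u, neg_le_iff_add_nonneg] using hneg x), hint] at hmass
  linarith [(ENNReal.ofReal_lt_ofReal_iff'.1 hmass).1]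

end MidasPath.Settled

/-! ### Local upper bounds -/

section rpow
variable {η p s t : ℝ}

theorem rpow_neg_le_two_rpow_mul (hp : 0 ≤ p) (hs : 0 < s) (hst : s / 2 ≤ t) :
    t ^ (-p) ≤ 2 ^ p * s ^ (-p) :=
  calc t ^ (-p) ≤ (s / 2) ^ (-p) :=
        Real.rpow_le_rpow_of_nonpos (half_pos hs) hst (neg_nonpos.2 hp)
    _ = 2 ^ p * s ^ (-p) := by
        rw [Real.div_rpow hs.le two_pos.le, Real.rpow_neg two_pos.le, div_inv_eq_mul, mul_comm]

theorem le_mul_rpow_neg_of_forall_ball {E : Type*} [PseudoMetricSpace E] {x₀ x : E} {ρ S : ℝ}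
    {q h : E → ℝ} (hp : 0 ≤ p) (hq : ∀ y ∈ ball x₀ ρ, q y ≤ 4 * h y + 4)
    (hh : ∀ y ∈ ball x₀ ρ, h y ≤ S * (ρ - dist y x₀) ^ (-p)) (hx : x ∈ ball x₀ ρ)
    (hS : 1 ≤ S * (ρ - dist x x₀) ^ (-p)) :
    ∀ y ∈ ball x ((ρ - dist x x₀) / 2), q y ≤ 8 * 2 ^ p * (S * (ρ - dist x x₀) ^ (-p)) := by
  intro y hy
  set s := ρ - dist x x₀
  have hs : 0 < s := sub_pos.2 hx
  have hS0 : 0 ≤ S := nonneg_of_mul_nonneg_left (zero_le_one.trans hS) (Real.rpow_pos_of_pos hs _)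
  have hyx : s / 2 ≤ ρ - dist y x₀ := by linarith [dist_triangle y x x₀, mem_ball.1 hy]
  have hyρ : y ∈ ball x₀ ρ := by rw [mem_ball]; linarith
  have hpow := mul_le_mul_of_nonneg_left (rpow_neg_le_two_rpow_mul hp hs hyx) hS0
  have h2p : 1 * 1 ≤ 2 ^ p * (S * s ^ (-p)) :=
    mul_le_mul (Real.one_le_rpow one_le_two hp) hS zero_le_one (by positivity)
  linarith [hq y hyρ, hh y hyρ, mul_left_comm S (2 ^ p) (s ^ (-p))]

theorem inv_pow_le_rpow_neg {d : ℕ} {b r : ℝ} (hb : 0 < b) (hs : 0 < s) (hr : 0 < r)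
    (h : s ^ (d + r) ≤ b ^ r) : (b ^ d)⁻¹ ≤ s ^ (-(d * (d + r) / r)) := by
  rw [Real.rpow_neg hs.le]
  refine inv_anti₀ (by positivity) ?_
  calc s ^ (d * (d + r) / r) = (s ^ (d + r)) ^ (d / r) := by rw [← Real.rpow_mul hs.le]; ring_nf
    _ ≤ (b ^ r) ^ (d / r) := by gcongr
    _ = b ^ d := by
        rw [← Real.rpow_mul hb.le, mul_div_cancel₀ _ hr.ne', Real.rpow_natCast]

theorem exists_forall_mul_rpow_add_le (hη : 0 < η) {C : ℝ} (hC : 0 ≤ C) (C' : ℝ) :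
    ∃ U : ℝ, 1 ≤ U ∧ ∀ u, U ≤ u → C * u ^ (1 - η) + C' ≤ u := by
  refine ⟨max 1 (max ((2 * C) ^ η⁻¹) (2 * C')), le_max_left _ _, fun u hu => ?_⟩
  obtain ⟨hu1, huC, huC'⟩ : 1 ≤ u ∧ (2 * C) ^ η⁻¹ ≤ u ∧ 2 * C' ≤ u := by
    simpa only [max_le_iff] using hu
  have hu0 : 0 < u := one_pos.trans_le hu1
  have hpow : 2 * C ≤ u ^ η := (Real.rpow_inv_le_iff_of_pos (by positivity) hu0.le hη).1 huC
  have hsplit : u ^ η * u ^ (1 - η) = u := by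
    rw [← Real.rpow_add hu0, add_sub_cancel, Real.rpow_one]
  linarith [mul_le_mul_of_nonneg_right hpow (Real.rpow_nonneg hu0.le (1 - η))]

theorem exists_of_forall_rpow_mul_rpow_lt {P : ℝ → Prop} {F m : ℝ} (hη : 0 < η)
    (hmono : ∀ s t, s ≤ t → P s → P t) (hP : ∃ t, P t) (hF : 0 ≤ F)
    (hstep : ∀ s t f₁, 0 < s → P s → F < f₁ → f₁ ^ η * s ^ (1 - η) < t → P t)
    (hFm : F < m) : P m := by
  by_contra hPm
  have hlb : ∀ t ∈ {t | P t}, m ≤ t := fun t ht => le_of_not_gt fun htm => hPm (hmono t m htm.le ht)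
  have hbdd : BddBelow {t | P t} := ⟨m, hlb⟩
  set s := sInf {t | P t}
  have hFs : F < s := hFm.trans_le (le_csInf hP hlb)
  obtain ⟨f₁, hFf₁, hf₁s⟩ := exists_between hFs
  have hs : 0 < s := hF.trans_lt hFs
  have hev := (tendsto_rpow_mul_rpow_one_sub η f₁ hs).eventually_lt_const
    (rpow_mul_rpow_one_sub_lt hη (hF.trans hFf₁.le) hf₁s)
  obtain ⟨t, hts, hst⟩ := ((hev.filter_mono nhdsWithin_le_nhds).and
    (self_mem_nhdsWithin : Set.Ioi s ∈ 𝓝[>] s)).exists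
  obtain ⟨t₁, hPt₁, htt₁⟩ := exists_lt_of_csInf_lt hP hst
  obtain ⟨t', ht', hts'⟩ := exists_between hts
  have hPt' := hstep t t' f₁ (hs.trans hst) (hmono t₁ t htt₁.le hPt₁) hFf₁ ht'
  exact hts'.not_ge (csInf_le hbdd hPt')

end rpow

namespace MidasPath.IsRun
variable {d : ℕ} {D : MidasPath d}

theorem drift_le_of_forall_ball (hD : D.IsRun) {k : ℕ} {x : Euc d} {ρ F Q : ℝ} (hρ : 0 < ρ)
    (hF : ∀ y ∈ ball x ρ, D.f y ≤ F) (hQ : ∀ y ∈ ball x ρ, D.q k y ≤ Q) :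
    D.drift k x ≤ F ^ D.η * Q ^ (1 - D.η)
      + D.CK * D.b (k + 1) ^ D.rK * ρ ^ (-((d : ℝ) + D.rK)) := by
  have hb := hD.b_pos (k + 1)
  have hη := hD.η_pos.le
  have hη1 := sub_nonneg.2 hD.η_lt_one.le
  have hC := hD.kernel.const_pos
  have hF0 := (hD.f_nonneg x).trans (hF x (mem_ball_self hρ))
  have hQ0 := (hD.q_nonneg k x).trans (hQ x (mem_ball_self hρ))
  set A := F ^ D.η * Q ^ (1 - D.η) with hA
  set far := D.CK * D.b (k + 1) ^ D.rK * ρ ^ (-((d : ℝ) + D.rK))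
  have hA0 : 0 ≤ A := by positivity
  have hfar0 : 0 ≤ far := by positivity
  have hpoint : ∀ y, D.truncW k y * D.q k y * kb D.K (D.b (k + 1)) (x - y)
      ≤ A * kb D.K (D.b (k + 1)) (x - y) + D.truncW k y * D.q k y * far := fun y => by
    have hkb := hD.kernel.kb_nonneg hb (x - y)
    have hw := hD.truncW_mul_nonneg k y
    by_cases hy : y ∈ ball x ρ
    · have hwA : D.truncW k y * D.q k y ≤ A := by
        have := hD.f_nonneg y
        have := hD.q_nonneg k y
        have := hF y hy
        have := hQ y hy
        exact (hD.truncW_mul_le k y).trans (by rw [hA]; gcongr)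
      linarith [mul_le_mul_of_nonneg_right hwA hkb, mul_nonneg hw hfar0]
    · rw [mem_ball', not_lt, dist_eq_norm] at hy
      linarith [mul_le_mul_of_nonneg_left (hD.kernel.kb_le_of_le_norm hb hρ hy) hw,
        mul_nonneg hA0 hkb]
  have hkernel := (hD.kernel.integrable_kb_sub hb x).const_mul A
  have htail := (hD.integrable_truncW_mul k).mul_const far
  calc D.drift k x
      ≤ ∫ y, (A * kb D.K (D.b (k + 1)) (x - y) + D.truncW k y * D.q k y * far) :=
        integral_mono (hD.integrable_drift k x) (hkernel.add htail) hpoint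
    _ = A + (∫ y, D.truncW k y * D.q k y) * far := by
        rw [integral_add hkernel htail, integral_const_mul, integral_mul_const,
          hD.kernel.integral_kb_sub_left hb, mul_one]
    _ ≤ A + far :=
        add_le_add_right (mul_le_of_le_one_left hfar0 (hD.integral_truncW_mul_le_one k)) A

theorem q_le_of_g_le (hD : D.IsRun) {k : ℕ} {ζ M ε : ℝ} {y : Euc d} (hζ : 0 < ζ)
    (hmass : ζ ≤ D.mass k) (hM : 0 ≤ M) (hg : D.g k y ≤ M) (hlam : D.lam k * D.Bq ≤ ε) :
    D.q k y ≤ M / ζ + ε := by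
  have hratio : D.g k y / D.mass k ≤ M / ζ := div_le_div₀ hM hg hζ hmass
  have := hD.lam_pos k
  have := hD.lam_le k
  calc D.q k y = (1 - D.lam k) * (D.g k y / D.mass k) + D.lam k * D.q0 y := hD.q_eq k y
    _ ≤ (1 - D.lam k) * (M / ζ) + D.lam k * D.Bq := by
        gcongr
        · linarith
        · exact hD.q0_le y
    _ ≤ M / ζ + ε := add_le_add (mul_le_of_le_one_left (by positivity) (by linarith)) hlam

theorem eventually_lam_mul_le (hD : D.IsRun) {ε : ℝ} (hε : 0 < ε) :
    ∀ᶠ k in atTop, D.lam k * D.Bq ≤ ε := by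
  have hlim : Tendsto (fun k => D.lam k * D.Bq) atTop (𝓝 0) := by
    simpa only [zero_mul] using hD.lam_lim.mul_const D.Bq
  exact hlim.eventually_le_const hε

theorem exists_drift_le_of_q_le (hD : D.IsRun) {a : ℝ} (ha : 0 ≤ a) :
    ∃ U : ℝ, 1 ≤ U ∧ ∀ n x s u, 0 < s → U ≤ u → D.b (n + 1) ^ D.rK ≤ s ^ ((d : ℝ) + D.rK) →
      (∀ y ∈ ball x (s / 2), D.q n y ≤ a * u) → D.drift n x ≤ u := by
  have hBf := hD.Bf_pos
  have hC := hD.kernel.const_pos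
  have hr := hD.kernel.exponent_pos
  obtain ⟨U, hU1, hU⟩ := exists_forall_mul_rpow_add_le hD.η_pos
    (C := D.Bf ^ D.η * a ^ (1 - D.η)) (by positivity) (D.CK * 2 ^ ((d : ℝ) + D.rK))
  refine ⟨U, hU1, fun n x s u hs hu hbs hq => ?_⟩
  have htail : D.CK * D.b (n + 1) ^ D.rK * (s / 2) ^ (-((d : ℝ) + D.rK))
      ≤ D.CK * 2 ^ ((d : ℝ) + D.rK) :=
    calc D.CK * D.b (n + 1) ^ D.rK * (s / 2) ^ (-((d : ℝ) + D.rK))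
        ≤ D.CK * s ^ ((d : ℝ) + D.rK) * (2 ^ ((d : ℝ) + D.rK) * s ^ (-((d : ℝ) + D.rK))) := by
          gcongr
          exact rpow_neg_le_two_rpow_mul (by positivity) hs le_rfl
      _ = D.CK * 2 ^ ((d : ℝ) + D.rK) := by
          rw [Real.rpow_neg hs.le]
          have : s ^ ((d : ℝ) + D.rK) ≠ 0 := (Real.rpow_pos_of_pos hs _).ne'
          field_simp
  calc D.drift n x ≤ D.Bf ^ D.η * (a * u) ^ (1 - D.η)
        + D.CK * D.b (n + 1) ^ D.rK * (s / 2) ^ (-((d : ℝ) + D.rK)) :=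
        hD.drift_le_of_forall_ball (half_pos hs) (fun y _ => hD.f_le y) hq
    _ ≤ D.Bf ^ D.η * a ^ (1 - D.η) * u ^ (1 - D.η) + D.CK * 2 ^ ((d : ℝ) + D.rK) := by
        rw [Real.mul_rpow ha (by linarith), ← mul_assoc]
        gcongr
    _ ≤ u := hU u hu

theorem const_le_mul_inv_b_pow (hD : D.IsRun) (n : ℕ) : D.CK ≤ D.CK * (D.b n ^ d)⁻¹ :=
  le_mul_of_one_le_right hD.kernel.const_pos.le
    ((one_le_inv₀ (pow_pos (hD.b_pos n) d)).2 (pow_le_one₀ (hD.b_pos n).le (hD.b_le_one n)))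

/-- The bound blows up at the boundary of the ball, so that it survives the recursion although
nothing is known about `q` outside. -/
theorem exists_driftAvg_le_of_q_le (hD : D.IsRun) {x₀ : Euc d} {ρ : ℝ} (hρ : ρ ≤ 1) {N : ℕ}
    (hq : ∀ n, N ≤ n → ∀ x ∈ ball x₀ ρ, D.q n x ≤ 4 * D.driftAvg n x + 4) :
    ∃ S p : ℝ, 0 < S ∧ 0 ≤ p ∧ ∀ n, N ≤ n → ∀ x ∈ ball x₀ ρ,
      D.driftAvg n x ≤ S * (ρ - dist x x₀) ^ (-p) := by
  have hr := hD.kernel.exponent_pos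
  set p : ℝ := d * (d + D.rK) / D.rK
  have hp0 : 0 ≤ p := by positivity
  obtain ⟨U, hU1, hU⟩ := hD.exists_drift_le_of_q_le (a := 8 * 2 ^ p) (by positivity)
  set S := max U (D.CK * (D.b N ^ d)⁻¹)
  have hUS : U ≤ S := le_max_left _ _
  have hS0 : 0 < S := by linarith
  have hbarrier : ∀ x ∈ ball x₀ ρ, 1 ≤ (ρ - dist x x₀) ^ (-p) := fun x hx =>
    Real.one_le_rpow_of_pos_of_le_one_of_nonpos (sub_pos.2 hx)
      (by linarith [dist_nonneg (x := x) (y := x₀)]) (neg_nonpos.2 hp0)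
  refine ⟨S, p, hS0, hp0, fun n hn => ?_⟩
  induction n, hn using Nat.le_induction with
  | base =>
    exact fun x hx => (hD.driftAvg_le N x).trans
      ((le_max_right _ _).trans (le_mul_of_one_le_right hS0.le (hbarrier x hx)))
  | succ n hn ih =>
    intro x hx
    set s := ρ - dist x x₀
    have hs0 : 0 < s := sub_pos.2 hx
    set u := S * s ^ (-p)
    have hSu : S ≤ u := le_mul_of_one_le_right hS0.le (hbarrier x hx)
    rcases le_or_gt (s ^ ((d : ℝ) + D.rK)) (D.b (n + 1) ^ D.rK) with hsb | hbs
    · calc D.driftAvg (n + 1) x ≤ D.CK * (D.b (n + 1) ^ d)⁻¹ := hD.driftAvg_le _ x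
        _ ≤ S * s ^ (-p) := by
          have := hD.b_pos (n + 1)
          gcongr
          · exact (hD.const_le_mul_inv_b_pow N).trans (le_max_right _ _)
          · exact inv_pow_le_rpow_neg (hD.b_pos _) hs0 hr hsb
    · have hqu : ∀ y ∈ ball x (s / 2), D.q n y ≤ 8 * 2 ^ p * u :=
        le_mul_rpow_neg_of_forall_ball hp0 (hq n hn) ih hx (by linarith)
      rw [driftAvg_succ]
      have := hD.step.pos (n + 1)
      have := hD.step.one_sub_pos (n + 1)
      calc (1 - D.γ (n + 1)) * D.driftAvg n x + D.γ (n + 1) * D.drift n x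
          ≤ (1 - D.γ (n + 1)) * u + D.γ (n + 1) * u := by
            gcongr
            · exact ih x hx
            · exact hU n x s u hs0 (hUS.trans hSu) hbs.le hqu
        _ = u := by ring

end MidasPath.IsRun

namespace MidasPath.Settled
variable {d : ℕ} {D : MidasPath d} {x₀ : Euc d} {ε m f₁ : ℝ}

theorem eventually_q_le_driftAvg (hD : D.Settled) (x₀ : Euc d) :
    ∀ᶠ p in atTop ×ˢ 𝓝 x₀, D.q p.1 p.2 ≤ 4 * D.driftAvg p.1 p.2 + 4 := by
  filter_upwards [hD.eventually_g_near_driftAvg one_pos le_rfl x₀,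
    (hD.eventually_one_sub_le_mass (half_pos one_pos)).prod_inl _,
    (hD.eventually_lam_mul_le one_pos).prod_inl _] with ⟨n, x⟩ hg hmass hlam
  have := hD.driftAvg_nonneg n x
  have := hD.q_le_of_g_le (M := 2 * D.driftAvg n x + 1) (half_pos one_pos)
    (by linarith) (by linarith) (by linarith [hg.2]) hlam
  linarith

theorem exists_g_le (hD : D.Settled) (x₀ : Euc d) :
    ∃ m, ∀ᶠ p in atTop ×ˢ 𝓝 x₀, D.g p.1 p.2 ≤ m := by
  obtain ⟨ρ', hρ', hq⟩ := eventually_atTop_prod_nhds_iff.1 (hD.eventually_q_le_driftAvg x₀)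
  obtain ⟨N, hN⟩ := eventually_atTop.1 hq
  set ρ := min ρ' 1
  have hρ : 0 < ρ := lt_min hρ' one_pos
  obtain ⟨S, p, hS, hp, hbarrier⟩ := hD.exists_driftAvg_le_of_q_le (min_le_right ρ' 1)
    fun n hn x hx => hN n hn x (ball_subset_ball (min_le_left _ _) hx)
  have hball : ball x₀ (ρ / 2) ∈ 𝓝 x₀ := ball_mem_nhds _ (half_pos hρ)
  refine ⟨2 * (S * (ρ / 2) ^ (-p)) + 1, ?_⟩
  filter_upwards [hD.eventually_g_near_driftAvg one_pos le_rfl x₀,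
    (eventually_ge_atTop N).prod_mk hball] with ⟨n, x⟩ hg ⟨hn, hx⟩
  dsimp only at hg hn hx ⊢
  have hpow : (ρ - dist x x₀) ^ (-p) ≤ (ρ / 2) ^ (-p) :=
    Real.rpow_le_rpow_of_nonpos (half_pos hρ) (by linarith) (neg_nonpos.2 hp)
  linarith [hg.2, hbarrier n hn x (by rw [mem_ball]; linarith),
    mul_le_mul_of_nonneg_left hpow hS.le]

theorem eventually_q_le (hD : D.Settled) (hm : 0 ≤ m) (hε : 0 < ε)
    (hg : ∀ᶠ p in atTop ×ˢ 𝓝 x₀, D.g p.1 p.2 ≤ m) :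
    ∀ᶠ p in atTop ×ˢ 𝓝 x₀, D.q p.1 p.2 ≤ (1 + ε) * m + ε := by
  have hδ : 0 < 1 - (1 + ε)⁻¹ := sub_pos.2 (inv_lt_one_of_one_lt₀ (by linarith))
  filter_upwards [hg, (hD.eventually_one_sub_le_mass hδ).prod_inl _,
    (hD.eventually_lam_mul_le hε).prod_inl _] with ⟨n, x⟩ hg hmass hlam
  rw [mul_comm, ← div_inv_eq_mul]
  exact hD.q_le_of_g_le (by positivity) (by rwa [sub_sub_cancel] at hmass) hm hg hlam

theorem eventually_drift_le (hD : D.Settled) {Q : ℝ} (hf : D.f x₀ < f₁) (hε : 0 < ε)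
    (hq : ∀ᶠ p in atTop ×ˢ 𝓝 x₀, D.q p.1 p.2 ≤ Q) :
    ∀ᶠ p in atTop ×ˢ 𝓝 x₀, D.drift p.1 p.2 ≤ f₁ ^ D.η * Q ^ (1 - D.η) + ε := by
  obtain ⟨ρ, hρ, hfq⟩ := exists_eventually_forall_mem_ball
    (hq.and ((hD.f_cont.continuousAt.eventually_lt_const hf).prod_inr _))
  have hb : Tendsto (fun n => D.b (n + 1) ^ D.rK) atTop (𝓝 0) := by
    simpa only [Real.zero_rpow hD.kernel.exponent_pos.ne', Function.comp_def] using
      (hD.b_lim.comp (tendsto_add_atTop_nat 1)).rpow_const (Or.inr hD.kernel.exponent_pos.le)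
  have hfar : Tendsto (fun n => D.CK * D.b (n + 1) ^ D.rK * ρ ^ (-((d : ℝ) + D.rK)))
      atTop (𝓝 0) := by
    simpa only [mul_zero, zero_mul] using (hb.const_mul D.CK).mul_const _
  filter_upwards [hfq, (hfar.eventually_le_const hε).prod_inl _] with ⟨n, x⟩ hfq hfar
  exact (hD.drift_le_of_forall_ball hρ (fun y hy => (hfq y hy).2.le)
    fun y hy => (hfq y hy).1).trans (by gcongr)

theorem eventually_g_le_of_lt (hD : D.Settled) {t : ℝ} (hm : 0 ≤ m)
    (hg : ∀ᶠ p in atTop ×ˢ 𝓝 x₀, D.g p.1 p.2 ≤ m) (hf : D.f x₀ < f₁)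
    (ht : f₁ ^ D.η * m ^ (1 - D.η) < t) : ∀ᶠ p in atTop ×ˢ 𝓝 x₀, D.g p.1 p.2 ≤ t := by
  set gain : ℝ → ℝ := fun ε =>
    (1 + ε) * (f₁ ^ D.η * ((1 + ε) * m + ε) ^ (1 - D.η) + ε + ε) + ε with hgain
  have hcont : ContinuousAt gain 0 := by
    have : ContinuousAt (fun ε : ℝ => ((1 + ε) * m + ε) ^ (1 - D.η)) 0 :=
      ContinuousAt.rpow_const (by fun_prop) (Or.inr (sub_nonneg.2 hD.η_lt_one.le))
    fun_prop
  have hgain0 : gain 0 < t := by simpa [hgain] using ht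
  obtain ⟨ε, ⟨hεt, hε1⟩, hε⟩ := ((hcont.eventually_lt_const hgain0).and
    (eventually_lt_nhds one_pos) |>.filter_mono nhdsWithin_le_nhds |>.and
      (self_mem_nhdsWithin : Set.Ioi (0 : ℝ) ∈ 𝓝[>] 0)).exists
  have hε0 : 0 < ε := hε
  filter_upwards [hD.eventually_g_near_driftAvg hε0 hε1.le x₀,
    hD.step.eventually_runningAvg_le_add (fun n => ⟨_, hD.driftAvg_le n⟩)
      (hD.eventually_drift_le hf hε0 (hD.eventually_q_le hm hε0 hg)) hε0] with ⟨n, x⟩ hnear havg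
  have := mul_le_mul_of_nonneg_left havg (by linarith : 0 ≤ 1 + ε)
  exact hnear.2.trans ((add_le_add_left this ε).trans hεt.le)

theorem eventually_g_le (hD : D.Settled) (hfm : D.f x₀ < m) :
    ∀ᶠ p in atTop ×ˢ 𝓝 x₀, D.g p.1 p.2 ≤ m :=
  exists_of_forall_rpow_mul_rpow_lt (P := fun m => ∀ᶠ p in atTop ×ˢ 𝓝 x₀, D.g p.1 p.2 ≤ m)
    hD.η_pos (fun _ _ hst hg => hg.mono fun _ => ge_trans hst) (hD.exists_g_le x₀)
    (hD.f_nonneg x₀) (fun _ _ _ hs hg hf ht => hD.eventually_g_le_of_lt hs.le hg hf ht) hfm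

theorem upperConsistent (hD : D.Settled) : D.UpperConsistent := by
  intro A hA ε hε
  refine hA.induction_on (p := fun A => ∀ᶠ n in atTop, ∀ x ∈ A, D.g n x ≤ D.f x + ε)
    (Eventually.of_forall fun _ _ hx => hx.elim)
    (fun s t hst h => h.mono fun n hn x hx => hn x (hst hx))
    (fun s t hs ht => hs.mp (ht.mono fun n hnt hns x hx => hx.elim (hns x) (hnt x)))
    fun x₀ _ => ?_
  have hlocal : ∀ᶠ p in atTop ×ˢ 𝓝 x₀, D.g p.1 p.2 ≤ D.f p.2 + ε := by
    filter_upwards [hD.eventually_g_le (show D.f x₀ < D.f x₀ + ε / 2 by linarith),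
      (hD.f_cont.continuousAt.eventually_const_lt
        (show D.f x₀ - ε / 2 < D.f x₀ by linarith)).prod_inr _] with ⟨n, x⟩ hg hf
    dsimp only at hg hf ⊢
    linarith
  obtain ⟨ρ, hρ, h⟩ := eventually_atTop_prod_nhds_iff.1 hlocal
  exact ⟨ball x₀ ρ, nhdsWithin_le_nhds (ball_mem_nhds _ hρ), h⟩

end MidasPath.Settled

theorem MidasPath.Regular.upperConsistent {d : ℕ} {D : MidasPath d} (hD : D.Regular) :
    D.UpperConsistent := by
  by_cases hmass : ∀ n, D.mass n ≤ 0
  · exact hD.upperConsistent_of_mass_nonpos hmass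
  push Not at hmass
  obtain ⟨T, hT⟩ := hmass
  by_cases hlim : Tendsto (fun n => D.mass n / D.b n ^ d) atTop (𝓝 0)
  · exact hD.upperConsistent_of_tendsto_mass_div hT hlim
  obtain ⟨δ, hδ, hfreq⟩ := hD.exists_frequently_mul_b_pow_le_mass hT hlim
  obtain ⟨N, hTN, hN⟩ := hD.exists_forall_untruncated hT hδ hfreq
  obtain ⟨C, hC, hneg⟩ := hD.exists_neg_decay_mul_q0_le hT
  exact Settled.upperConsistent
    { hD with
      untruncated := eventually_atTop.2 ⟨N, fun n hn => (hN n hn).1⟩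
      mass_pos := eventually_atTop.2 ⟨N, fun n hn => (hN n hn).2.1⟩
      mass_le := eventually_atTop.2 ⟨N, fun n hn => (hN n hn).2.2⟩
      neg_le_g := ⟨C, hC, eventually_atTop.2 ⟨N, fun n hn => hneg n (hTN.trans hn)⟩⟩ }

/-! ### Adaptive sampling -/

section disintegration
variable {Ω Ω' E : Type*} [MeasurableSpace Ω] [MeasurableSpace Ω'] [TopologicalSpace E]
  [HasOuterApproxClosed E] [MeasurableSpace E] [BorelSpace E] {μ : Measure Ω} [IsFiniteMeasure μ]
  {ν : Measure E} [SFinite ν] {T : Ω → Ω'} {Y : Ω → E} {r : Ω' × E → ℝ≥0∞}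

theorem map_prodMk_eq_withDensity (hT : Measurable T) (hY : Measurable Y) (hr : Measurable r)
    (h : ∀ A : Set Ω', MeasurableSet A → ∀ φ : BoundedContinuousFunction E ℝ≥0,
      ∫⁻ ω in T ⁻¹' A, φ (Y ω) ∂μ = ∫⁻ ω in T ⁻¹' A, ∫⁻ y, r (T ω, y) * φ y ∂ν ∂μ) :
    μ.map (fun ω => (T ω, Y ω)) = ((μ.map T).prod ν).withDensity r := by
  have hTY : Measurable (fun ω => (T ω, Y ω)) := hT.prodMk hY
  refine Measure.ext_prod fun {A B} hA hB => ?_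
  have hAu : MeasurableSet (A ×ˢ (Set.univ : Set E)) := hA.prod .univ
  have hsection : ((μ.map fun ω => (T ω, Y ω)).restrict (A ×ˢ Set.univ)).map Prod.snd
      = ((((μ.map T).prod ν).withDensity r).restrict (A ×ˢ Set.univ)).map Prod.snd := by
    refine ext_of_forall_lintegral_eq_of_IsFiniteMeasure fun φ => ?_
    have hφ : Measurable (fun y => (φ y : ℝ≥0∞)) :=
      (ENNReal.continuous_coe.comp φ.continuous).measurable
    have hφ₂ : Measurable (fun p : Ω' × E => (φ p.2 : ℝ≥0∞)) := hφ.comp measurable_snd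
    rw [lintegral_map hφ measurable_snd, lintegral_map hφ measurable_snd,
      setLIntegral_map hAu hφ₂ hTY, restrict_withDensity hAu,
      lintegral_withDensity_eq_lintegral_mul _ hr hφ₂, ← Measure.prod_restrict,
      Measure.restrict_univ, lintegral_prod _ (hr.mul hφ₂).aemeasurable,
      setLIntegral_map hA (Measurable.lintegral_prod_right' (hr.mul hφ₂)) hT,
      Set.mk_preimage_prod, Set.preimage_univ, Set.inter_univ]
    exact h A hA φ
  have hrect : Prod.snd ⁻¹' B ∩ A ×ˢ (Set.univ : Set E) = A ×ˢ B := by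
    ext
    simp [and_comm]
  have hB_eq := congrArg (· B) hsection
  simpa only [Measure.map_apply measurable_snd hB, Measure.restrict_apply (measurable_snd hB),
    hrect] using hB_eq

theorem lintegral_prodMk_eq (hT : Measurable T) (hY : Measurable Y) (hr : Measurable r)
    (h : ∀ A : Set Ω', MeasurableSet A → ∀ φ : BoundedContinuousFunction E ℝ≥0,
      ∫⁻ ω in T ⁻¹' A, φ (Y ω) ∂μ = ∫⁻ ω in T ⁻¹' A, ∫⁻ y, r (T ω, y) * φ y ∂ν ∂μ)
    {G : Ω' × E → ℝ≥0∞} (hG : Measurable G) :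
    ∫⁻ ω, G (T ω, Y ω) ∂μ = ∫⁻ ω, ∫⁻ y, r (T ω, y) * G (T ω, y) ∂ν ∂μ := by
  rw [← lintegral_map hG (hT.prodMk hY), map_prodMk_eq_withDensity hT hY hr h,
    lintegral_withDensity_eq_lintegral_mul _ hr hG, lintegral_prod _ (hr.mul hG).aemeasurable,
    lintegral_map (Measurable.lintegral_prod_right' (hr.mul hG)) hT]
  rfl

end disintegration

section AdaptiveSampling
variable {Ω E : Type*}

/-- The sum of the values of a random field at the sampled points. -/
def sampleSum (X : ℕ → Ω → E) (Ψ : ℕ → Ω → E → ℝ) (n : ℕ) (ω : Ω) : ℝ :=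
  ∑ k ∈ Finset.range n, Ψ k ω (X (k + 1) ω)

theorem sampleSum_succ (X : ℕ → Ω → E) (Ψ : ℕ → Ω → E → ℝ) (n : ℕ) (ω : Ω) :
    sampleSum X Ψ (n + 1) ω = sampleSum X Ψ n ω + Ψ n ω (X (n + 1) ω) :=
  Finset.sum_range_succ _ n

variable {m0 : MeasurableSpace Ω} [MeasureSpace E]

/-- A random field whose `k`-th term is known at time `k`, jointly measurably in the sample and in
the point of `E`. -/
def IsAdaptedField (F : Filtration ℕ m0) (Ψ : ℕ → Ω → E → ℝ) : Prop :=
  ∀ k, Measurable[(F k).prod inferInstance] (Function.uncurry (Ψ k))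

/-- Points `X` drawn successively, `X (n + 1)` having conditional density `q n` given the past
`F n`. The conditional law is encoded by the disintegration formula `lintegral_eq`. -/
structure AdaptiveSampling (μ : Measure Ω) (F : Filtration ℕ m0) (X : ℕ → Ω → E)
    (q : ℕ → Ω → E → ℝ) : Prop where
  measurable_X : ∀ n, Measurable[F (n + 1)] (X (n + 1))
  adapted_q : IsAdaptedField F q
  q_nonneg : ∀ᵐ ω ∂μ, ∀ n x, 0 ≤ q n ω x
  q_integral : ∀ᵐ ω ∂μ, ∀ n, ∫ x, q n ω x = 1
  lintegral_eq : ∀ n (G : Ω × E → ℝ≥0∞), Measurable[(F n).prod inferInstance] G →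
    ∫⁻ ω, G (ω, X (n + 1) ω) ∂μ = ∫⁻ ω, (∫⁻ y, ENNReal.ofReal (q n ω y) * G (ω, y)) ∂μ

/-- The predictable compensator of `sampleSum`: the sum of the conditional expectations of its
terms. -/
noncomputable def compensator (q Ψ : ℕ → Ω → E → ℝ) (n : ℕ) (ω : Ω) : ℝ :=
  ∑ k ∈ Finset.range n, ∫ y, Ψ k ω y * q k ω y

theorem compensator_succ (q Ψ : ℕ → Ω → E → ℝ) (n : ℕ) (ω : Ω) :
    compensator q Ψ (n + 1) ω = compensator q Ψ n ω + ∫ y, Ψ n ω y * q n ω y :=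
  Finset.sum_range_succ _ n

theorem exp_mul_le_one_add {a M t : ℝ} (haM : |a| * M ≤ 1) (ht : 0 ≤ t) (htM : t ≤ M) :
    Real.exp (a * t) ≤ 1 + (a + a ^ 2 * M) * t := by
  have hat : |a * t| ≤ 1 := by
    rw [abs_mul, abs_of_nonneg ht]
    exact (mul_le_mul_of_nonneg_left htM (abs_nonneg a)).trans haM
  have htaylor := (abs_le.1 (Real.abs_exp_sub_one_sub_id_le hat)).2
  have hsq : (a * t) ^ 2 ≤ a ^ 2 * M * t := by
    rw [mul_pow, sq t, ← mul_assoc]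
    gcongr
  linarith

theorem lintegral_mul_exp_le {ψ p : E → ℝ} (hψ : Measurable ψ) (hp : ∀ y, 0 ≤ p y)
    (hp_integral : ∫ y, p y = 1) {a M : ℝ} (haM : |a| * M ≤ 1)
    (hψ_mem : ∀ y, ψ y ∈ Set.Icc 0 M) :
    ∫⁻ y, ENNReal.ofReal (p y) * ENNReal.ofReal (Real.exp (a * ψ y))
      ≤ ENNReal.ofReal (Real.exp ((a + a ^ 2 * M) * ∫ y, ψ y * p y)) := by
  have hp_int : Integrable p := integrable_of_integral_eq_one hp_integral
  have hψp : Integrable (fun y => (a + a ^ 2 * M) * (ψ y * p y)) :=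
    (hp_int.bdd_mul (c := M) hψ.aestronglyMeasurable (Eventually.of_forall fun y => by
      rw [Real.norm_of_nonneg (hψ_mem y).1]
      exact (hψ_mem y).2)).const_mul _
  have hexp (y : E) : p y * Real.exp (a * ψ y) ≤ p y + (a + a ^ 2 * M) * (ψ y * p y) := by
    have := mul_le_mul_of_nonneg_left (exp_mul_le_one_add haM (hψ_mem y).1 (hψ_mem y).2) (hp y)
    linarith
  calc ∫⁻ y, ENNReal.ofReal (p y) * ENNReal.ofReal (Real.exp (a * ψ y))
      ≤ ∫⁻ y, ENNReal.ofReal (p y + (a + a ^ 2 * M) * (ψ y * p y)) :=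
        lintegral_mono fun y => by
          rw [← ENNReal.ofReal_mul (hp y)]
          exact ENNReal.ofReal_le_ofReal (hexp y)
    _ = ENNReal.ofReal (1 + (a + a ^ 2 * M) * ∫ y, ψ y * p y) := by
        rw [← hp_integral, ← integral_const_mul, ← integral_add hp_int hψp]
        exact (ofReal_integral_eq_lintegral_ofReal (hp_int.add hψp) (Eventually.of_forall fun y =>
          (mul_nonneg (hp y) (Real.exp_pos _).le).trans (hexp y))).symm
    _ ≤ _ := by
        rw [add_comm]
        exact ENNReal.ofReal_le_ofReal (Real.add_one_le_exp _)

namespace AdaptiveSampling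
variable {μ : Measure Ω} {F : Filtration ℕ m0} {X : ℕ → Ω → E} {q Ψ : ℕ → Ω → E → ℝ}

theorem measurable_sampleSum (hS : AdaptiveSampling μ F X q) (hΨ : IsAdaptedField F Ψ) (n : ℕ) :
    Measurable[F n] (sampleSum X Ψ n) := by
  refine Finset.measurable_fun_sum _ fun k hk => ?_
  have hk : k + 1 ≤ n := Finset.mem_range.1 hk
  exact Measurable.mono (((hΨ k).mono
    (sup_le_sup (MeasurableSpace.comap_mono (F.mono k.le_succ)) le_rfl) le_rfl).comp
    (measurable_id.prodMk (hS.measurable_X k))) (F.mono hk) le_rfl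

variable [SFinite (volume : Measure E)]

theorem measurable_compensator (hS : AdaptiveSampling μ F X q) (hΨ : IsAdaptedField F Ψ)
    {m n : ℕ} (hnm : n ≤ m + 1) : Measurable[F m] (compensator q Ψ n) := by
  refine Finset.measurable_fun_sum _ fun k hk => ?_
  have h : StronglyMeasurable[F k] fun ω => ∫ y, Ψ k ω y * q k ω y :=
    @StronglyMeasurable.integral_prod_right' _ _ _ (F k) _ volume _ _ _ _
      (Measurable.mul (hΨ k) (hS.adapted_q k)).stronglyMeasurable
  have hkm : k ≤ m := Nat.le_of_lt_succ ((Finset.mem_range.1 hk).trans_le hnm)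
  exact h.measurable.mono (F.mono hkm) le_rfl

/-- The integrand is a supermartingale in `n`, started at `1`. -/
theorem lintegral_exp_sampleSum_le_one [IsProbabilityMeasure μ] (hS : AdaptiveSampling μ F X q)
    (hΨ : IsAdaptedField F Ψ) {a M : ℝ} (haM : |a| * M ≤ 1) (n : ℕ)
    (hΨ_mem : ∀ᵐ ω ∂μ, ∀ k < n, ∀ y, Ψ k ω y ∈ Set.Icc 0 M) :
    ∫⁻ ω, ENNReal.ofReal (Real.exp (a * sampleSum X Ψ n ω
      - (a + a ^ 2 * M) * compensator q Ψ n ω)) ∂μ ≤ 1 := by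
  induction n with
  | zero => simp [sampleSum, compensator]
  | succ n ih =>
    let past (ω : Ω) : ℝ := a * sampleSum X Ψ n ω - (a + a ^ 2 * M) * compensator q Ψ (n + 1) ω
    have hpast : Measurable[F n] past :=
      ((hS.measurable_sampleSum hΨ n).const_mul a).sub
        ((hS.measurable_compensator hΨ le_rfl).const_mul _)
    let G (p : Ω × E) : ℝ≥0∞ := ENNReal.ofReal (Real.exp (past p.1)) *
      ENNReal.ofReal (Real.exp (a * Ψ n p.1 p.2))
    have hG : Measurable[(F n).prod inferInstance] G :=
      (Real.measurable_exp.comp (hpast.comp measurable_fst)).ennreal_ofReal.mul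
        (Real.measurable_exp.comp (Measurable.const_mul (hΨ n) a)).ennreal_ofReal
    calc ∫⁻ ω, ENNReal.ofReal (Real.exp (a * sampleSum X Ψ (n + 1) ω
          - (a + a ^ 2 * M) * compensator q Ψ (n + 1) ω)) ∂μ
        = ∫⁻ ω, G (ω, X (n + 1) ω) ∂μ := lintegral_congr fun ω => by
          simp only [G, past, sampleSum_succ X]
          rw [← ENNReal.ofReal_mul (Real.exp_pos _).le, ← Real.exp_add]
          ring_nf
      _ = ∫⁻ ω, (∫⁻ y, ENNReal.ofReal (q n ω y) * G (ω, y)) ∂μ := hS.lintegral_eq n G hG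
      _ ≤ ∫⁻ ω, ENNReal.ofReal (Real.exp (a * sampleSum X Ψ n ω
          - (a + a ^ 2 * M) * compensator q Ψ n ω)) ∂μ := by
          refine lintegral_mono_ae ?_
          filter_upwards [hΨ_mem, hS.q_nonneg, hS.q_integral] with ω hΨω hq hq_integral
          simp_rw [G, mul_left_comm (ENNReal.ofReal (q n ω _))]
          rw [lintegral_const_mul' _ _ ENNReal.ofReal_ne_top]
          refine (mul_le_mul_right (lintegral_mul_exp_le (ψ := Ψ n ω)
            ((hΨ n).comp measurable_prodMk_left) (hq n) (hq_integral n) haM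
            (hΨω n n.lt_succ_self)) _).trans_eq ?_
          rw [← ENNReal.ofReal_mul (Real.exp_pos _).le, ← Real.exp_add]
          simp only [past, compensator_succ q]
          ring_nf
      _ ≤ 1 := ih (hΨ_mem.mono fun ω h k hk => h k (hk.trans n.lt_succ_self))

theorem measure_le_exponent_le [IsProbabilityMeasure μ] (hS : AdaptiveSampling μ F X q)
    (hΨ : IsAdaptedField F Ψ) {a M : ℝ} (haM : |a| * M ≤ 1) (n : ℕ)
    (hΨ_mem : ∀ᵐ ω ∂μ, ∀ k < n, ∀ y, Ψ k ω y ∈ Set.Icc 0 M) (s : ℝ) :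
    μ {ω | s ≤ a * sampleSum X Ψ n ω - (a + a ^ 2 * M) * compensator q Ψ n ω}
      ≤ ENNReal.ofReal (Real.exp (-s)) := by
  have hmeas : Measurable fun ω => ENNReal.ofReal (Real.exp (a * sampleSum X Ψ n ω
      - (a + a ^ 2 * M) * compensator q Ψ n ω)) :=
    (Real.measurable_exp.comp
      ((((hS.measurable_sampleSum hΨ n).const_mul a).sub
        ((hS.measurable_compensator hΨ n.le_succ).const_mul _)).mono
          (F.le n) le_rfl)).ennreal_ofReal
  calc μ {ω | s ≤ a * sampleSum X Ψ n ω - (a + a ^ 2 * M) * compensator q Ψ n ω}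
      ≤ μ {ω | ENNReal.ofReal (Real.exp s) ≤ ENNReal.ofReal (Real.exp (a * sampleSum X Ψ n ω
          - (a + a ^ 2 * M) * compensator q Ψ n ω))} :=
        measure_mono fun ω hω => ENNReal.ofReal_le_ofReal (Real.exp_le_exp.2 hω)
    _ ≤ 1 / ENNReal.ofReal (Real.exp s) :=
        (meas_ge_le_lintegral_div hmeas.aemeasurable (by simp [Real.exp_pos])
          ENNReal.ofReal_ne_top).trans
          (ENNReal.div_le_div_right (hS.lintegral_exp_sampleSum_le_one hΨ haM n hΨ_mem) _)
    _ = ENNReal.ofReal (Real.exp (-s)) := by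
        rw [Real.exp_neg, ENNReal.ofReal_inv_of_pos (Real.exp_pos s), one_div]

/-- A Bernstein-type inequality: the deviation is measured relative to the compensator, so that the
variance never appears. -/
theorem measure_sampleSum_notMem_Icc_le [IsProbabilityMeasure μ]
    (hS : AdaptiveSampling μ F X q) (hΨ : IsAdaptedField F Ψ) {M ε s : ℝ} (hM : 0 < M)
    (hε : 0 < ε) (hε₁ : ε ≤ 1) (n : ℕ)
    (hΨ_mem : ∀ᵐ ω ∂μ, ∀ k < n, ∀ y, Ψ k ω y ∈ Set.Icc 0 M) :
    μ {ω | sampleSum X Ψ n ω ∉ Set.Icc ((1 - ε) * compensator q Ψ n ω - s * M / ε)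
      ((1 + ε) * compensator q Ψ n ω + s * M / ε)}
      ≤ ENNReal.ofReal (2 * Real.exp (-s)) := by
  have habs : |ε / M| * M ≤ 1 := by
    rw [abs_of_pos (by positivity), div_mul_cancel₀ _ hM.ne']
    exact hε₁
  have hle {u : ℝ} (hu : s * M / ε < u) : s ≤ ε / M * u := by
    rw [div_lt_iff₀ hε] at hu
    rw [div_mul_eq_mul_div, le_div_iff₀ hM]
    linarith
  have hsub : {ω | sampleSum X Ψ n ω ∉ Set.Icc ((1 - ε) * compensator q Ψ n ω - s * M / ε)
      ((1 + ε) * compensator q Ψ n ω + s * M / ε)} ⊆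
      {ω | s ≤ -(ε / M) * sampleSum X Ψ n ω
        - (-(ε / M) + (-(ε / M)) ^ 2 * M) * compensator q Ψ n ω} ∪
      {ω | s ≤ ε / M * sampleSum X Ψ n ω - (ε / M + (ε / M) ^ 2 * M) * compensator q Ψ n ω} := by
    intro ω hω
    rw [Set.mem_ofPred_eq, Set.mem_Icc, not_and_or, not_le, not_le] at hω
    refine hω.imp (fun h => ?_) fun h => ?_ <;> rw [Set.mem_ofPred_eq]
    · refine (hle (u := (1 - ε) * compensator q Ψ n ω - sampleSum X Ψ n ω)
        (by linarith)).trans_eq ?_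
      field_simp
      ring
    · refine (hle (u := sampleSum X Ψ n ω - (1 + ε) * compensator q Ψ n ω)
        (by linarith)).trans_eq ?_
      field_simp
  refine (measure_mono hsub).trans ((measure_union_le _ _).trans ?_)
  rw [two_mul, ENNReal.ofReal_add (Real.exp_pos _).le (Real.exp_pos _).le]
  exact add_le_add (hS.measure_le_exponent_le hΨ (by rwa [abs_neg]) n hΨ_mem s)
    (hS.measure_le_exponent_le hΨ habs n hΨ_mem s)

end AdaptiveSampling

end AdaptiveSampling

/-! ### Noise of the truncated estimate -/

/-- The points of the grid of mesh `1 / N` in the cube `[-R, R] ^ d`. -/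
noncomputable def grid (d R N : ℕ) : Finset (Euc d) :=
  (Fintype.piFinset fun _ : Fin d => Finset.Icc (-(R * N : ℤ)) (R * N)).image
    fun k => WithLp.toLp 2 fun i => (k i : ℝ) / N

theorem card_grid_le (d R N : ℕ) : (grid d R N).card ≤ (2 * (R * N) + 1) ^ d := by
  refine Finset.card_image_le.trans_eq ?_
  rw [Fintype.card_piFinset_const, Int.card_Icc]
  congr 1
  lia

theorem card_grid_sq_le (d R : ℕ) {n : ℕ} (hn : 1 ≤ n) :
    ((grid d R (n ^ 2)).card : ℝ) ≤ (2 * R + 1) ^ d * (n : ℝ) ^ (2 * d) :=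
  calc ((grid d R (n ^ 2)).card : ℝ) ≤ (2 * (R * n ^ 2) + 1) ^ d :=
        mod_cast card_grid_le d R (n ^ 2)
    _ ≤ ((2 * R + 1) * (n : ℝ) ^ 2) ^ d := by
        gcongr
        linarith [one_le_pow₀ (n := 2) (Nat.one_le_cast (α := ℝ).2 hn)]
    _ = _ := by rw [mul_pow, ← pow_mul]

theorem norm_le_card_mul_of_forall_abs_le {d : ℕ} {x : Euc d} {C : ℝ} (hx : ∀ i, |x i| ≤ C) :
    ‖x‖ ≤ d * C :=
  calc ‖x‖ = ‖∑ i, x i • EuclideanSpace.basisFun (Fin d) ℝ i‖ :=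
        congrArg norm ((EuclideanSpace.basisFun (Fin d) ℝ).sum_repr x).symm
    _ ≤ ∑ _i : Fin d, C := norm_sum_le_of_le _ fun i _ => by
        rw [norm_smul, OrthonormalBasis.norm_eq_one, mul_one]
        exact hx i
    _ = d * C := by rw [Finset.sum_const, Finset.card_univ, Fintype.card_fin, nsmul_eq_mul]

theorem exists_mem_grid_norm_sub_le {d R N : ℕ} (hN : 0 < N) {x : Euc d} (hx : ‖x‖ ≤ R) :
    ∃ y ∈ grid d R N, ‖x - y‖ ≤ d / N := by
  have hN' : (0 : ℝ) < N := Nat.cast_pos.2 hN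
  refine ⟨_, Finset.mem_image_of_mem _ (a := fun i => ⌊x i * N⌋)
    (Fintype.mem_piFinset.2 fun i => Finset.mem_Icc.2 ?_), ?_⟩
  · have hxi := abs_le.1 ((PiLp.norm_apply_le x i).trans hx)
    rw [Int.le_floor, ← Int.cast_le (R := ℝ)]
    push_cast
    exact ⟨by nlinarith, (Int.floor_le _).trans (by nlinarith)⟩
  · refine (norm_le_card_mul_of_forall_abs_le fun i => ?_).trans_eq (mul_one_div _ _)
    have hfract : x i - ⌊x i * N⌋ / N = Int.fract (x i * N) / N := by
      rw [Int.fract]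
      field_simp
    rw [PiLp.sub_apply, hfract, abs_of_nonneg (div_nonneg (Int.fract_nonneg _) hN'.le)]
    exact div_le_div_of_nonneg_right (Int.fract_lt_one _).le hN'.le

section BorelCantelli
variable {Ω : Type*} {m0 : MeasurableSpace Ω} {μ : Measure Ω}

theorem ae_eventually_notMem_of_measure_le_inv_sq {B : ℕ → Set Ω} {C : ℝ}
    (hB : ∀ n : ℕ, 1 ≤ n → μ (B n) ≤ ENNReal.ofReal (C * ((n : ℝ) ^ 2)⁻¹)) :
    ∀ᵐ ω ∂μ, ∀ᶠ n in atTop, ω ∉ B n := by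
  have hsummable : Summable (fun n : ℕ => C * (((n + 1 : ℕ) : ℝ) ^ 2)⁻¹) :=
    Summable.mul_left _ ((summable_nat_add_iff (f := fun n : ℕ => ((n : ℝ) ^ 2)⁻¹) 1).2
      (Real.summable_nat_pow_inv.2 one_lt_two))
  have htsum : ∑' n, μ (B (n + 1)) ≠ ⊤ :=
    ne_top_of_le_ne_top hsummable.tsum_ofReal_ne_top
      (ENNReal.tsum_le_tsum fun n => hB (n + 1) n.succ_pos)
  filter_upwards [ae_eventually_notMem htsum] with ω hω
  rwa [← eventually_map (m := (· + 1)) (P := fun n => ω ∉ B n), map_add_atTop_eq_nat] at hω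

end BorelCantelli

namespace MidasParams
variable {d : ℕ} (S : MidasParams d)

/-- The upper bound of the truncated weights up to time `n`. -/
noncomputable def weightBound (n : ℕ) : ℝ := (2 / (S.c * S.lam n)) ^ S.η

/-- The upper bound of the contribution of a single sampled point to `truncEst n`. -/
noncomputable def incrementBound (n : ℕ) : ℝ :=
  S.γ n * (S.weightBound n * (max S.CK 1 * (S.b n ^ d)⁻¹))

/-- The Lipschitz constant of `truncEst n` and `driftAvg n`. -/
noncomputable def lipBound (n : ℕ) : ℝ := S.weightBound n * (S.L * (S.b n ^ (d + 1))⁻¹)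

/-- The additive error in the comparison of `truncEst n` with `driftAvg n`: the first term is the
deviation allowed by the tail bound at confidence `n ^ (-(2 * d + 2))`, the second one the cost of
passing from a grid of mesh `1 / n ^ 2` to the whole ball. -/
noncomputable def noiseError (ε : ℝ) (n : ℕ) : ℝ :=
  (2 * d + 2 : ℕ) * Real.log n * S.incrementBound n / ε
    + 3 * (S.lipBound n * (d / (n ^ 2 : ℕ)))

/-- The path followed by the random sequences `X`, `g`, `q` at the sample `ω`. -/
def path {Ω : Type*} (X : ℕ → Ω → Euc d) (g q : ℕ → Ω → Euc d → ℝ) (ω : Ω) : MidasPath d :=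
  { S with X := fun n => X n ω, g := fun n => g n ω, q := fun n => q n ω }

/-- A sequence of functions against which the empirical measure of the sample is tested; the bound
accommodates both the rescaled kernels and the constant `1`. -/
structure IsTestSequence (κ : ℕ → Euc d → ℝ) : Prop where
  measurable : ∀ k, Measurable (κ k)
  nonneg : ∀ k y, 0 ≤ κ k y
  le : ∀ k y, κ k y ≤ max S.CK 1 * (S.b (k + 1) ^ d)⁻¹

variable {S}

namespace Regular

theorem weightBound_pos (hS : S.Regular) (n : ℕ) : 0 < S.weightBound n :=
  Real.rpow_pos_of_pos (div_pos two_pos (mul_pos hS.c_pos (hS.lam_pos n))) _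

theorem weightBound_mono (hS : S.Regular) : Monotone S.weightBound := fun k n hkn =>
  Real.rpow_le_rpow (div_pos two_pos (mul_pos hS.c_pos (hS.lam_pos k))).le
    (div_le_div_of_nonneg_left two_pos.le (mul_pos hS.c_pos (hS.lam_pos n))
      (mul_le_mul_of_nonneg_left (hS.lam_anti hkn) hS.c_pos.le)) hS.η_pos.le

theorem truncWeight_le_weightBound (hS : S.Regular) {p : Euc d → ℝ} (hp : ∀ x, 0 ≤ p x) {k n : ℕ}
    (hkn : k ≤ n) (y : Euc d) : truncWeight S.η S.c (S.lam k) S.f p y ≤ S.weightBound n :=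
  (truncWeight_le hS.η_pos hS.f_nonneg hp hS.c_pos (hS.lam_pos k) y).trans
    (hS.weightBound_mono hkn)

theorem incrementBound_pos (hS : S.Regular) (n : ℕ) : 0 < S.incrementBound n :=
  mul_pos (hS.step.pos n) (mul_pos (hS.weightBound_pos n)
    (mul_pos (lt_max_of_lt_right one_pos) (inv_pos.2 (pow_pos (hS.b_pos n) d))))

theorem lipBound_nonneg (hS : S.Regular) (n : ℕ) : 0 ≤ S.lipBound n :=
  mul_nonneg (hS.weightBound_pos n).le
    (mul_nonneg S.L.2 (inv_nonneg.2 (pow_pos (hS.b_pos n) _).le))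

theorem inv_b_pow_le (hS : S.Regular) (m : ℕ) {k n : ℕ} (hkn : k ≤ n) :
    (S.b k ^ m)⁻¹ ≤ (S.b n ^ m)⁻¹ :=
  inv_anti₀ (pow_pos (hS.b_pos n) m) (pow_le_pow_left₀ (hS.b_pos n).le (hS.b_anti hkn) m)

theorem isTestSequence_kb (hS : S.Regular) (x : Euc d) :
    S.IsTestSequence fun k y => kb S.K (S.b (k + 1)) (x - y) where
  measurable _ := (hS.kernel.continuous_kb _).measurable.comp (measurable_const.sub measurable_id)
  nonneg _ _ := hS.kernel.kb_nonneg (hS.b_pos _) _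
  le _ _ := (hS.kernel.kb_le (hS.b_pos _) _).trans (mul_le_mul_of_nonneg_right (le_max_left _ _)
    (inv_nonneg.2 (pow_nonneg (hS.b_pos _).le _)))

theorem isTestSequence_one (hS : S.Regular) : S.IsTestSequence fun _ _ => 1 where
  measurable _ := measurable_const
  nonneg _ _ := zero_le_one
  le _ _ := one_le_mul_of_one_le_of_one_le (le_max_right _ _)
    ((one_le_inv₀ (pow_pos (hS.b_pos _) d)).2 (pow_le_one₀ (hS.b_pos _).le (hS.b_le_one _)))

theorem weightBound_div_rpow (hS : S.Regular) (n : ℕ) :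
    S.weightBound n / S.lam n ^ (1 - S.η) = (2 / S.c) ^ S.η / S.lam n := by
  have hlam : S.lam n ^ S.η * S.lam n ^ (1 - S.η) = S.lam n := by
    rw [← Real.rpow_add (hS.lam_pos n), add_sub_cancel, Real.rpow_one]
  rw [weightBound, ← div_div, Real.div_rpow (div_pos two_pos hS.c_pos).le (hS.lam_pos n).le,
    div_div, hlam]

theorem tendsto_inv_sq_div (hS : S.Regular) (hd : 1 ≤ d)
    (hinv : Tendsto (fun n : ℕ => (n : ℝ)⁻¹ / (S.lam n * S.b n ^ d)) atTop (𝓝 0)) :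
    Tendsto (fun n : ℕ => ((n : ℝ) ^ 2)⁻¹ / (S.lam n * S.b n ^ (d + 1))) atTop (𝓝 0) := by
  have hsq := hinv.pow 2
  rw [zero_pow two_ne_zero] at hsq
  refine squeeze_zero (fun n => ?_) (fun n => ?_) hsq <;>
    have hlam := hS.lam_pos n <;> have hb := hS.b_pos n
  · positivity
  · rw [div_pow, inv_pow, mul_pow, ← pow_mul]
    refine div_le_div_of_nonneg_left (by positivity) (by positivity)
      (mul_le_mul ?_ (pow_le_pow_of_le_one hb.le (hS.b_le_one n) (by lia)) (by positivity) hlam.le)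
    nlinarith [hS.lam_le n]

theorem tendsto_noiseError_div (hS : S.Regular) (hd : 1 ≤ d)
    (hlog : Tendsto (fun n : ℕ => S.γ n * Real.log n / (S.lam n * S.b n ^ d)) atTop (𝓝 0))
    (hinv : Tendsto (fun n : ℕ => (n : ℝ)⁻¹ / (S.lam n * S.b n ^ d)) atTop (𝓝 0)) (ε : ℝ) :
    Tendsto (fun n => S.noiseError ε n / S.lam n ^ (1 - S.η)) atTop (𝓝 0) := by
  have hsplit (n : ℕ) : S.noiseError ε n / S.lam n ^ (1 - S.η) =
      ((2 * d + 2 : ℕ) * (2 / S.c) ^ S.η * max S.CK 1 / ε) *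
        (S.γ n * Real.log n / (S.lam n * S.b n ^ d)) +
      (3 * (2 / S.c) ^ S.η * S.L * d) * (((n : ℝ) ^ 2)⁻¹ / (S.lam n * S.b n ^ (d + 1))) :=
    calc S.noiseError ε n / S.lam n ^ (1 - S.η)
        = (S.weightBound n / S.lam n ^ (1 - S.η)) *
          ((2 * d + 2 : ℕ) * Real.log n * (S.γ n * (max S.CK 1 * (S.b n ^ d)⁻¹)) / ε +
            3 * (S.L * (S.b n ^ (d + 1))⁻¹ * (d / (n : ℝ) ^ 2))) := by
          rw [noiseError, incrementBound, lipBound, Nat.cast_pow]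
          ring
      _ = _ := by
          rw [hS.weightBound_div_rpow, div_eq_mul_inv (S.γ n * Real.log n), mul_inv,
            div_eq_mul_inv _ (S.lam n * _), mul_inv]
          ring
  simp_rw [hsplit]
  simpa using (hlog.const_mul _).add
    ((hS.tendsto_inv_sq_div hd hinv).const_mul (3 * (2 / S.c) ^ S.η * S.L * d))

end Regular

end MidasParams

namespace MidasPath
variable {d : ℕ} (D : MidasPath d)

/-- The average of a test sequence over the sample, with the truncated weights. -/
noncomputable def truncAvg (κ : ℕ → Euc d → ℝ) (n : ℕ) : ℝ :=
  runningAvg D.γ (fun k => D.truncW k (D.X (k + 1)) * κ k (D.X (k + 1))) n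

/-- The predictable part of `truncAvg`. -/
noncomputable def truncAvgDrift (κ : ℕ → Euc d → ℝ) (n : ℕ) : ℝ :=
  runningAvg D.γ (fun k => ∫ y, D.truncW k y * D.q k y * κ k y) n

variable {D}

theorem truncAvg_one (n : ℕ) : D.truncAvg (fun _ _ => 1) n = D.truncMass n := by
  simp only [truncAvg, truncMass, mul_one]

namespace IsRun

theorem truncAvgDrift_one_le (hD : D.IsRun) (n : ℕ) : D.truncAvgDrift (fun _ _ => 1) n ≤ 1 :=
  hD.step.runningAvg_le_of_le n zero_le_one fun k _ => by
    simp only [mul_one]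
    exact hD.integral_truncW_mul_le_one k

theorem abs_truncW_mul_kb_sub_le (hD : D.IsRun) {k n : ℕ} (hkn : k < n) (x x' y : Euc d) :
    |D.truncW k y * kb D.K (D.b (k + 1)) (x - y) - D.truncW k y * kb D.K (D.b (k + 1)) (x' - y)|
      ≤ D.lipBound n * ‖x - x'‖ := by
  have hkb := hD.kernel.abs_kb_sub_kb_le (hD.b_pos (k + 1)) (x - y) (x' - y)
  rw [sub_sub_sub_cancel_right] at hkb
  have hb := hD.inv_b_pow_le (d + 1) (show k + 1 ≤ n from hkn)
  have hw := hD.truncWeight_le_weightBound (hD.q_nonneg k) hkn.le y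
  rw [← mul_sub, abs_mul, abs_of_nonneg (hD.truncW_nonneg k y), MidasParams.lipBound,
    mul_assoc]
  exact mul_le_mul hw (hkb.trans (by gcongr)) (abs_nonneg _) (hD.weightBound_pos n).le

theorem abs_truncEst_sub_le (hD : D.IsRun) (n : ℕ) (x x' : Euc d) :
    |D.truncEst n x - D.truncEst n x'| ≤ D.lipBound n * ‖x - x'‖ :=
  hD.step.abs_runningAvg_sub_le n (mul_nonneg (hD.lipBound_nonneg n) (norm_nonneg _))
    fun _ hk => hD.abs_truncW_mul_kb_sub_le hk x x' _

theorem abs_drift_sub_le (hD : D.IsRun) {k n : ℕ} (hkn : k < n) (x x' : Euc d) :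
    |D.drift k x - D.drift k x'| ≤ D.lipBound n * ‖x - x'‖ := by
  rw [drift, drift, ← integral_sub (hD.integrable_drift k x) (hD.integrable_drift k x'),
    ← Real.norm_eq_abs]
  calc _ ≤ ∫ y, D.q k y * (D.lipBound n * ‖x - x'‖) := by
        refine norm_integral_le_of_norm_le ((hD.integrable_q k).mul_const _)
          (Eventually.of_forall fun y => ?_)
        rw [Real.norm_eq_abs, mul_right_comm, mul_right_comm _ (D.q k y), ← sub_mul, abs_mul,
          abs_of_nonneg (hD.q_nonneg k y), mul_comm]
        exact mul_le_mul_of_nonneg_left (hD.abs_truncW_mul_kb_sub_le hkn x x' y)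
          (hD.q_nonneg k y)
    _ = D.lipBound n * ‖x - x'‖ := by rw [integral_mul_const, hD.q_integral, one_mul]

theorem abs_driftAvg_sub_le (hD : D.IsRun) (n : ℕ) (x x' : Euc d) :
    |D.driftAvg n x - D.driftAvg n x'| ≤ D.lipBound n * ‖x - x'‖ :=
  hD.step.abs_runningAvg_sub_le n (mul_nonneg (hD.lipBound_nonneg n) (norm_nonneg _))
    fun _ hk => hD.abs_drift_sub_le hk x x'

theorem truncEst_mem_Icc_of_norm_sub_le (hD : D.IsRun) {ε δ e : ℝ} (hε : 0 ≤ ε) (hε₁ : ε ≤ 1)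
    {n : ℕ} {x y : Euc d} (hxy : ‖x - y‖ ≤ δ)
    (hy : D.truncEst n y ∈
      Set.Icc ((1 - ε) * D.driftAvg n y - e) ((1 + ε) * D.driftAvg n y + e)) :
    D.truncEst n x ∈ Set.Icc ((1 - ε) * D.driftAvg n x - (e + 3 * (D.lipBound n * δ)))
      ((1 + ε) * D.driftAvg n x + (e + 3 * (D.lipBound n * δ))) := by
  have hlip := mul_le_mul_of_nonneg_left hxy (hD.lipBound_nonneg n)
  have hest := abs_le.1 ((hD.abs_truncEst_sub_le n x y).trans hlip)
  have hdrift := abs_le.1 ((hD.abs_driftAvg_sub_le n x y).trans hlip)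
  obtain ⟨hlower, hupper⟩ := hy
  constructor <;> nlinarith

end IsRun

end MidasPath

theorem measurable_uncurry_truncWeight {d : ℕ} {η c l : ℝ} {f : Euc d → ℝ} {Ω : Type*}
    [MeasurableSpace Ω] {q : Ω → Euc d → ℝ} (hf : Measurable f)
    (hq : Measurable (Function.uncurry q)) :
    Measurable (Function.uncurry fun ω => truncWeight η c l f (q ω)) :=
  Measurable.ite
    (measurableSet_le ((hf.comp measurable_snd).const_mul _) (hq.const_mul _))
    (((hf.comp measurable_snd).div hq).pow_const _) measurable_const

namespace MidasParams
variable {d : ℕ} (S : MidasParams d) {Ω : Type*} (X : ℕ → Ω → Euc d) (g q : ℕ → Ω → Euc d → ℝ)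
  {κ : ℕ → Euc d → ℝ} (ε : ℝ)

/-- The random field whose `sampleSum` is `truncAvg` up to the factor `decay S.γ n`. -/
noncomputable def testField (κ : ℕ → Euc d → ℝ) (k : ℕ) (ω : Ω) (y : Euc d) : ℝ :=
  S.γ (k + 1) / decay S.γ (k + 1) * (truncWeight S.η S.c (S.lam k) S.f (q k ω) y * κ k y)

/-- The event that `truncAvg` deviates from its predictable part by more than allowed in
`noiseError`, at one test sequence. -/
def deviationEvent (κ : ℕ → Euc d → ℝ) (n : ℕ) : Set Ω :=
  {ω | (S.path X g q ω).truncAvg κ n ∉ Set.Icc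
    ((1 - ε) * (S.path X g q ω).truncAvgDrift κ n
      - (2 * d + 2 : ℕ) * Real.log n * S.incrementBound n / ε)
    ((1 + ε) * (S.path X g q ω).truncAvgDrift κ n
      + (2 * d + 2 : ℕ) * Real.log n * S.incrementBound n / ε)}

/-- The event of a deviation at time `n` for the kernel centred at some point of the grid of mesh
`1 / n ^ 2` or for the total mass. -/
def gridDeviationEvent (R n : ℕ) : Set Ω :=
  (⋃ x ∈ grid d R (n ^ 2), S.deviationEvent X g q ε (fun k y => kb S.K (S.b (k + 1)) (x - y)) n) ∪
    S.deviationEvent X g q ε (fun _ _ => 1) n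

variable {S X g q ε} {m0 : MeasurableSpace Ω} {μ : Measure Ω} {F : Filtration ℕ m0}

namespace Regular

theorem truncAvg_eq (hS : S.Regular) (n : ℕ) (ω : Ω) :
    (S.path X g q ω).truncAvg κ n = decay S.γ n * sampleSum X (S.testField q κ) n ω :=
  hS.step.runningAvg_eq_sum _ n

theorem truncAvgDrift_eq (hS : S.Regular) (n : ℕ) (ω : Ω) :
    (S.path X g q ω).truncAvgDrift κ n = decay S.γ n * compensator q (S.testField q κ) n ω := by
  refine (hS.step.runningAvg_eq_sum _ n).trans (congrArg _ (Finset.sum_congr rfl fun k _ => ?_))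
  rw [← integral_const_mul]
  congr 1 with y
  simp only [testField, MidasPath.truncW, path]
  ring

theorem isAdaptedField_testField (hS : S.Regular) (hq : IsAdaptedField F q)
    (hκ : S.IsTestSequence κ) : IsAdaptedField F (S.testField q κ) := fun k =>
  ((@measurable_uncurry_truncWeight d S.η S.c (S.lam k) S.f Ω (F k) (q k) hS.f_cont.measurable
    (hq k)).mul ((hκ.measurable k).comp measurable_snd)).const_mul _

theorem testField_mem_Icc (hS : S.Regular) (hκ : S.IsTestSequence κ) {ω : Ω}
    (hq : ∀ k y, 0 ≤ q k ω y) {k n : ℕ} (hkn : k < n) (y : Euc d) :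
    S.testField q κ k ω y ∈ Set.Icc 0 (S.incrementBound n / decay S.γ n) := by
  have hk := hS.step.decay_pos (k + 1)
  have hn := hS.step.decay_pos n
  have hstep : S.γ (k + 1) / decay S.γ (k + 1) ≤ S.γ n / decay S.γ n := by
    rw [div_le_div_iff₀ hk hn]
    exact hS.step.step_mul_decay_le hkn
  have hweight := hS.truncWeight_le_weightBound (hq k) hkn.le y
  have hweight0 := truncWeight_nonneg (η := S.η) (c := S.c) (l := S.lam k) hS.f_nonneg (hq k) y
  have htest : κ k y ≤ max S.CK 1 * (S.b n ^ d)⁻¹ := (hκ.le k y).trans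
    (mul_le_mul_of_nonneg_left (hS.inv_b_pow_le d hkn) (le_max_of_le_right zero_le_one))
  have htest0 := hκ.nonneg k y
  have : 0 < S.γ (k + 1) := hS.step.pos (k + 1)
  have : 0 < S.γ n := hS.step.pos n
  have : 0 < S.weightBound n := hS.weightBound_pos n
  refine ⟨mul_nonneg (by positivity) (mul_nonneg hweight0 htest0), ?_⟩
  rw [incrementBound, mul_div_right_comm, testField]
  gcongr

theorem measure_deviationEvent_le [IsProbabilityMeasure μ] (hS : S.Regular)
    (hX : AdaptiveSampling μ F X q) (hκ : S.IsTestSequence κ) (hε : 0 < ε) (hε₁ : ε ≤ 1) {n : ℕ}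
    (hn : 1 ≤ n) :
    μ (S.deviationEvent X g q ε κ n) ≤ ENNReal.ofReal (2 * ((n : ℝ) ^ (2 * d + 2))⁻¹) := by
  have hdecay := hS.step.decay_pos n
  have hexp : Real.exp (-((2 * d + 2 : ℕ) * Real.log n)) = ((n : ℝ) ^ (2 * d + 2))⁻¹ := by
    rw [Real.exp_neg, ← Real.log_pow, Real.exp_log (by positivity)]
  rw [← hexp]
  refine le_of_eq_of_le (congrArg μ (Set.ext fun ω => not_congr ?_))
    (hX.measure_sampleSum_notMem_Icc_le (hS.isAdaptedField_testField hX.adapted_q hκ)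
      (div_pos (hS.incrementBound_pos n) hdecay) hε hε₁ n
      (hX.q_nonneg.mono fun ω hq k hk => hS.testField_mem_Icc hκ hq hk))
  have herror : (2 * d + 2 : ℕ) * Real.log n * S.incrementBound n / ε = decay S.γ n *
      ((2 * d + 2 : ℕ) * Real.log n * (S.incrementBound n / decay S.γ n) / ε) := by
    field_simp
  rw [hS.truncAvg_eq, hS.truncAvgDrift_eq, herror, mul_left_comm, mul_left_comm (1 + ε), ← mul_sub,
    ← mul_add, Set.mem_Icc, Set.mem_Icc, mul_le_mul_iff_right₀ hdecay,
    mul_le_mul_iff_right₀ hdecay]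

theorem measure_gridDeviationEvent_le [IsProbabilityMeasure μ] (hS : S.Regular)
    (hX : AdaptiveSampling μ F X q) (hε : 0 < ε) (hε₁ : ε ≤ 1) (R : ℕ) {n : ℕ} (hn : 1 ≤ n) :
    μ (S.gridDeviationEvent X g q ε R n)
      ≤ ENNReal.ofReal (4 * (2 * R + 1) ^ d * ((n : ℝ) ^ 2)⁻¹) := by
  have hn' : (1 : ℝ) ≤ n := Nat.one_le_cast.2 hn
  have hdev {κ : ℕ → Euc d → ℝ} (hκ : S.IsTestSequence κ) :=
    hS.measure_deviationEvent_le (g := g) hX hκ hε hε₁ hn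
  have hcard : ((grid d R (n ^ 2)).card : ℝ) + 1 ≤ 2 * ((2 * R + 1) ^ d * (n : ℝ) ^ (2 * d)) := by
    have hgrid := card_grid_sq_le d R hn
    have hone : (1 : ℝ) ≤ (2 * R + 1) ^ d * (n : ℝ) ^ (2 * d) := one_le_mul_of_one_le_of_one_le
      (one_le_pow₀ (le_add_of_nonneg_left (by positivity))) (one_le_pow₀ hn')
    linarith
  calc μ (S.gridDeviationEvent X g q ε R n)
      ≤ ∑ _x ∈ grid d R (n ^ 2), ENNReal.ofReal (2 * ((n : ℝ) ^ (2 * d + 2))⁻¹)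
          + ENNReal.ofReal (2 * ((n : ℝ) ^ (2 * d + 2))⁻¹) :=
        (measure_union_le _ _).trans (add_le_add ((measure_biUnion_finset_le _ _).trans
          (Finset.sum_le_sum fun x _ => hdev (hS.isTestSequence_kb x)))
          (hdev hS.isTestSequence_one))
    _ = ENNReal.ofReal (((grid d R (n ^ 2)).card + 1) * (2 * ((n : ℝ) ^ (2 * d + 2))⁻¹)) := by
        rw [Finset.sum_const, nsmul_eq_mul, ← add_one_mul,
          ENNReal.ofReal_mul (p := ((grid d R (n ^ 2)).card : ℝ) + 1) (by positivity),
          ENNReal.ofReal_add (by positivity) one_pos.le,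
          ENNReal.ofReal_natCast, ENNReal.ofReal_one]
    _ ≤ ENNReal.ofReal (2 * ((2 * R + 1) ^ d * (n : ℝ) ^ (2 * d)) *
          (2 * ((n : ℝ) ^ (2 * d + 2))⁻¹)) :=
        ENNReal.ofReal_le_ofReal (mul_le_mul_of_nonneg_right hcard (by positivity))
    _ = ENNReal.ofReal (4 * (2 * R + 1) ^ d * ((n : ℝ) ^ 2)⁻¹) := by
        congr 1
        rw [pow_add]
        field_simp
        norm_num

end Regular

end MidasParams

theorem MidasPath.IsRun.forall_truncEst_mem_Icc_of_notMem {d : ℕ} {S : MidasParams d} {Ω : Type*}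
    {X : ℕ → Ω → Euc d} {g q : ℕ → Ω → Euc d → ℝ} {ε : ℝ} (hε : 0 ≤ ε) (hε₁ : ε ≤ 1) {ω : Ω}
    (hD : (S.path X g q ω).IsRun) {R n : ℕ} (hn : 1 ≤ n)
    (hω : ω ∉ S.gridDeviationEvent X g q ε R n) :
    (∀ x, ‖x‖ ≤ R → (S.path X g q ω).truncEst n x ∈
      Set.Icc ((1 - ε) * (S.path X g q ω).driftAvg n x - S.noiseError ε n)
        ((1 + ε) * (S.path X g q ω).driftAvg n x + S.noiseError ε n)) ∧
    (S.path X g q ω).truncMass n ≤ 1 + ε + S.noiseError ε n := by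
  simp only [MidasParams.gridDeviationEvent, Set.mem_union, Set.mem_iUnion, not_or, not_exists]
    at hω
  obtain ⟨hgrid, hmass⟩ := hω
  constructor
  · intro x hx
    obtain ⟨y, hy, hxy⟩ := exists_mem_grid_norm_sub_le (pow_pos hn 2) hx
    exact hD.truncEst_mem_Icc_of_norm_sub_le hε hε₁ hxy (not_not.1 (hgrid y hy))
  · have hmass := (not_not.1 hmass).2
    rw [MidasPath.truncAvg_one] at hmass
    have hdrift := hD.truncAvgDrift_one_le n
    have hlip : 0 ≤ S.lipBound n * (d / (n ^ 2 : ℕ)) :=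
      mul_nonneg (hD.lipBound_nonneg n) (by positivity)
    rw [MidasParams.noiseError]
    nlinarith

theorem MidasPath.IsRun.noiseControlled_of_forall_nat {d : ℕ} {D : MidasPath d} (hD : D.IsRun)
    (hd : 1 ≤ d)
    (hlog : Tendsto (fun n : ℕ => D.γ n * Real.log n / (D.lam n * D.b n ^ d)) atTop (𝓝 0))
    (hinv : Tendsto (fun n : ℕ => (n : ℝ)⁻¹ / (D.lam n * D.b n ^ d)) atTop (𝓝 0))
    (h : ∀ m R : ℕ, ∀ᶠ n in atTop,
      (∀ x, ‖x‖ ≤ R → D.truncEst n x ∈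
        Set.Icc ((1 - 1 / ((m : ℝ) + 1)) * D.driftAvg n x - D.noiseError (1 / ((m : ℝ) + 1)) n)
          ((1 + 1 / ((m : ℝ) + 1)) * D.driftAvg n x + D.noiseError (1 / ((m : ℝ) + 1)) n)) ∧
      D.truncMass n ≤ 1 + 1 / ((m : ℝ) + 1) + D.noiseError (1 / ((m : ℝ) + 1)) n) :
    D.NoiseControlled := by
  intro ε hε _ R
  obtain ⟨m, hm⟩ := exists_nat_one_div_lt hε
  obtain ⟨R', hR'⟩ := exists_nat_ge R
  refine ⟨_, hD.tendsto_noiseError_div hd hlog hinv (1 / ((m : ℝ) + 1)), ?_⟩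
  filter_upwards [h m R'] with n hn
  refine ⟨fun x hx => ?_, by linarith [hn.2]⟩
  obtain ⟨hlower, hupper⟩ := hn.1 x (hx.trans hR')
  have hshrink := mul_le_mul_of_nonneg_right hm.le (hD.driftAvg_nonneg n x)
  constructor <;> linarith

theorem AdaptiveSampling.ae_noiseControlled {d : ℕ} {S : MidasParams d} {Ω : Type*}
    {m0 : MeasurableSpace Ω} {μ : Measure Ω} [IsProbabilityMeasure μ] {F : Filtration ℕ m0}
    {X : ℕ → Ω → Euc d} {g q : ℕ → Ω → Euc d → ℝ} (hX : AdaptiveSampling μ F X q)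
    (hS : S.Regular) (hD : ∀ᵐ ω ∂μ, (S.path X g q ω).IsRun) (hd : 1 ≤ d)
    (hlog : Tendsto (fun n : ℕ => S.γ n * Real.log n / (S.lam n * S.b n ^ d)) atTop (𝓝 0))
    (hinv : Tendsto (fun n : ℕ => (n : ℝ)⁻¹ / (S.lam n * S.b n ^ d)) atTop (𝓝 0)) :
    ∀ᵐ ω ∂μ, (S.path X g q ω).NoiseControlled := by
  have hpos (m : ℕ) : (0 : ℝ) < 1 / (m + 1) := Nat.one_div_pos_of_nat
  have hle (m : ℕ) : 1 / ((m : ℝ) + 1) ≤ 1 :=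
    div_le_one_of_le₀ (le_add_of_nonneg_left m.cast_nonneg) (by positivity)
  have hdev : ∀ᵐ ω ∂μ, ∀ m R : ℕ, ∀ᶠ n in atTop,
      ω ∉ S.gridDeviationEvent X g q (1 / ((m : ℝ) + 1)) R n := by
    simp_rw [ae_all_iff]
    exact fun m R => ae_eventually_notMem_of_measure_le_inv_sq fun n hn =>
      hS.measure_gridDeviationEvent_le hX (hpos m) (hle m) R hn
  filter_upwards [hdev, hD] with ω hω hD
  refine hD.noiseControlled_of_forall_nat hd hlog hinv fun m R => ?_
  filter_upwards [hω m R, eventually_ge_atTop 1] with n hn hn₁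
  exact hD.forall_truncEst_mem_Icc_of_notMem (hpos m).le (hle m) hn₁ hn

/-! ### Conditional densities -/

theorem norm_coe_le_nndist_zero {E : Type*} [TopologicalSpace E]
    (φ : BoundedContinuousFunction E ℝ≥0) (x : E) : ‖(φ x : ℝ)‖ ≤ nndist φ 0 := by
  rw [NNReal.norm_eq]
  exact_mod_cast BoundedContinuousFunction.NNReal.upper_bound φ x

theorem ofReal_integral_coe_mul {E : Type*} [TopologicalSpace E] [MeasurableSpace E]
    [OpensMeasurableSpace E] {ν : Measure E} {p : E → ℝ} (hp : ∀ y, 0 ≤ p y)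
    (hp_int : Integrable p ν) (φ : BoundedContinuousFunction E ℝ≥0) :
    ENNReal.ofReal (∫ y, (φ y : ℝ) * p y ∂ν) = ∫⁻ y, ENNReal.ofReal (p y) * φ y ∂ν := by
  have hφ : Continuous fun y => (φ y : ℝ) := NNReal.continuous_coe.comp φ.continuous
  rw [ofReal_integral_eq_lintegral_ofReal
    (hp_int.bdd_mul hφ.aestronglyMeasurable (Eventually.of_forall (norm_coe_le_nndist_zero φ)))
    (Eventually.of_forall fun y => mul_nonneg (φ y).coe_nonneg (hp y))]
  refine lintegral_congr fun y => ?_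
  rw [ENNReal.ofReal_mul (φ y).coe_nonneg, ENNReal.ofReal_coe_nnreal, mul_comm]

theorem nonneg_of_integral_thickenedIndicator_mul_nonneg {E : Type*} [PseudoMetricSpace E]
    [TopologicalSpace.SeparableSpace E] [Nonempty E] [MeasurableSpace E] [OpensMeasurableSpace E]
    {ν : Measure E} [ν.IsOpenPosMeasure] {u : E → ℝ} (hu : Continuous u) (hu_int : Integrable u ν)
    (h : ∀ i j : ℕ, 0 ≤ ∫ y, (thickenedIndicator (Nat.one_div_pos_of_nat (α := ℝ) (n := j))
      {TopologicalSpace.denseSeq E i} y : ℝ) * u y ∂ν) (x : E) :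
    0 ≤ u x := by
  by_contra! hx
  obtain ⟨δ, hδ, hneg⟩ := Metric.mem_nhds_iff.1 (hu.continuousAt.eventually_lt_const hx)
  obtain ⟨j, hj⟩ := exists_nat_one_div_lt (half_pos hδ)
  obtain ⟨i, hi⟩ := (TopologicalSpace.denseRange_denseSeq E).exists_dist_lt x
    (Nat.one_div_pos_of_nat (α := ℝ) (n := j))
  specialize h i j
  set z := TopologicalSpace.denseSeq E i
  set φ := thickenedIndicator (Nat.one_div_pos_of_nat (α := ℝ) (n := j)) {z}
  have hball : ball z (1 / ((j : ℝ) + 1)) ⊆ ball x δ :=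
    ball_subset_ball' (by rw [dist_comm]; linarith)
  have hφz : φ z = 1 := thickenedIndicator_one _ _ (Set.mem_singleton z)
  have hle (y : E) : (φ y : ℝ) * u y ≤ 0 := by
    by_cases hy : y ∈ ball z (1 / ((j : ℝ) + 1))
    · exact mul_nonpos_of_nonneg_of_nonpos (φ y).coe_nonneg (hneg (hball hy)).le
    · rw [← thickening_singleton] at hy
      rw [thickenedIndicator_zero _ _ hy, NNReal.coe_zero, zero_mul]
  have hφ : Continuous fun y => (φ y : ℝ) := NNReal.continuous_coe.comp φ.continuous
  have hlt : 0 < ∫ y, -((φ y : ℝ) * u y) ∂ν := by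
    refine integral_pos_of_integrable_nonneg_nonzero (x := z) (hφ.mul hu).neg
      (hu_int.bdd_mul (c := 1) hφ.aestronglyMeasurable (Eventually.of_forall fun y => ?_)).neg
      (fun y => neg_nonneg.2 (hle y)) ?_
    · rw [NNReal.norm_eq]
      exact NNReal.coe_le_one.2 (thickenedIndicator_le_one _ _ y)
    · have hz : u z < 0 := hneg (hball (mem_ball_self Nat.one_div_pos_of_nat))
      simpa [hφz] using hz.ne
  rw [integral_neg] at hlt
  linarith

section HasCondDensity
variable {Ω E : Type*} {m m0 : MeasurableSpace Ω} [TopologicalSpace E] [MeasureSpace E]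
  {μ : Measure Ω} {Y : Ω → E} {q : Ω → E → ℝ}

/-- The random function `q` is a density of the conditional law of `Y` given `m`, as tested against
bounded continuous functions. Nonnegativity of `q` is not part of the notion. -/
def HasCondDensity (μ : Measure Ω) (m : MeasurableSpace Ω) (Y : Ω → E) (q : Ω → E → ℝ) : Prop :=
  ∀ φ : E → ℝ, Continuous φ → (∃ C, ∀ x, |φ x| ≤ C) →
    μ[fun ω => φ (Y ω) | m] =ᵐ[μ] fun ω => ∫ y, φ y * q ω y

namespace HasCondDensity

theorem condExp_coe_ae_eq (h : HasCondDensity μ m Y q)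
    (φ : BoundedContinuousFunction E ℝ≥0) :
    μ[fun ω => (φ (Y ω) : ℝ) | m] =ᵐ[μ] fun ω => ∫ y, (φ y : ℝ) * q ω y :=
  h _ (NNReal.continuous_coe.comp φ.continuous) ⟨nndist φ 0, norm_coe_le_nndist_zero φ⟩

theorem integral_eq_one [IsProbabilityMeasure μ] (hm : m ≤ m0) (h : HasCondDensity μ m Y q) :
    ∀ᵐ ω ∂μ, ∫ y, q ω y = 1 := by
  have hone := h (fun _ => 1) continuous_const ⟨1, fun _ => abs_one.le⟩
  rw [condExp_const hm] at hone
  filter_upwards [hone] with ω hω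
  simpa only [one_mul] using hω.symm

end HasCondDensity

end HasCondDensity

namespace HasCondDensity
variable {Ω E : Type*} {m m0 : MeasurableSpace Ω} [MetricSpace E] [SecondCountableTopology E]
  [MeasureSpace E] {μ : Measure Ω} {Y : Ω → E} {q : Ω → E → ℝ}

theorem nonneg [Nonempty E] [OpensMeasurableSpace E] [(volume : Measure E).IsOpenPosMeasure]
    (h : HasCondDensity μ m Y q) (hq : ∀ ω, Continuous (q ω)) (hq_int : ∀ ω, Integrable (q ω)) :
    ∀ᵐ ω ∂μ, ∀ x, 0 ≤ q ω x := by
  have hφ (i j : ℕ) : ∀ᵐ ω ∂μ, 0 ≤ ∫ y,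
      (thickenedIndicator (Nat.one_div_pos_of_nat (α := ℝ) (n := j))
        {TopologicalSpace.denseSeq E i} y : ℝ) * q ω y := by
    filter_upwards [h.condExp_coe_ae_eq _, condExp_nonneg (μ := μ) (m := m)
      (Eventually.of_forall fun ω => NNReal.coe_nonneg _)] with ω hω hnonneg
    rw [← hω]
    exact hnonneg
  filter_upwards [ae_all_iff.2 fun i => ae_all_iff.2 (hφ i)] with ω hω
  exact nonneg_of_integral_thickenedIndicator_mul_nonneg (hq ω) (hq_int ω) hω

theorem setLIntegral_coe_eq [IsFiniteMeasure μ] [Nonempty E] [BorelSpace E]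
    [(volume : Measure E).IsOpenPosMeasure] (h : HasCondDensity μ m Y q) (hm : m ≤ m0)
    (hY : Measurable Y) (hq : ∀ ω, Continuous (q ω)) (hq_int : ∀ ω, Integrable (q ω)) {A : Set Ω}
    (hA : MeasurableSet[m] A) (φ : BoundedContinuousFunction E ℝ≥0) :
    ∫⁻ ω in A, φ (Y ω) ∂μ = ∫⁻ ω in A, (∫⁻ y, ENNReal.ofReal (q ω y) * φ y) ∂μ := by
  have hq_nonneg := h.nonneg hq hq_int
  have hcond := h.condExp_coe_ae_eq φ
  have hφY : Integrable (fun ω => (φ (Y ω) : ℝ)) μ :=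
    .of_bound (NNReal.continuous_coe.measurable.comp
      (φ.continuous.measurable.comp hY)).aestronglyMeasurable (nndist φ 0)
      (Eventually.of_forall fun ω => norm_coe_le_nndist_zero φ _)
  calc ∫⁻ ω in A, φ (Y ω) ∂μ = ENNReal.ofReal (∫ ω in A, (φ (Y ω) : ℝ) ∂μ) := by
        rw [ofReal_integral_eq_lintegral_ofReal hφY.restrict
          (Eventually.of_forall fun ω => (φ (Y ω)).coe_nonneg)]
        simp only [ENNReal.ofReal_coe_nnreal]
    _ = ENNReal.ofReal (∫ ω in A, (∫ y, (φ y : ℝ) * q ω y) ∂μ) := by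
        rw [← setIntegral_condExp hm hφY hA,
          setIntegral_congr_ae (hm A hA) (hcond.mono fun ω hω _ => hω)]
    _ = ∫⁻ ω in A, ENNReal.ofReal (∫ y, (φ y : ℝ) * q ω y) ∂μ :=
        ofReal_integral_eq_lintegral_ofReal (integrable_condExp.congr hcond).restrict
          (ae_restrict_of_ae (hq_nonneg.mono fun ω hω => integral_nonneg fun y =>
            mul_nonneg (φ y).coe_nonneg (hω y)))
    _ = ∫⁻ ω in A, (∫⁻ y, ENNReal.ofReal (q ω y) * φ y) ∂μ :=
        lintegral_congr_ae (ae_restrict_of_ae (hq_nonneg.mono fun ω hω =>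
          ofReal_integral_coe_mul hω (hq_int ω) φ))

theorem measurable_uncurry [BorelSpace E] (hq : ∀ ω, Continuous (q ω))
    (hq_meas : ∀ x, Measurable[m] fun ω => q ω x) :
    Measurable[m.prod inferInstance] (Function.uncurry q) :=
  (measurable_uncurry_of_continuous_of_measurable (u := fun x ω => q ω x) hq hq_meas).comp
    measurable_swap

theorem lintegral_eq [IsFiniteMeasure μ] [Nonempty E] [BorelSpace E]
    [(volume : Measure E).IsOpenPosMeasure] [SFinite (volume : Measure E)]
    (h : HasCondDensity μ m Y q) (hm : m ≤ m0) (hY : Measurable Y) (hq : ∀ ω, Continuous (q ω))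
    (hq_int : ∀ ω, Integrable (q ω)) (hq_meas : ∀ x, Measurable[m] fun ω => q ω x)
    {G : Ω × E → ℝ≥0∞} (hG : Measurable[m.prod inferInstance] G) :
    ∫⁻ ω, G (ω, Y ω) ∂μ = ∫⁻ ω, (∫⁻ y, ENNReal.ofReal (q ω y) * G (ω, y)) ∂μ :=
  @lintegral_prodMk_eq Ω Ω E m0 m _ _ _ _ μ _ volume _ id Y
    (fun p => ENNReal.ofReal (q p.1 p.2)) (fun s hs => hm s hs) hY
    (ENNReal.measurable_ofReal.comp (measurable_uncurry hq hq_meas))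
    (fun _ hA φ => h.setLIntegral_coe_eq hm hY hq hq_int hA φ) G hG

end HasCondDensity

/-! ### Rates -/

section rates
variable {γ P Q : ℕ → ℝ} {C : ℝ}

theorem tendsto_mul_log_div_of_inv_le (hγ : ∀ n, 0 < γ n)
    (hinv : ∀ n : ℕ, 1 ≤ n → (n : ℝ)⁻¹ ≤ C * γ n) (hQ : ∀ n, 0 < Q n)
    (hQP : ∀ᶠ n in atTop, Q n ≤ P n)
    (h : Tendsto (fun n : ℕ => n * γ n ^ 2 * Real.log n / Q n) atTop (𝓝 0)) :
    Tendsto (fun n : ℕ => γ n * Real.log n / P n) atTop (𝓝 0) := by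
  have hC := h.const_mul C
  rw [mul_zero] at hC
  refine squeeze_zero' (hQP.mono fun n hn => div_nonneg
    (mul_nonneg (hγ n).le (Real.log_natCast_nonneg n)) ((hQ n).le.trans hn)) ?_ hC
  filter_upwards [hQP, eventually_ge_atTop 1] with n hn hn₁
  have hlog := mul_nonneg (hγ n).le (Real.log_natCast_nonneg n)
  have hone := (inv_le_iff_one_le_mul₀ (Nat.cast_pos.2 hn₁)).1 (hinv n hn₁)
  calc γ n * Real.log n / P n ≤ γ n * Real.log n / Q n := by
        gcongr
        exact hQ n
    _ ≤ C * γ n * n * (γ n * Real.log n) / Q n :=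
        div_le_div_of_nonneg_right (le_mul_of_one_le_left hlog hone) (hQ n).le
    _ = C * (n * γ n ^ 2 * Real.log n / Q n) := by ring

theorem tendsto_div_of_tendsto_mul_log_div (hγ : ∀ n, 0 < γ n) (hP : ∀ n, 0 < P n)
    (h : Tendsto (fun n : ℕ => γ n * Real.log n / P n) atTop (𝓝 0)) :
    Tendsto (fun n => γ n / P n) atTop (𝓝 0) := by
  refine squeeze_zero' (Eventually.of_forall fun n => (div_pos (hγ n) (hP n)).le) ?_ h
  filter_upwards [(Real.tendsto_log_atTop.comp tendsto_natCast_atTop_atTop).eventually_ge_atTop 1]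
    with n hn
  exact div_le_div_of_nonneg_right (le_mul_of_one_le_right (hγ n).le hn) (hP n).le

theorem tendsto_shift_mul_log_div (hγ : ∀ n, 0 < γ n) (hP : ∀ n, 0 < P n) (N : ℕ)
    (h : Tendsto (fun n : ℕ => γ n * Real.log n / P n) atTop (𝓝 0)) :
    Tendsto (fun n : ℕ => γ (N + n) * Real.log n / P (N + n)) atTop (𝓝 0) := by
  refine squeeze_zero' (Eventually.of_forall fun n => div_nonneg
    (mul_nonneg (hγ _).le (Real.log_natCast_nonneg n)) (hP _).le) ?_
    (h.comp (tendsto_add_atTop_nat N))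
  filter_upwards [eventually_ge_atTop 1] with n hn
  have := hγ (N + n)
  have := hP (N + n)
  have : (0 : ℝ) < n := Nat.cast_pos.2 hn
  rw [Function.comp_apply, Nat.add_comm n N]
  gcongr
  lia

theorem tendsto_inv_div_shift (hP : ∀ n, 0 < P n) (N : ℕ)
    (hinv : ∀ n : ℕ, 1 ≤ n → (n : ℝ)⁻¹ ≤ C * γ n)
    (h : Tendsto (fun n => γ n / P n) atTop (𝓝 0)) :
    Tendsto (fun n : ℕ => (n : ℝ)⁻¹ / P (N + n)) atTop (𝓝 0) := by
  have hshift := (h.comp (tendsto_add_atTop_nat N)).const_mul ((N + 1) * C)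
  rw [mul_zero] at hshift
  refine squeeze_zero' (Eventually.of_forall fun n =>
    div_nonneg (inv_nonneg.2 n.cast_nonneg) (hP _).le) ?_ hshift
  filter_upwards [eventually_ge_atTop 1] with n hn
  have hn' : (1 : ℝ) ≤ n := Nat.one_le_cast.2 hn
  have hle : (n : ℝ)⁻¹ ≤ (N + 1) * C * γ (N + n) :=
    calc (n : ℝ)⁻¹ ≤ (N + 1) * ((N + n : ℕ) : ℝ)⁻¹ := by
          push_cast
          rw [← div_eq_mul_inv, le_div_iff₀ (by positivity), inv_mul_le_iff₀ (by positivity)]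
          nlinarith [N.cast_nonneg (α := ℝ)]
      _ ≤ (N + 1) * (C * γ (N + n)) := by
          gcongr
          exact hinv _ (by lia)
      _ = (N + 1) * C * γ (N + n) := (mul_assoc _ _ _).symm
  rw [Function.comp_apply, Nat.add_comm n N, ← mul_div_assoc]
  exact div_le_div_of_nonneg_right hle (hP _).le

end rates

namespace MidasParams
variable {d : ℕ} {S : MidasParams d}

/-- The data of the algorithm restarted at time `N`. -/
def shift (S : MidasParams d) (N : ℕ) : MidasParams d :=
  { S with γ := fun n => S.γ (N + n), b := fun n => S.b (N + n), lam := fun n => S.lam (N + n) }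

/-- Valid data with step sizes that decrease slowly enough. Both rate conditions of the algorithm
(`η ≥ 1 / 2` and `η < 1 / 2`) give `rate_log`. -/
structure Admissible (S : MidasParams d) : Prop extends S.Valid where
  γ_pos : ∀ n, 0 < S.γ n
  γ_anti : Antitone S.γ
  γ_lim : Tendsto S.γ atTop (𝓝 0)
  γ_sub_le : ∀ᶠ n in atTop, S.γ n - S.γ (n + 1) ≤ S.γ n * S.γ (n + 1)
  inv_le : ∃ C, ∀ n : ℕ, 1 ≤ n → (n : ℝ)⁻¹ ≤ C * S.γ n
  rate_log : Tendsto (fun n : ℕ => S.γ n * Real.log n / (S.lam n * S.b n ^ d)) atTop (𝓝 0)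

theorem Valid.shift (hS : S.Valid) (N : ℕ) : (S.shift N).Valid :=
  have hN : Monotone (N + ·) := fun _ _ h => Nat.add_le_add_left h N
  have hN_lim : Tendsto (N + ·) atTop atTop :=
    tendsto_atTop_mono (fun n => n.le_add_left N) tendsto_id
  { hS with
    b_pos := fun _ => hS.b_pos _
    b_anti := hS.b_anti.comp_monotone hN
    b_lim := hS.b_lim.comp hN_lim
    lam_pos := fun _ => hS.lam_pos _
    lam_anti := hS.lam_anti.comp_monotone hN
    lam_lim := hS.lam_lim.comp hN_lim }

theorem Valid.lam_mul_b_pow_pos (hS : S.Valid) (n : ℕ) : 0 < S.lam n * S.b n ^ d :=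
  mul_pos (hS.lam_pos n) (pow_pos (hS.b_pos n) d)

theorem Valid.tendsto_mul_log_div (hS : S.Valid) (hγ : ∀ n, 0 < S.γ n) {C : ℝ}
    (hinv : ∀ n : ℕ, 1 ≤ n → (n : ℝ)⁻¹ ≤ C * S.γ n)
    (hrate : 1 / 2 ≤ S.η → Tendsto
      (fun n : ℕ => n * S.γ n ^ 2 * Real.log n / (S.lam n * S.b n ^ d)) atTop (𝓝 0))
    (hrate' : S.η < 1 / 2 → Tendsto (fun n : ℕ => n * S.γ n ^ 2 * Real.log n
      / (S.lam n ^ (2 * (1 - S.η)) * S.b n ^ (2 * (d : ℝ) * (1 - S.η)))) atTop (𝓝 0)) :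
    Tendsto (fun n : ℕ => S.γ n * Real.log n / (S.lam n * S.b n ^ d)) atTop (𝓝 0) := by
  rcases le_or_gt (1 / 2) S.η with hη | hη
  · exact tendsto_mul_log_div_of_inv_le hγ hinv hS.lam_mul_b_pow_pos
      (Eventually.of_forall fun _ => le_rfl) (hrate hη)
  · refine tendsto_mul_log_div_of_inv_le hγ hinv (fun n => mul_pos
      (Real.rpow_pos_of_pos (hS.lam_pos n) _) (Real.rpow_pos_of_pos (hS.b_pos n) _)) ?_ (hrate' hη)
    filter_upwards [hS.b_lim.eventually_le_const zero_lt_one,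
      hS.lam_lim.eventually_le_const zero_lt_one] with n hb hlam
    have : (0 : ℝ) ≤ d := d.cast_nonneg
    rw [← Real.rpow_natCast (S.b n)]
    exact mul_le_mul
      (Real.rpow_le_self_of_le_one (hS.lam_pos n).le hlam (by linarith))
      (Real.rpow_le_rpow_of_exponent_ge (hS.b_pos n) hb (by nlinarith))
      (Real.rpow_nonneg (hS.b_pos n).le _) (hS.lam_pos n).le

namespace Admissible

theorem tendsto_div (hS : S.Admissible) :
    Tendsto (fun n => S.γ n / (S.lam n * S.b n ^ d)) atTop (𝓝 0) :=
  tendsto_div_of_tendsto_mul_log_div hS.γ_pos hS.lam_mul_b_pow_pos hS.rate_log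

theorem exists_regular_shift (hS : S.Admissible) : ∃ N, 1 ≤ N ∧ (S.shift N).Regular := by
  obtain ⟨N₀, hN₀⟩ := eventually_atTop.1 hS.γ_sub_le
  have hhalf : (0 : ℝ) < 1 / 2 := one_half_pos
  obtain ⟨N, hN₁, hN, hγ, hb, hlam⟩ := ((eventually_ge_atTop 1).and ((eventually_ge_atTop N₀).and
    ((hS.γ_lim.eventually_le_const hhalf).and ((hS.b_lim.eventually_le_const zero_lt_one).and
      (hS.lam_lim.eventually_le_const hhalf))))).exists
  have hN_lim : Tendsto (N + ·) atTop atTop :=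
    tendsto_atTop_mono (fun n => n.le_add_left N) tendsto_id
  refine ⟨N, hN₁, { hS.toValid.shift N with
    step := ⟨fun _ => hS.γ_pos _, fun n => (hS.γ_anti (N.le_add_right n)).trans hγ,
      fun _ _ h => hS.γ_anti (Nat.add_le_add_left h N), hS.γ_lim.comp hN_lim, fun n => ?_⟩
    b_le_one := fun n => (hS.b_anti (N.le_add_right n)).trans hb
    lam_le := fun n => (hS.lam_anti (N.le_add_right n)).trans hlam
    rate := hS.tendsto_div.comp hN_lim }⟩
  have := hN₀ (N + n) (hN.trans (N.le_add_right n))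
  change S.γ (N + n) * (1 - S.γ (N + n + 1)) ≤ S.γ (N + n + 1)
  linarith

theorem tendsto_shift_inv_div (hS : S.Admissible) (N : ℕ) :
    Tendsto (fun n : ℕ => (n : ℝ)⁻¹ / (S.lam (N + n) * S.b (N + n) ^ d)) atTop (𝓝 0) :=
  let ⟨_, hinv⟩ := hS.inv_le
  tendsto_inv_div_shift hS.lam_mul_b_pow_pos N hinv hS.tendsto_div

end Admissible

end MidasParams

/-! ### The algorithm -/

/-- The natural filtration of `X 1, X 2, …`, restarted at time `N`. -/
def natFiltration {Ω : Type*} {m0 : MeasurableSpace Ω} {d : ℕ} {X : ℕ → Ω → Euc d}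
    (hX : ∀ n, Measurable (X n)) (N : ℕ) : Filtration ℕ m0 where
  seq n := natFilt X (N + n)
  mono' _ _ hmn := biSup_mono fun _ hi => Finset.Icc_subset_Icc_right (Nat.add_le_add_left hmn N) hi
  le' _ := iSup₂_le fun i _ => (hX i).comap_le

theorem measurable_natFilt {Ω : Type*} {d : ℕ} (X : ℕ → Ω → Euc d) {n : ℕ} (hn : 1 ≤ n) :
    Measurable[natFilt X n] (X n) :=
  measurable_iff_comap_le.2 (le_iSup₂_of_le n (Finset.mem_Icc.2 ⟨hn, le_rfl⟩) le_rfl)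

/-- The random sequences `X`, `g`, `q` are produced by the algorithm with data `S`. Since
`g 0 = 0`, the first policy `q 0` is not given by the mixture formula and is left free. -/
structure IsMidas {Ω : Type*} {m0 : MeasurableSpace Ω} {d : ℕ} (S : MidasParams d) (μ : Measure Ω)
    (X : ℕ → Ω → Euc d) (g q : ℕ → Ω → Euc d → ℝ) : Prop where
  measurable_X : ∀ n, Measurable (X n)
  g_zero : ∀ ω x, g 0 ω x = 0
  g_succ : ∀ n ω x, g (n + 1) ω x = (1 - S.γ (n + 1)) * g n ω x
    + S.γ (n + 1) * (S.f (X (n + 1) ω) / q n ω (X (n + 1) ω)) ^ S.η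
      * kb S.K (S.b (n + 1)) (x - X (n + 1) ω)
  q_succ : ∀ n ω x, q (n + 1) ω x
    = (1 - S.lam (n + 1)) * (g (n + 1) ω x / ∫ y, g (n + 1) ω y) + S.lam (n + 1) * S.q0 x
  condDensity : ∀ n, HasCondDensity μ (natFilt X n) (X (n + 1)) (q n)
  adapted_q : ∀ n x, Measurable[natFilt X n] fun ω => q n ω x

namespace IsMidas
variable {Ω : Type*} {m0 : MeasurableSpace Ω} {μ : Measure Ω} {d : ℕ} {S : MidasParams d}
  {X : ℕ → Ω → Euc d} {g q : ℕ → Ω → Euc d → ℝ}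

theorem isTame_g (h : IsMidas S μ X g q) (hS : S.Valid) (n : ℕ) (ω : Ω) : IsTame (g n ω) := by
  induction n with
  | zero =>
    rw [show g 0 ω = _ from funext (h.g_zero ω)]
    exact .zero
  | succ n ih =>
    rw [show g (n + 1) ω = _ from funext (h.g_succ n ω)]
    exact (ih.const_mul _).add ((hS.kernel.isTame_kb_sub (hS.b_pos _) _).const_mul _)

theorem q_eq (h : IsMidas S μ X g q) {n : ℕ} (hn : 1 ≤ n) (ω : Ω) (x : Euc d) :
    q n ω x = (1 - S.lam n) * (g n ω x / ∫ y, g n ω y) + S.lam n * S.q0 x := by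
  obtain ⟨n, rfl⟩ := Nat.exists_eq_add_of_le' hn
  exact h.q_succ n ω x

theorem continuous_q (h : IsMidas S μ X g q) (hS : S.Valid) {n : ℕ} (hn : 1 ≤ n) (ω : Ω) :
    Continuous (q n ω) := by
  rw [show q n ω = _ from funext (h.q_eq hn ω)]
  exact (((h.isTame_g hS n ω).continuous.div_const _).const_mul _).add (hS.q0_cont.const_mul _)

theorem integrable_q (h : IsMidas S μ X g q) (hS : S.Valid) {n : ℕ} (hn : 1 ≤ n) (ω : Ω) :
    Integrable (q n ω) := by
  rw [show q n ω = _ from funext (h.q_eq hn ω)]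
  exact (((h.isTame_g hS n ω).integrable.div_const _).const_mul _).add (hS.q0_int.const_mul _)

variable [IsProbabilityMeasure μ]

theorem adaptiveSampling (h : IsMidas S μ X g q) (hS : S.Valid) {N : ℕ} (hN : 1 ≤ N) :
    AdaptiveSampling μ (natFiltration h.measurable_X N) (fun n => X (N + n)) fun n => q (N + n) :=
  have hle (n : ℕ) : 1 ≤ N + n := hN.trans (N.le_add_right n)
  have hq_cont (n : ℕ) := h.continuous_q hS (hle n)
  have hq_int (n : ℕ) := h.integrable_q hS (hle n)
  { measurable_X := fun n => measurable_natFilt X (hle (n + 1))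
    adapted_q := fun n => HasCondDensity.measurable_uncurry (hq_cont n) (h.adapted_q _)
    q_nonneg := ae_all_iff.2 fun n => (h.condDensity (N + n)).nonneg (hq_cont n) (hq_int n)
    q_integral := ae_all_iff.2 fun n =>
      (h.condDensity (N + n)).integral_eq_one ((natFiltration h.measurable_X N).le n)
    lintegral_eq := fun n _ hG => (h.condDensity (N + n)).lintegral_eq
      ((natFiltration h.measurable_X N).le n) (h.measurable_X _) (hq_cont n) (hq_int n)
      (h.adapted_q _) hG }

theorem ae_isRun (h : IsMidas S μ X g q) {N : ℕ} (hN : 1 ≤ N) (hS : (S.shift N).Regular)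
    (hS' : S.Valid) : ∀ᵐ ω ∂μ, ((S.shift N).path (fun n => X (N + n)) (fun n => g (N + n))
      (fun n => q (N + n)) ω).IsRun := by
  have hX := h.adaptiveSampling hS' hN
  filter_upwards [hX.q_nonneg, hX.q_integral] with ω hq_nonneg hq_integral
  exact
    { hS with
      g_zero := h.isTame_g hS' _ ω
      g_succ := fun n => h.g_succ (N + n) ω
      q_eq := fun n => h.q_eq (hN.trans (N.le_add_right n)) ω
      q_nonneg := hq_nonneg
      q_integral := hq_integral }

theorem ae_upperConsistent (h : IsMidas S μ X g q) (hS : S.Admissible) (hd : 1 ≤ d) :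
    ∀ᵐ ω ∂μ, (S.path X g q ω).UpperConsistent := by
  obtain ⟨N, hN, hreg⟩ := hS.exists_regular_shift
  have hrun := h.ae_isRun hN hreg hS.toValid
  have hnoise := (h.adaptiveSampling hS.toValid hN).ae_noiseControlled hreg hrun hd
    (tendsto_shift_mul_log_div hS.γ_pos hS.lam_mul_b_pow_pos N hS.rate_log)
    (hS.tendsto_shift_inv_div N)
  filter_upwards [hrun, hnoise] with ω hω hω_noise A hA ε hε
  have hshift := MidasPath.Regular.upperConsistent ⟨hω, hω_noise⟩ A hA ε hε
  rw [← map_add_atTop_eq_nat N, eventually_map]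
  simp only [Nat.add_comm _ N]
  exact hshift

end IsMidas

theorem limsup_nonpos_of_forall_eventually_le {u : ℕ → ℝ}
    (h : ∀ ε > 0, ∀ᶠ n in atTop, u n ≤ ε) : limsup u atTop ≤ 0 := by
  rw [limsup_eq]
  by_cases hbdd : BddBelow {a | ∀ᶠ n in atTop, u n ≤ a}
  · exact le_of_forall_pos_le_add fun ε hε => by simpa only [zero_add] using csInf_le hbdd (h ε hε)
  · -- The real infimum of a set without lower bound is `0` by convention.
    rw [Real.sInf_of_not_bddBelow hbdd]

theorem MidasPath.UpperConsistent.limsup_iSup_sub_le {d : ℕ} {D : MidasPath d}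
    (hD : D.UpperConsistent) {A : Set (Euc d)} (hA : IsCompact A) :
    limsup (fun n => ⨆ x ∈ A, (D.g n x - D.f x)) atTop ≤ 0 :=
  -- Points outside `A` contribute an empty supremum, that is `0 ≤ ε`.
  limsup_nonpos_of_forall_eventually_le fun ε hε => (hD A hA ε hε).mono fun _ hn =>
    Real.iSup_le (fun x => Real.iSup_le (fun hx => sub_le_iff_le_add'.2 (hn x hx)) hε.le) hε.le

theorem midas_g_limsup_upper_bound_general
    {Ω : Type*} [MeasurableSpace Ω] (μ : Measure Ω) [IsProbabilityMeasure μ]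
    {d : ℕ} (hd : 1 ≤ d) {η : ℝ} (hη : 0 < η) (hη1 : η < 1)
    (f q0 K : Euc d → ℝ)
    (γ b lam : ℕ → ℝ)
    (X : ℕ → Ω → Euc d)
    (w : ℕ → Ω → ℝ)
    (g q : ℕ → Ω → Euc d → ℝ)
    (hf0 : ∀ x, 0 ≤ f x) (hfint1 : (∫ x, f x) = 1)
    (hK0 : ∀ x, 0 ≤ K x) (hKint1 : (∫ x, K x) = 1)
    (hγpos : ∀ n, 0 < γ n) (hbpos : ∀ n, 0 < b n) (hlampos : ∀ n, 0 < lam n)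
    (hX : ∀ n, Measurable (X n))
    (hg0 : ∀ (ω : Ω) x, g 0 ω x = 0)
    (hw : ∀ n (ω : Ω), w (n + 1) ω = f (X (n + 1) ω) / q n ω (X (n + 1) ω))
    (hgrec : ∀ n (ω : Ω) x, g (n + 1) ω x
      = (1 - γ (n + 1)) * g n ω x
        + γ (n + 1) * w (n + 1) ω ^ η * kb K (b (n + 1)) (x - X (n + 1) ω))
    (hqrec : ∀ n (ω : Ω) x, q (n + 1) ω x
      = (1 - lam (n + 1)) * (g (n + 1) ω x / (∫ y, g (n + 1) ω y)) + lam (n + 1) * q0 x)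
    (hpolicy : ∀ n (φ : Euc d → ℝ), Continuous φ →
      (∃ C, ∀ x, |φ x| ≤ C) →
      (μ[fun ω => φ (X (n + 1) ω) | natFilt X n]) =ᵐ[μ] (fun ω => ∫ y, φ y * q n ω y))
    (hadapt : ∀ n x, Measurable[natFilt X n] fun ω => q n ω x)
    (hfbdd : ∃ C, ∀ x, f x ≤ C) (hfcont : Continuous f)
    (hfInt : Integrable f)
    (hq00 : ∀ x, 0 ≤ q0 x) (hq0bdd : ∃ C, ∀ x, q0 x ≤ C) (hq0cont : Continuous q0)
    (hq0Int : Integrable q0) (hq0int1 : (∫ x, q0 x) = 1)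
    (hfq0 : ∃ c > (0 : ℝ), ∀ x, c * f x ≤ q0 x)
    (hKlip : ∃ L : ℝ≥0, LipschitzWith L K)
    (hKpos : 0 < K 0)
    (hKtail : ∃ rK > (0 : ℝ), ∃ CK > (0 : ℝ), ∀ x,
      (1 + ‖x‖ ^ ((d : ℝ) + rK)) * K x ≤ CK)
    (hγanti : Antitone γ) (hγ0 : Tendsto γ atTop (𝓝 0))
    (hbanti : Antitone b) (hb0 : Tendsto b atTop (𝓝 0))
    (hlamanti : Antitone lam) (hlam0 : Tendsto lam atTop (𝓝 0))
    (hγrate : ∃ Cγ > (0 : ℝ), ∃ nγ : ℕ, 1 ≤ nγ ∧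
      (∀ n : ℕ, 1 ≤ n → (n : ℝ)⁻¹ ≤ Cγ * γ n) ∧
      (∀ n : ℕ, nγ ≤ n → γ n - γ (n + 1) ≤ γ n * γ (n + 1)))
    (hrate1 : 1 / 2 ≤ η → Tendsto
      (fun n : ℕ => (n : ℝ) * γ n ^ 2 * Real.log n / (lam n * b n ^ d))
      atTop (𝓝 0))
    (hrate2 : η < 1 / 2 → Tendsto
      (fun n : ℕ => (n : ℝ) * γ n ^ 2 * Real.log n
        / (lam n ^ (2 * (1 - η)) * b n ^ (2 * (d : ℝ) * (1 - η))))
      atTop (𝓝 0)) :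
    ∀ᵐ ω ∂μ, ∀ A : Set (Euc d), IsCompact A →
      limsup (fun n : ℕ => ⨆ x ∈ A, (g n ω x - f x)) atTop ≤ 0 := by
  obtain ⟨Cf, hCf⟩ := hfbdd
  obtain ⟨Cq, hCq⟩ := hq0bdd
  obtain ⟨c, hc, hcf⟩ := hfq0
  obtain ⟨L, hL⟩ := hKlip
  obtain ⟨rK, hrK, CK, -, hCK⟩ := hKtail
  obtain ⟨Cγ, -, nγ, -, hγinv, hγsub⟩ := hγrate
  let S : MidasParams d :=
    ⟨η, f, q0, K, γ, b, lam, c, max Cf 1, max Cq 1, rK, CK, L⟩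
  have hvalid : S.Valid :=
    ⟨⟨hK0, hKint1, hL, hKpos, hrK, hCK⟩, hη, hη1, hf0, fun x => le_max_of_le_left (hCf x),
      lt_max_of_lt_right one_pos, hfcont, hfInt, hfint1, hq00, fun x => le_max_of_le_left (hCq x),
      lt_max_of_lt_right one_pos, hq0cont, hq0Int, hq0int1, hc, hcf, hbpos, hbanti, hb0, hlampos,
      hlamanti, hlam0⟩
  have hS : S.Admissible :=
    ⟨hvalid, hγpos, hγanti, hγ0, eventually_atTop.2 ⟨nγ, hγsub⟩, ⟨Cγ, hγinv⟩,
      hvalid.tendsto_mul_log_div hγpos hγinv hrate1 hrate2⟩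
  have hmidas : IsMidas S μ X g q :=
    ⟨hX, hg0, fun n ω x => by rw [hgrec, hw], hqrec, hpolicy, hadapt⟩
  filter_upwards [hmidas.ae_upperConsistent hS hd] with ω hω A hA
  exact hω.limsup_iSup_sub_le hA

theorem midas_g_limsup_upper_bound
    {Ω : Type*} [MeasurableSpace Ω] (μ : Measure Ω) [IsProbabilityMeasure μ]
    {d : ℕ} (hd : 1 ≤ d) {η : ℝ} (hη : 0 < η) (hη1 : η < 1)
    (f q0 K : EuclideanSpace ℝ (Fin d) → ℝ)
    (γ b lam : ℕ → ℝ)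
    (X : ℕ → Ω → EuclideanSpace ℝ (Fin d))
    (w : ℕ → Ω → ℝ)
    (g q : ℕ → Ω → EuclideanSpace ℝ (Fin d) → ℝ)
    (hf0 : ∀ x, 0 ≤ f x) (hfint1 : (∫ x, f x) = 1)
    (hK0 : ∀ x, 0 ≤ K x) (hKint1 : (∫ x, K x) = 1)
    (hγpos : ∀ n, 0 < γ n) (hbpos : ∀ n, 0 < b n) (hlampos : ∀ n, 0 < lam n)
    (hX : ∀ n, Measurable (X n))
    (hqmeas : ∀ n, Measurable (Function.uncurry (q n)))
    (hg0 : ∀ (ω : Ω) x, g 0 ω x = 0)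
    (hw : ∀ n (ω : Ω), w (n+1) ω = f (X (n+1) ω) / q n ω (X (n+1) ω))
    (hgrec : ∀ n (ω : Ω) x, g (n+1) ω x
      = (1 - γ (n+1)) * g n ω x
        + γ (n+1) * w (n+1) ω ^ η * kb K (b (n+1)) (x - X (n+1) ω))
    (hqrec : ∀ n (ω : Ω) x, q (n+1) ω x
      = (1 - lam (n+1)) * (g (n+1) ω x / (∫ y, g (n+1) ω y)) + lam (n+1) * q0 x)
    (hpolicy : ∀ n (φ : EuclideanSpace ℝ (Fin d) → ℝ), Continuous φ →
      (∃ C, ∀ x, |φ x| ≤ C) →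
      (μ[fun ω => φ (X (n+1) ω) | natFilt X n]) =ᵐ[μ] (fun ω => ∫ y, φ y * q n ω y))
    (hadapt : ∀ n x, Measurable[natFilt X n] fun ω => q n ω x)
    (hfbdd : ∃ C, ∀ x, f x ≤ C) (hfcont : Continuous f)
    (hfInt : Integrable f)
    (hq00 : ∀ x, 0 ≤ q0 x) (hq0bdd : ∃ C, ∀ x, q0 x ≤ C) (hq0cont : Continuous q0)
    (hq0Int : Integrable q0) (hq0int1 : (∫ x, q0 x) = 1)
    (hftail : ∃ r > (0:ℝ), ∃ Cf > (0:ℝ), ∀ t : ℝ, 0 < t →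
      (∫ x in {x : EuclideanSpace ℝ (Fin d) | t < ‖x‖}, f x) ≤ Cf * t ^ (-r))
    (hfq0 : ∃ c > (0:ℝ), ∀ x, c * f x ≤ q0 x)
    (hKbdd : ∃ C, ∀ x, K x ≤ C) (hKlip : ∃ L : NNReal, LipschitzWith L K)
    (hKpos : 0 < K 0)
    (hKtail : ∃ rK > (0:ℝ), ∃ CK > (0:ℝ), ∀ x,
      (1 + ‖x‖ ^ ((d : ℝ) + rK)) * K x ≤ CK)
    (hγanti : Antitone γ) (hγ0 : Tendsto γ atTop (nhds 0))
    (hbanti : Antitone b) (hb0 : Tendsto b atTop (nhds 0))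
    (hlamanti : Antitone lam) (hlam0 : Tendsto lam atTop (nhds 0))
    (hγrate : ∃ Cγ > (0:ℝ), ∃ nγ : ℕ, 1 ≤ nγ ∧
      (∀ n : ℕ, 1 ≤ n → ((n : ℝ))⁻¹ ≤ Cγ * γ n) ∧
      (∀ n : ℕ, nγ ≤ n → γ n - γ (n+1) ≤ γ n * γ (n+1)))
    (hγsq : Summable fun n => γ n ^ 2)
    (hrate1 : 1/2 ≤ η → Tendsto
      (fun n : ℕ => (n : ℝ) * γ n ^ 2 * Real.log n / (lam n * b n ^ d))
      atTop (nhds 0))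
    (hrate2 : η < 1/2 → Tendsto
      (fun n : ℕ => (n : ℝ) * γ n ^ 2 * Real.log n
        / (lam n ^ (2 * (1 - η)) * b n ^ (2 * (d : ℝ) * (1 - η))))
      atTop (nhds 0))
    :
    ∀ A : Set (EuclideanSpace ℝ (Fin d)), IsCompact A →
      ∀ᵐ ω ∂μ, Filter.limsup (fun n : ℕ => ⨆ x ∈ A, (g n ω x - f x)) atTop ≤ 0 := by
  intro A hA
  filter_upwards [midas_g_limsup_upper_bound_general μ hd hη hη1 f q0 K γ b lam X w g q hf0 hfint1
    hK0 hKint1 hγpos hbpos hlampos hX hg0 hw hgrec hqrec hpolicy hadapt hfbdd hfcont hfInt hq00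
    hq0bdd hq0cont hq0Int hq0int1 hfq0 hKlip hKpos hKtail hγanti hγ0 hbanti hb0 hlamanti hlam0
    hγrate hrate1 hrate2] with ω hω using hω A hA
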